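/- arXiv:1602.08937 — 8 statements merged into one kernel-verified Lean document; each statement's English description precedes it below -/
import Mathlib

section
/- For any complex number q with 0 < |q| < 1, every multiple zero ζ of the partial theta function θ(q,·) (i.e. every ζ ∈ ℂ with θ(q,ζ) = 0 and ∂θ/∂x(q,ζ) = 0) satisfies |ζ| ≤ 8^11 = 8589934592. -/
open Finset Filter Topology

namespace PTheta

noncomputable def qp (q : ℂ) (n : ℕ) : ℂ := ∏ m ∈ range n, (1 - q ^ (m + 1))

noncomputable def gb (q : ℂ) : ℕ → ℕ → ℂ
  | _, 0 => 1
  | 0, _ + 1 => 0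
  | N + 1, i + 1 => gb q N i + q ^ (i + 1) * gb q N (i + 1)

lemma gb_zero (q : ℂ) (N : ℕ) : gb q N 0 = 1 := by cases N <;> rfl

lemma gb_succ (q : ℂ) (N i : ℕ) :
    gb q (N + 1) (i + 1) = gb q N i + q ^ (i + 1) * gb q N (i + 1) := rfl

lemma gb_eq_zero (q : ℂ) : ∀ (N i : ℕ), N < i → gb q N i = 0 := by
  intro N
  induction N with
  | zero => intro i hi; obtain ⟨i, rfl⟩ : ∃ j, i = j + 1 := ⟨i - 1, by omega⟩; rfl
  | succ N ih =>
    intro i hi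
    obtain ⟨i, rfl⟩ : ∃ j, i = j + 1 := ⟨i - 1, by omega⟩
    rw [gb_succ, ih i (by omega), ih (i + 1) (by omega)]; simp

lemma qp_succ (q : ℂ) (n : ℕ) : qp q (n + 1) = qp q n * (1 - q ^ (n + 1)) := by
  simp [qp, prod_range_succ]

lemma gb_mul (q : ℂ) : ∀ (N i k : ℕ), i + k = N → gb q N i * (qp q i * qp q k) = qp q N := by
  intro N
  induction N with
  | zero =>
    intro i k h
    obtain ⟨rfl, rfl⟩ : i = 0 ∧ k = 0 := by omega
    simp [gb_zero, qp]
  | succ N ih =>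
    intro i k h
    rcases i with _ | i
    · obtain rfl : k = N + 1 := by omega
      simp [gb_zero, qp]
    · rcases k with _ | k
      · obtain rfl : i = N := by omega
        have := ih i 0 (by omega)
        rw [gb_succ, gb_eq_zero q i (i + 1) (by omega), qp_succ]
        linear_combination (1 - q ^ (i + 1)) * this
      · have h1 := ih i (k + 1) (by omega)
        have h2 := ih (i + 1) k (by omega)
        rw [qp_succ q k] at h1
        rw [qp_succ q i] at h2
        rw [gb_succ, qp_succ q i, qp_succ q k, qp_succ q N]
        obtain rfl : N = i + k + 1 := by omega
        have : q ^ (i + k + 1 + 1) = q ^ (i + 1) * q ^ (k + 1) := by ring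
        rw [this]
        linear_combination (1 - q ^ (i + 1)) * h1 + (q ^ (i + 1)) * (1 - q ^ (k + 1)) * h2

lemma choose_two_succ (i : ℕ) : (i + 1).choose 2 = i + i.choose 2 := by
  rw [Nat.choose_succ_succ' i 1]; simp

lemma prod_eq_sum (q : ℂ) : ∀ (N : ℕ) (y : ℂ), ∏ m ∈ range N, (1 + y * q ^ m) =
    ∑ i ∈ range (N + 1), gb q N i * q ^ (i.choose 2) * y ^ i := by
  intro N
  induction N with
  | zero => intro y; simp [gb_zero]
  | succ N ih =>
    intro y
    rw [prod_range_succ']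
    have e : ∏ k ∈ range N, (1 + y * q ^ (k + 1)) = ∏ k ∈ range N, (1 + (y * q) * q ^ k) := by
      apply prod_congr rfl; intros; ring
    rw [e, ih]
    rw [sum_range_succ' _ (N + 1)]
    simp only [gb_succ, gb_zero, choose_two_succ]
    have h1 : ∑ i ∈ range (N + 1), gb q N i * q ^ i.choose 2 * (y * q) ^ i =
      (∑ i ∈ range (N + 1), q ^ (i + 1) * gb q N (i + 1) * q ^ (i + i.choose 2) * y ^ (i + 1)) + 1 := by
      have := sum_range_succ' (fun i => gb q N i * q ^ i.choose 2 * (y * q) ^ i) (N + 1)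
      rw [sum_range_succ, gb_eq_zero q N (N + 1) (by omega)] at this
      simp only [zero_mul, add_zero] at this
      rw [this]
      congr 1
      · apply sum_congr rfl
        intro i _
        rw [choose_two_succ, mul_pow]; ring
      · simp [gb_zero]
    have h2 : y * ∑ i ∈ range (N + 1), gb q N i * q ^ i.choose 2 * (y * q) ^ i =
      ∑ i ∈ range (N + 1), gb q N i * q ^ (i + i.choose 2) * y ^ (i + 1) := by
      rw [mul_sum]
      apply sum_congr rfl
      intro i _
      rw [mul_pow]; ring
    have h3 : (∑ i ∈ range (N + 1), gb q N i * q ^ i.choose 2 * (y * q) ^ i) * (1 + y * q ^ 0) =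
      (∑ i ∈ range (N + 1), gb q N i * q ^ i.choose 2 * (y * q) ^ i) +
      y * ∑ i ∈ range (N + 1), gb q N i * q ^ i.choose 2 * (y * q) ^ i := by ring
    rw [h3, h2, h1, add_right_comm, ← sum_add_distrib]
    congr 1
    · apply sum_congr rfl
      intro i _
      ring
    · simp

lemma choose_two_add (n j : ℕ) : (n + j).choose 2 = n.choose 2 + n * j + j.choose 2 := by
  induction j with
  | zero => simp
  | succ j ih => rw [← add_assoc, choose_two_succ, ih, choose_two_succ]; ring

lemma two_choose (n : ℕ) : n + n.choose 2 + n.choose 2 = n * n := by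
  induction n with
  | zero => rfl
  | succ n ih => rw [choose_two_succ]; nlinarith

/-- weights -/
noncomputable def w (q : ℂ) (n j : ℕ) : ℂ := qp q n * gb q (2 * n) (n + j)

lemma gb_symm (q : ℂ) (hqp : ∀ n, qp q n ≠ 0) (N i k : ℕ) (h : i + k = N) :
    gb q N i = gb q N k := by
  have h1 := gb_mul q N i k h
  have h2 := gb_mul q N k i (by omega)
  have : gb q N i * (qp q i * qp q k) = gb q N k * (qp q i * qp q k) := by
    rw [h1, ← h2]; ring
  exact mul_right_cancel₀ (mul_ne_zero (hqp _) (hqp _)) this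

/-- weighted finite Jacobi triple product, coefficient side -/
lemma weighted_split (q x : ℂ) (hq : q ≠ 0) (hx : x ≠ 0) (hqp : ∀ n, qp q n ≠ 0) (h : ℤ → ℂ) (n : ℕ) :
    qp q n * q ^ (n.choose 2) * (x ^ n)⁻¹ *
      ∑ i ∈ range (2 * n + 1), h ((i : ℤ) - n) * (gb q (2 * n) i * q ^ (i.choose 2) * (x * q * (q ^ n)⁻¹) ^ i)
    = (∑ j ∈ range (n + 1), w q n j * (h j * (q ^ ((j + 1).choose 2) * x ^ j)))
      + ∑ j ∈ range n, w q n (j + 1) * (h (-((j : ℤ) + 1)) * (q ^ ((j + 1).choose 2) * (x⁻¹) ^ (j + 1))) := by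
  have e : 2 * n + 1 = n + (n + 1) := by ring
  rw [show range (2 * n + 1) = range (n + (n + 1)) by rw [e], sum_range_add, add_comm, mul_add]
  rw [← sum_range_reflect _ n, mul_sum, mul_sum]
  congr 1
  · apply sum_congr rfl
    intro j _
    have h0 : (((n + j : ℕ) : ℤ) - n) = j := by push_cast; ring
    rw [h0, w, mul_pow, mul_pow, choose_two_add, choose_two_succ]
    have h1 := two_choose n
    have h2 : q ^ (n * n) = q ^ n * q ^ n.choose 2 * q ^ n.choose 2 := by
      rw [← h1]; ring
    have h3 : ((q ^ n)⁻¹) ^ (n + j) = (q ^ (n * n))⁻¹ * (q ^ (n * j))⁻¹ := by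
      rw [inv_pow, ← mul_inv, ← pow_mul, ← pow_add]; ring_nf
    rw [h3, h2]
    have : q ^ n ≠ 0 := pow_ne_zero _ hq
    have : x ^ n ≠ 0 := pow_ne_zero _ hx
    have : q ^ (n * j) ≠ 0 := pow_ne_zero _ hq
    have : q ^ (n.choose 2) ≠ 0 := pow_ne_zero _ hq
    rw [pow_add q, pow_add q, pow_add q, pow_add q, pow_add x]
    field_simp
  · apply sum_congr rfl
    intro j hj
    rw [mem_range] at hj
    obtain ⟨i, rfl⟩ : ∃ i, n = i + j + 1 := ⟨n - 1 - j, by omega⟩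
    have h0 : i + j + 1 - 1 - j = i := by omega
    rw [h0]
    have h1 : ((i : ℤ) - ((i + j + 1 : ℕ) : ℤ)) = -((j : ℤ) + 1) := by push_cast; ring
    rw [h1, w, gb_symm q hqp (2 * (i + j + 1)) (i + j + 1 + (j + 1)) i (by omega)]
    have h2 : (i + j + 1).choose 2 + i.choose 2 + i = (i + j + 1) * i + (j + 1).choose 2 := by
      rw [add_assoc i j 1, choose_two_add]
      have := two_choose i
      nlinarith
    have h3 : q ^ (i + j + 1).choose 2 * q ^ i.choose 2 * q ^ i = q ^ ((i + j + 1) * i) * q ^ ((j + 1).choose 2) := by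
      rw [← pow_add, ← pow_add, ← pow_add, h2]
    have h4 : ((q ^ (i + j + 1))⁻¹) ^ i = (q ^ ((i + j + 1) * i))⁻¹ := by
      rw [inv_pow, ← pow_mul]
    rw [mul_pow, mul_pow, h4]
    have h5 : (x ^ (i + j + 1))⁻¹ * x ^ i = x⁻¹ ^ (j + 1) := by
      rw [add_assoc, pow_add, inv_pow]
      have : x ^ i ≠ 0 := pow_ne_zero _ hx
      have : x ^ (j + 1) ≠ 0 := pow_ne_zero _ hx
      field_simp
    have h6 : q ^ ((i + j + 1) * i) ≠ 0 := pow_ne_zero _ hq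
    have h7 : q ^ ((j + 1).choose 2) = q ^ (i + j + 1).choose 2 * q ^ i.choose 2 * q ^ i * (q ^ ((i + j + 1) * i))⁻¹ := by
      rw [h3]; field_simp
    rw [h7, ← h5]
    ring

/-- product side -/
noncomputable def Tn (q x : ℂ) (n : ℕ) : ℂ :=
  qp q n * (∏ m ∈ range n, (1 + x * q ^ (m + 1))) * ∏ m ∈ range n, (1 + q ^ m * x⁻¹)

noncomputable def Sn (q x : ℂ) (n : ℕ) : ℂ :=
  (∑ m ∈ range n, (x * q ^ (m + 1)) / (1 + x * q ^ (m + 1)))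
    - ∑ m ∈ range n, (q ^ m * x⁻¹) / (1 + q ^ m * x⁻¹)

lemma shift_lo (q x : ℂ) (hq : q ≠ 0) (n m : ℕ) (hm : m < n) :
    x * q * (q ^ n)⁻¹ * q ^ (n - 1 - m) = x * (q ^ m)⁻¹ := by
  obtain ⟨i, rfl⟩ : ∃ i, n = i + m + 1 := ⟨n - 1 - m, by omega⟩
  have h0 : i + m + 1 - 1 - m = i := by omega
  rw [h0, pow_add, pow_add]
  have : q ^ i ≠ 0 := pow_ne_zero _ hq
  have : q ^ m ≠ 0 := pow_ne_zero _ hq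
  field_simp

lemma shift_hi (q x : ℂ) (hq : q ≠ 0) (n m : ℕ) :
    x * q * (q ^ n)⁻¹ * q ^ (n + m) = x * q ^ (m + 1) := by
  rw [pow_add]
  have : q ^ n ≠ 0 := pow_ne_zero _ hq
  field_simp
  ring

lemma Tn_eq (q x : ℂ) (hq : q ≠ 0) (hx : x ≠ 0) (n : ℕ) :
    qp q n * q ^ (n.choose 2) * (x ^ n)⁻¹ * ∏ m ∈ range (2 * n), (1 + x * q * (q ^ n)⁻¹ * q ^ m)
      = Tn q x n := by
  rw [two_mul, prod_range_add, ← prod_range_reflect _ n, Tn]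
  have h1 : ∏ j ∈ range n, (1 + x * q * (q ^ n)⁻¹ * q ^ (n - 1 - j)) =
      ∏ j ∈ range n, ((x * (q ^ j)⁻¹) * (1 + q ^ j * x⁻¹)) := by
    apply prod_congr rfl
    intro j hj
    rw [shift_lo q x hq n j (mem_range.1 hj)]
    have : q ^ j ≠ 0 := pow_ne_zero _ hq
    field_simp
    ring
  have h3 : ∀ n : ℕ, ∏ j ∈ range n, (x * (q ^ j)⁻¹) = x ^ n * (q ^ (n.choose 2))⁻¹ := by
    intro n
    induction n with
    | zero => simp
    | succ n ih => rw [prod_range_succ, ih, choose_two_succ, pow_add, pow_add, mul_inv]; ring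
  rw [h1, prod_mul_distrib, h3]
  simp only [shift_hi q x hq]
  have : x ^ n ≠ 0 := pow_ne_zero _ hx
  have : q ^ (n.choose 2) ≠ 0 := pow_ne_zero _ hq
  field_simp

lemma deriv_sum (q y : ℂ) (N : ℕ) (hne : ∀ m < N, 1 + y * q ^ m ≠ 0) :
    ∑ i ∈ range (N + 1), (i : ℂ) * (gb q N i * q ^ (i.choose 2) * y ^ i) =
    (∏ m ∈ range N, (1 + y * q ^ m)) * ∑ m ∈ range N, (y * q ^ m) / (1 + y * q ^ m) := by
  have h1 : HasDerivAt (fun y : ℂ => ∑ i ∈ range (N + 1), gb q N i * q ^ (i.choose 2) * y ^ i)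
      (∑ i ∈ range (N + 1), gb q N i * q ^ (i.choose 2) * (i * y ^ (i - 1))) y := by
    apply HasDerivAt.fun_sum
    intro i _
    exact (hasDerivAt_pow i y).const_mul _
  have h2 : HasDerivAt (fun y : ℂ => ∏ m ∈ range N, (1 + y * q ^ m))
      (∑ i ∈ range N, (∏ j ∈ (range N).erase i, (1 + y * q ^ j)) • (q ^ i)) y := by
    apply HasDerivAt.fun_finsetProd
    intro i _
    simpa using ((hasDerivAt_id y).mul_const (q ^ i)).const_add 1
  have h3 := h1.unique ((funext (prod_eq_sum q N)) ▸ h2)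
  have h4 : ∑ i ∈ range (N + 1), (i : ℂ) * (gb q N i * q ^ (i.choose 2) * y ^ i) =
      y * ∑ i ∈ range (N + 1), gb q N i * q ^ (i.choose 2) * (i * y ^ (i - 1)) := by
    rw [mul_sum]
    apply sum_congr rfl
    intro i _
    rcases i with _ | i
    · simp
    · simp [pow_succ]; ring
  rw [h4, h3, mul_sum, mul_sum]
  apply sum_congr rfl
  intro i hi
  rw [← mul_prod_erase _ _ hi]
  have := hne i (mem_range.1 hi)
  rw [smul_eq_mul]
  field_simp

lemma finite_T (q x : ℂ) (hq : q ≠ 0) (hx : x ≠ 0) (hqp : ∀ n, qp q n ≠ 0) (n : ℕ) :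
    Tn q x n = (∑ j ∈ range (n + 1), w q n j * (q ^ ((j + 1).choose 2) * x ^ j))
      + ∑ j ∈ range n, w q n (j + 1) * (q ^ ((j + 1).choose 2) * (x⁻¹) ^ (j + 1)) := by
  rw [← Tn_eq q x hq hx, prod_eq_sum]
  have := weighted_split q x hq hx hqp (fun _ => 1) n
  simpa only [one_mul] using this

lemma finite_E (q x : ℂ) (hq : q ≠ 0) (hx : x ≠ 0) (hqp : ∀ n, qp q n ≠ 0) (n : ℕ)
    (h1 : ∀ m < n, 1 + x * q ^ (m + 1) ≠ 0) (h2 : ∀ m < n, 1 + q ^ m * x⁻¹ ≠ 0) :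
    Tn q x n * Sn q x n = (∑ j ∈ range (n + 1), w q n j * ((j : ℂ) * (q ^ ((j + 1).choose 2) * x ^ j)))
      + ∑ j ∈ range n, w q n (j + 1) * (-((j : ℂ) + 1) * (q ^ ((j + 1).choose 2) * (x⁻¹) ^ (j + 1))) := by
  have h := weighted_split q x hq hx hqp (fun i => (i : ℂ)) n
  push_cast at h
  rw [← h]
  have hlo : ∀ m < n, 1 + x * (q ^ m)⁻¹ = x * (q ^ m)⁻¹ * (1 + q ^ m * x⁻¹) := by
    intro m _
    have : q ^ m ≠ 0 := pow_ne_zero _ hq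
    field_simp
    ring
  have hne : ∀ m < 2 * n, 1 + x * q * (q ^ n)⁻¹ * q ^ m ≠ 0 := by
    intro m hm
    by_cases hmn : m < n
    · have := shift_lo q x hq n (n - 1 - m) (by omega)
      rw [show n - 1 - (n - 1 - m) = m by omega] at this
      rw [this, hlo _ (by omega)]
      exact mul_ne_zero (mul_ne_zero hx (inv_ne_zero (pow_ne_zero _ hq))) (h2 _ (by omega))
    · obtain ⟨i, rfl⟩ := Nat.exists_eq_add_of_le (not_lt.1 hmn)
      rw [shift_hi q x hq]
      exact h1 _ (by omega)
  have hd := deriv_sum q (x * q * (q ^ n)⁻¹) (2 * n) hne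
  simp only [sub_mul, sum_sub_distrib]
  rw [hd, ← mul_sum, ← prod_eq_sum, ← Tn_eq q x hq hx]
  have hs : Sn q x n = (∑ m ∈ range (2 * n), (x * q * (q ^ n)⁻¹ * q ^ m) / (1 + x * q * (q ^ n)⁻¹ * q ^ m)) - n := by
    rw [two_mul, sum_range_add, ← sum_range_reflect _ n, Sn]
    simp only [shift_hi q x hq]
    have : ∑ j ∈ range n, x * q * (q ^ n)⁻¹ * q ^ (n - 1 - j) / (1 + x * q * (q ^ n)⁻¹ * q ^ (n - 1 - j))
      = ∑ j ∈ range n, (1 - (q ^ j * x⁻¹) / (1 + q ^ j * x⁻¹)) := by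
      apply sum_congr rfl
      intro j hj
      rw [mem_range] at hj
      rw [shift_lo q x hq n j hj, hlo j hj]
      have := h2 j hj
      have h8 : x * (q ^ j)⁻¹ ≠ 0 := mul_ne_zero hx (inv_ne_zero (pow_ne_zero _ hq))
      rw [div_mul_cancel_left₀ h8, eq_sub_iff_add_eq, ← one_div, ← add_div, div_self this]
    rw [this, sum_sub_distrib]
    simp
    ring
  rw [hs]
  ring

end PTheta

namespace PTheta

noncomputable def phi (s : ℝ) (n : ℕ) : ℝ := ∏ m ∈ range n, (1 - s ^ (m + 1))

lemma geom_fin_le (t : ℝ) (h0 : 0 ≤ t) (h1 : t < 1) (n : ℕ) :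
    ∑ j ∈ range n, t ^ (j + 1) ≤ t / (1 - t) := by
  have h : HasSum (fun j : ℕ => t ^ (j + 1)) (t / (1 - t)) := by
    have := (hasSum_geometric_of_lt_one h0 h1).mul_left t
    simpa [pow_succ', div_eq_mul_inv] using this
  exact sum_le_hasSum _ (fun _ _ => by positivity) h

lemma pow_frac_le (s : ℝ) (h0 : 0 ≤ s) (h1 : s < 1) (l : ℕ) :
    s ^ (l + 1) / (1 - s ^ (l + 1)) ≤ (1 / ((l : ℝ) + 1)) * (s / (1 - s)) := by
  have hp : s ^ (l + 1) < 1 := pow_lt_one₀ h0 h1 (by omega)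
  have hg : (1 - s) * ∑ i ∈ range (l + 1), s ^ i = 1 - s ^ (l + 1) := by
    rw [mul_comm]
    exact geom_sum_mul_neg s (l + 1)
  have hs : ((l : ℝ) + 1) * s ^ l ≤ ∑ i ∈ range (l + 1), s ^ i := by
    have : ∑ i ∈ range (l + 1), s ^ l ≤ ∑ i ∈ range (l + 1), s ^ i := by
      apply sum_le_sum
      intro i hi
      exact pow_le_pow_of_le_one h0 h1.le (by rw [mem_range] at hi; omega)
    simpa using this
  have h1s : 0 < 1 - s := by linarith
  rw [div_mul_div_comm, one_mul, div_le_div_iff₀ (by linarith) (by positivity)]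
  rw [← hg]
  calc s ^ (l + 1) * (((l : ℝ) + 1) * (1 - s)) = s * (1 - s) * (((l : ℝ) + 1) * s ^ l) := by ring
    _ ≤ s * (1 - s) * ∑ i ∈ range (l + 1), s ^ i := by gcongr
    _ = _ := by ring

lemma phi_pos (s : ℝ) (h0 : 0 ≤ s) (h1 : s < 1) (n : ℕ) : 0 < phi s n := by
  apply prod_pos
  intro m _
  have : s ^ (m + 1) < 1 := pow_lt_one₀ h0 h1 (by omega)
  linarith

lemma phi_lower (s : ℝ) (h0 : 0 ≤ s) (h1 : s < 1) (n : ℕ) :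
    Real.exp (-(2 * (s / (1 - s)))) ≤ phi s n := by
  rw [← Real.le_log_iff_exp_le (phi_pos s h0 h1 n)]
  have hl : Real.log (phi s n) = - ∑ m ∈ range n, - Real.log (1 - s ^ (m + 1)) := by
    rw [phi, Real.log_prod, sum_neg_distrib, neg_neg]
    intro m _
    have : s ^ (m + 1) < 1 := pow_lt_one₀ h0 h1 (by omega)
    linarith
  rw [hl, neg_le_neg_iff]
  have hs : HasSum (fun l : ℕ => ∑ m ∈ range n, (s ^ (m + 1)) ^ (l + 1) / ((l : ℝ) + 1))
      (∑ m ∈ range n, - Real.log (1 - s ^ (m + 1))) := by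
    apply hasSum_sum
    intro m _
    apply Real.hasSum_pow_div_log_of_abs_lt_one
    rw [abs_of_nonneg (by positivity)]
    exact pow_lt_one₀ h0 h1 (by omega)
  have hz : HasSum (fun l : ℕ => (1 : ℝ) / ((l + 1 : ℕ) : ℝ) ^ 2) (Real.pi ^ 2 / 6) := by
    have := (hasSum_nat_add_iff' 1).2 hasSum_zeta_two
    simpa using this
  have hz2 := hz.mul_right (s / (1 - s))
  have hle : ∀ l : ℕ, ∑ m ∈ range n, (s ^ (m + 1)) ^ (l + 1) / ((l : ℝ) + 1) ≤
      (1 : ℝ) / ((l + 1 : ℕ) : ℝ) ^ 2 * (s / (1 - s)) := by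
    intro l
    rw [← sum_div]
    have hp : s ^ (l + 1) < 1 := pow_lt_one₀ h0 h1 (by omega)
    have e : ∑ m ∈ range n, (s ^ (m + 1)) ^ (l + 1) = ∑ m ∈ range n, (s ^ (l + 1)) ^ (m + 1) := by
      apply sum_congr rfl; intros; rw [← pow_mul, ← pow_mul, mul_comm]
    rw [e]
    have h3 := (geom_fin_le _ (by positivity) hp n).trans (pow_frac_le s h0 h1 l)
    calc _ ≤ ((1 / ((l : ℝ) + 1)) * (s / (1 - s))) / ((l : ℝ) + 1) := by gcongr
      _ = _ := by push_cast; field_simp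
  have hfin := hasSum_le hle hs hz2
  refine hfin.trans ?_
  have : 0 ≤ s / (1 - s) := div_nonneg h0 (by linarith)
  have hpi : Real.pi ^ 2 / 6 ≤ 2 := by nlinarith [Real.pi_lt_d2, Real.pi_pos]
  gcongr

lemma norm_qp_lower (q : ℂ) (hq1 : ‖q‖ < 1) (n : ℕ) : phi ‖q‖ n ≤ ‖qp q n‖ := by
  rw [phi, qp, norm_prod]
  apply Finset.prod_le_prod
  · intro m _
    have : ‖q‖ ^ (m + 1) < 1 := pow_lt_one₀ (norm_nonneg _) hq1 (by omega)
    linarith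
  · intro m _
    have := norm_sub_norm_le (1 : ℂ) (q ^ (m + 1))
    simpa using this

lemma qp_ne (q : ℂ) (hq1 : ‖q‖ < 1) (n : ℕ) : qp q n ≠ 0 := by
  rw [← norm_pos_iff]
  exact (phi_pos _ (norm_nonneg _) hq1 n).trans_le (norm_qp_lower q hq1 n)

lemma norm_qp_upper (q : ℂ) (hq1 : ‖q‖ < 1) (n : ℕ) :
    ‖qp q n‖ ≤ Real.exp (‖q‖ / (1 - ‖q‖)) := by
  rw [qp, norm_prod]
  have : ∏ m ∈ range n, ‖1 - q ^ (m + 1)‖ ≤ ∏ m ∈ range n, Real.exp (‖q‖ ^ (m + 1)) := by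
    apply Finset.prod_le_prod
    · intros; positivity
    · intro m _
      have h := norm_sub_le (1 : ℂ) (q ^ (m + 1))
      have h2 := Real.add_one_le_exp (‖q‖ ^ (m + 1))
      simp at h
      linarith
  refine this.trans ?_
  rw [← Real.exp_sum]
  exact Real.exp_le_exp.2 (geom_fin_le _ (norm_nonneg _) hq1 n)

lemma qp_tendsto (q : ℂ) (hq1 : ‖q‖ < 1) : ∃ l : ℂ, l ≠ 0 ∧ Tendsto (qp q) atTop (𝓝 l) := by
  have hc : CauchySeq (qp q) := by
    apply SeminormedAddCommGroup.cauchySeq_of_le_geometric (C := Real.exp (‖q‖ / (1 - ‖q‖))) hq1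
    intro n
    rw [qp_succ, show qp q n - qp q n * (1 - q ^ (n + 1)) = qp q n * q ^ (n + 1) by ring, norm_mul, norm_pow]
    have h2 : ‖q‖ ^ (n + 1) ≤ ‖q‖ ^ n := pow_le_pow_of_le_one (norm_nonneg _) hq1.le (by omega)
    have := norm_qp_upper q hq1 n
    gcongr
  obtain ⟨l, hl⟩ := cauchySeq_tendsto_of_complete hc
  refine ⟨l, ?_, hl⟩
  rw [← norm_pos_iff]
  refine (Real.exp_pos (-(2 * (‖q‖ / (1 - ‖q‖))))).trans_le ?_
  apply ge_of_tendsto hl.norm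
  filter_upwards with n
  exact (phi_lower _ (norm_nonneg _) hq1 n).trans (norm_qp_lower q hq1 n)

lemma w_eq (q : ℂ) (hq1 : ‖q‖ < 1) (n j : ℕ) (hj : j ≤ n) :
    w q n j = qp q n * qp q (2 * n) / (qp q (n + j) * qp q (n - j)) := by
  have h := gb_mul q (2 * n) (n + j) (n - j) (by omega)
  rw [w, eq_div_iff (mul_ne_zero (qp_ne q hq1 _) (qp_ne q hq1 _)), ← h]
  ring

lemma w_zero (q : ℂ) (n j : ℕ) (hj : n < j) : w q n j = 0 := by
  rw [w, gb_eq_zero _ _ _ (by omega), mul_zero]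

lemma w_tendsto (q : ℂ) (hq1 : ‖q‖ < 1) (j : ℕ) : Tendsto (fun n => w q n j) atTop (𝓝 1) := by
  obtain ⟨l, hl, ht⟩ := qp_tendsto q hq1
  have t1 : Tendsto (fun n => qp q (2 * n)) atTop (𝓝 l) :=
    ht.comp (tendsto_atTop_mono (fun n => by omega : ∀ n, n ≤ 2 * n) tendsto_id)
  have t2 : Tendsto (fun n => qp q (n + j)) atTop (𝓝 l) := ht.comp (tendsto_add_atTop_nat j)
  have t3 : Tendsto (fun n => qp q (n - j)) atTop (𝓝 l) := ht.comp (tendsto_sub_atTop_nat j)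
  have t4 := (ht.mul t1).div (t2.mul t3) (mul_ne_zero hl hl)
  rw [div_self (mul_ne_zero hl hl)] at t4
  refine t4.congr' ?_
  filter_upwards [eventually_ge_atTop j] with n hn
  rw [w_eq q hq1 n j hn]; rfl

lemma w_bound (q : ℂ) (hq1 : ‖q‖ < 1) : ∃ B : ℝ, ∀ n j, ‖w q n j‖ ≤ B := by
  set U := Real.exp (‖q‖ / (1 - ‖q‖))
  set V := Real.exp (-(2 * (‖q‖ / (1 - ‖q‖))))
  have hV : 0 < V := Real.exp_pos _
  have hU : 0 < U := Real.exp_pos _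
  have hu : ∀ n, ‖qp q n‖ ≤ U := norm_qp_upper q hq1
  have hv : ∀ n, V ≤ ‖qp q n‖ := fun n =>
    (phi_lower _ (norm_nonneg _) hq1 n).trans (norm_qp_lower q hq1 n)
  refine ⟨U * U / (V * V), fun n j => ?_⟩
  by_cases hj : j ≤ n
  · rw [w_eq q hq1 n j hj, norm_div, norm_mul, norm_mul]
    have := hu n; have := hu (2 * n); have := hv (n + j); have := hv (n - j)
    gcongr
  · rw [w_zero q n j (by omega), norm_zero]; positivity

lemma tannery (q : ℂ) (hq1 : ‖q‖ < 1) (f : ℕ → ℂ) (hf : Summable (fun j => ‖f j‖)) :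
    Tendsto (fun n => ∑ j ∈ range (n + 1), w q n j * f j) atTop (𝓝 (∑' j, f j)) := by
  obtain ⟨B, hB⟩ := w_bound q hq1
  have h : Tendsto (fun n => ∑' j, w q n j * f j) atTop (𝓝 (∑' j, f j)) := by
    apply tendsto_tsum_of_dominated_convergence (bound := fun j => B * ‖f j‖) (hf.mul_left B)
    · intro j
      simpa using (w_tendsto q hq1 j).mul_const (f j)
    · filter_upwards with n j
      rw [norm_mul]
      have := hB n j
      gcongr
  refine h.congr fun n => ?_
  apply tsum_eq_sum
  intro j hj
  rw [mem_range] at hj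
  rw [w_zero q n j (by omega), zero_mul]

lemma tannery' (q : ℂ) (hq1 : ‖q‖ < 1) (f : ℕ → ℂ) (hf : Summable (fun j => ‖f j‖)) :
    Tendsto (fun n => ∑ j ∈ range n, w q n (j + 1) * f j) atTop (𝓝 (∑' j, f j)) := by
  obtain ⟨B, hB⟩ := w_bound q hq1
  have h : Tendsto (fun n => ∑' j, w q n (j + 1) * f j) atTop (𝓝 (∑' j, f j)) := by
    apply tendsto_tsum_of_dominated_convergence (bound := fun j => B * ‖f j‖) (hf.mul_left B)
    · intro j
      simpa using (w_tendsto q hq1 (j + 1)).mul_const (f j)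
    · filter_upwards with n j
      rw [norm_mul]
      have := hB n (j + 1)
      gcongr
  refine h.congr fun n => ?_
  apply tsum_eq_sum
  intro j hj
  rw [mem_range] at hj
  rw [w_zero q n (j + 1) (by omega), zero_mul]

lemma summable_theta (r : ℝ) (h0 : 0 < r) (h1 : r < 1) (t : ℝ) (ht : 0 < t) :
    Summable (fun j : ℕ => r ^ ((j + 1).choose 2) * t ^ j) := by
  apply summable_of_ratio_test_tendsto_lt_one (l := 0) (by norm_num)
  · filter_upwards with n
    positivity
  · have : Tendsto (fun n : ℕ => (r * t) * r ^ n) atTop (𝓝 ((r * t) * 0)) :=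
      (tendsto_pow_atTop_nhds_zero_of_lt_one h0.le h1).const_mul _
    rw [mul_zero] at this
    refine this.congr fun n => ?_
    rw [Real.norm_of_nonneg (by positivity), Real.norm_of_nonneg (by positivity),
      choose_two_succ (n + 1), pow_add]
    have : r ^ ((n + 1).choose 2) ≠ 0 := by positivity
    have : t ^ n ≠ 0 := by positivity
    field_simp
    ring

lemma summable_theta' (r : ℝ) (h0 : 0 < r) (h1 : r < 1) (t : ℝ) (ht : 0 < t) :
    Summable (fun j : ℕ => (j : ℝ) * (r ^ ((j + 1).choose 2) * t ^ j)) := by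
  refine Summable.of_nonneg_of_le (fun j => by positivity) (fun j => ?_)
    (summable_theta r h0 h1 (2 * t) (by positivity))
  have : (j : ℝ) ≤ 2 ^ j := by exact_mod_cast (Nat.lt_two_pow_self).le
  rw [mul_pow]
  calc (j : ℝ) * (r ^ ((j + 1).choose 2) * t ^ j) ≤ 2 ^ j * (r ^ ((j + 1).choose 2) * t ^ j) := by gcongr
    _ = _ := by ring

lemma theta_hasDerivAt (q : ℂ) (hq0 : 0 < ‖q‖) (hq1 : ‖q‖ < 1) (x : ℂ) :
    HasDerivAt (fun x : ℂ => ∑' j : ℕ, q ^ ((j + 1).choose 2) * x ^ j)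
      (∑' j : ℕ, q ^ ((j + 1).choose 2) * (j * x ^ (j - 1))) x := by
  set R := ‖x‖ + 1 with hR
  have hRp : 0 < R := by positivity
  have hx : x ∈ Metric.ball (0 : ℂ) R := by simp [hR]
  apply hasDerivAt_tsum_of_isPreconnected (t := Metric.ball (0 : ℂ) R)
    (u := fun j : ℕ => R⁻¹ * ((j : ℝ) * (‖q‖ ^ ((j + 1).choose 2) * R ^ j)))
    (g := fun (j : ℕ) (x : ℂ) => q ^ ((j + 1).choose 2) * x ^ j)
    (g' := fun (j : ℕ) (x : ℂ) => q ^ ((j + 1).choose 2) * (j * x ^ (j - 1))) (y₀ := x)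
  · exact (summable_theta' _ hq0 hq1 R hRp).mul_left _
  · exact Metric.isOpen_ball
  · exact (convex_ball _ _).isPreconnected
  · intro j y _
    exact (hasDerivAt_pow j y).const_mul _
  · intro j y hy
    rcases j with _ | j
    · simp
    · have : ‖y‖ ≤ R := by rw [mem_ball_zero_iff] at hy; exact hy.le
      simp only [norm_mul, norm_pow, Complex.norm_natCast, Nat.add_sub_cancel]
      calc ‖q‖ ^ (j + 1 + 1).choose 2 * (((j + 1 : ℕ) : ℝ) * ‖y‖ ^ j)
          ≤ ‖q‖ ^ (j + 1 + 1).choose 2 * (((j + 1 : ℕ) : ℝ) * R ^ j) := by gcongr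
        _ = _ := by rw [pow_succ R]; field_simp
  · exact hx
  · apply Summable.of_norm
    refine Summable.of_nonneg_of_le (fun j => norm_nonneg _) (fun j => ?_) (summable_theta _ hq0 hq1 R hRp)
    rw [norm_mul, norm_pow, norm_pow]
    have : ‖x‖ ≤ R := by simp [hR]
    gcongr
  · exact hx

/-- The two limits at a multiple zero. -/
lemma limits (q : ℂ) (hq0 : 0 < ‖q‖) (hq1 : ‖q‖ < 1) (x : ℂ) (hx : 1 < ‖x‖)
    (hzero : ∑' j : ℕ, q ^ ((j + 1).choose 2) * x ^ j = 0)
    (hderiv : ∑' j : ℕ, q ^ ((j + 1).choose 2) * (j * x ^ (j - 1)) = 0) :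
    Tendsto (fun n => ∑ j ∈ range (n + 1), w q n j * (q ^ ((j + 1).choose 2) * x ^ j)
      + ∑ j ∈ range n, w q n (j + 1) * (q ^ ((j + 1).choose 2) * (x⁻¹) ^ (j + 1))) atTop
      (𝓝 (∑' j : ℕ, (q ^ ((j + 1).choose 2) * (x⁻¹) ^ (j + 1)))) ∧
    Tendsto (fun n => (∑ j ∈ range (n + 1), w q n j * ((j : ℂ) * (q ^ ((j + 1).choose 2) * x ^ j)))
      + ∑ j ∈ range n, w q n (j + 1) * (-((j : ℂ) + 1) * (q ^ ((j + 1).choose 2) * (x⁻¹) ^ (j + 1)))) atTop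
      (𝓝 (∑' j : ℕ, (-((j : ℂ) + 1) * (q ^ ((j + 1).choose 2) * (x⁻¹) ^ (j + 1))))) := by
  have hxp : 0 < ‖x‖ := by linarith
  have hx0 : x ≠ 0 := norm_pos_iff.1 hxp
  have hs1 := summable_theta _ hq0 hq1 ‖x‖ hxp
  have hs2 := summable_theta' _ hq0 hq1 ‖x‖ hxp
  have hs3 := summable_theta _ hq0 hq1 ‖x⁻¹‖ (by simpa using hx0)
  have hs4 := summable_theta' _ hq0 hq1 ‖x⁻¹‖ (by simpa using hx0)
  have hE : ∑' j : ℕ, (j : ℂ) * (q ^ ((j + 1).choose 2) * x ^ j) = 0 := by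
    have : ∀ j : ℕ, (j : ℂ) * (q ^ ((j + 1).choose 2) * x ^ j) =
        x * (q ^ ((j + 1).choose 2) * (j * x ^ (j - 1))) := by
      intro j
      rcases j with _ | j
      · simp
      · simp [pow_succ]; ring
    simp only [this]
    rw [tsum_mul_left, hderiv, mul_zero]
  constructor
  · have t1 := tannery q hq1 (fun j : ℕ => q ^ ((j + 1).choose 2) * x ^ j) (by simpa using hs1)
    have t2 := tannery' q hq1 (fun j : ℕ => q ^ ((j + 1).choose 2) * (x⁻¹) ^ (j + 1))
      (by refine (hs3.mul_right ‖x⁻¹‖).congr fun j => ?_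
          simp only [norm_mul, norm_pow]; ring)
    rw [hzero] at t1
    simpa using t1.add t2
  · have t1 := tannery q hq1 (fun j : ℕ => (j : ℂ) * (q ^ ((j + 1).choose 2) * x ^ j)) (by simpa using hs2)
    have t2 := tannery' q hq1 (fun j : ℕ => -((j : ℂ) + 1) * (q ^ ((j + 1).choose 2) * (x⁻¹) ^ (j + 1)))
      (by refine ((hs4.add hs3).mul_right ‖x⁻¹‖).congr fun j => ?_
          have : ‖-((j : ℂ) + 1)‖ = (j : ℝ) + 1 := by
            rw [norm_neg]; exact_mod_cast Complex.norm_natCast (j + 1)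
          simp only [norm_mul, norm_pow, this]; ring)
    rw [hE] at t1
    simpa only [zero_add] using t1.add t2

end PTheta

namespace PTheta

lemma G_bounds (q x : ℂ) (hq1 : ‖q‖ < 1) (hx : 100 < ‖x‖) :
    0 < ‖∑' j : ℕ, (q ^ ((j + 1).choose 2) * (x⁻¹) ^ (j + 1))‖ ∧
    ‖∑' j : ℕ, (q ^ ((j + 1).choose 2) * (x⁻¹) ^ (j + 1))‖ ≤ 2 / ‖x‖ ∧
    ‖∑' j : ℕ, (-((j : ℂ) + 1) * (q ^ ((j + 1).choose 2) * (x⁻¹) ^ (j + 1)))‖ ≤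
      2 * ‖∑' j : ℕ, (q ^ ((j + 1).choose 2) * (x⁻¹) ^ (j + 1))‖ := by
  set u : ℝ := ‖x⁻¹‖ with hu
  have hue : u = 1 / ‖x‖ := by rw [hu, norm_inv, one_div]
  have hxp : 0 < ‖x‖ := by linarith
  have hu0 : 0 < u := by rw [hue]; positivity
  have hu1 : u < 1 / 100 := by rw [hue]; gcongr
  have hqp : ∀ m : ℕ, ‖q‖ ^ m ≤ 1 := fun m => pow_le_one₀ (norm_nonneg _) hq1.le
  have hterm : ∀ j : ℕ, ‖q ^ ((j + 1).choose 2) * (x⁻¹) ^ (j + 1)‖ ≤ u ^ (j + 1) := by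
    intro j
    rw [norm_mul, norm_pow, norm_pow, ← hu]
    have := hqp ((j + 1).choose 2)
    have h2 : 0 ≤ u ^ (j + 1) := by positivity
    nlinarith
  have hg : HasSum (fun j : ℕ => u ^ j) (1 - u)⁻¹ := hasSum_geometric_of_lt_one hu0.le (by linarith)
  have hg1 : HasSum (fun j : ℕ => u ^ (j + 1)) (u * (1 - u)⁻¹) := by
    simpa [pow_succ'] using hg.mul_left u
  have hg2 : HasSum (fun j : ℕ => u ^ (j + 2)) (u ^ 2 * (1 - u)⁻¹) := by
    simpa [pow_add, mul_comm] using hg.mul_left (u ^ 2)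
  have hsum : Summable (fun j : ℕ => q ^ ((j + 1).choose 2) * (x⁻¹) ^ (j + 1)) :=
    Summable.of_norm_bounded hg1.summable hterm
  set G := ∑' j : ℕ, (q ^ ((j + 1).choose 2) * (x⁻¹) ^ (j + 1)) with hG
  have hup : ‖G‖ ≤ u * (1 - u)⁻¹ := tsum_of_norm_bounded hg1 hterm
  have hsplit : G = x⁻¹ + ∑' j : ℕ, (q ^ ((j + 1 + 1).choose 2) * (x⁻¹) ^ (j + 1 + 1)) := by
    rw [hG, hsum.tsum_eq_zero_add]; simp
  have htail : ‖∑' j : ℕ, (q ^ ((j + 1 + 1).choose 2) * (x⁻¹) ^ (j + 1 + 1))‖ ≤ u ^ 2 * (1 - u)⁻¹ :=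
    tsum_of_norm_bounded hg2 (fun j => hterm (j + 1))
  have hlow : u - u ^ 2 * (1 - u)⁻¹ ≤ ‖G‖ := by
    have h1 : x⁻¹ = G - ∑' j : ℕ, (q ^ ((j + 1 + 1).choose 2) * (x⁻¹) ^ (j + 1 + 1)) := by
      rw [hsplit]; ring
    have h2 := norm_sub_le G (∑' j : ℕ, (q ^ ((j + 1 + 1).choose 2) * (x⁻¹) ^ (j + 1 + 1)))
    rw [← h1, ← hu] at h2
    linarith
  have hc : HasSum (fun j : ℕ => (j : ℝ) * u ^ j) (u / (1 - u) ^ 2) :=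
    hasSum_coe_mul_geometric_of_norm_lt_one (by rw [Real.norm_of_nonneg hu0.le]; linarith)
  have hc1 : HasSum (fun j : ℕ => ((j : ℝ) + 1) * u ^ (j + 1)) (u / (1 - u) ^ 2) := by
    have := (hasSum_nat_add_iff' 1).2 hc
    simpa using this
  have hE : ‖∑' j : ℕ, (-((j : ℂ) + 1) * (q ^ ((j + 1).choose 2) * (x⁻¹) ^ (j + 1)))‖ ≤ u / (1 - u) ^ 2 := by
    refine tsum_of_norm_bounded hc1 fun j => ?_
    have : ‖-((j : ℂ) + 1)‖ = (j : ℝ) + 1 := by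
      rw [norm_neg]; exact_mod_cast Complex.norm_natCast (j + 1)
    rw [norm_mul, this]
    have := hterm j
    gcongr
  have hi : (1 - u)⁻¹ ≤ 100 / 99 := by
    rw [inv_le_comm₀ (by linarith) (by norm_num)]; norm_num; linarith
  have hi0 : 0 < (1 - u)⁻¹ := inv_pos.2 (by linarith)
  have hA : u * (98 / 99) ≤ ‖G‖ := by
    have : u ^ 2 * (1 - u)⁻¹ ≤ u * (1 / 99) := by
      calc u ^ 2 * (1 - u)⁻¹ ≤ u ^ 2 * (100 / 99) := by gcongr
        _ ≤ u * (1 / 99) := by nlinarith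
    linarith
  refine ⟨by nlinarith, ?_, ?_⟩
  · rw [show 2 / ‖x‖ = 2 * u by rw [hue]; ring]
    have : u * (1 - u)⁻¹ ≤ u * (100 / 99) := by gcongr
    linarith
  · have : u / (1 - u) ^ 2 ≤ u * (100 / 99) ^ 2 := by
      rw [div_eq_mul_inv, ← inv_pow]; gcongr
    have : u * (100 / 99) ^ 2 ≤ 2 * (u * (98 / 99)) := by nlinarith
    linarith


lemma norm_z (q : ℂ) (x : ℂ) (s : ℝ) (hs0 : 0 < s) (hs1 : s < 1) (hqs : ‖q‖ = s ^ 2)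
    (m : ℕ) : ‖x * q ^ (m + 1)‖ = ‖x‖ * s ^ (2 * m + 2) := by
  rw [norm_mul, norm_pow, hqs, ← pow_mul]; ring_nf

lemma phi_le_of (q : ℂ) (s : ℝ) (hs0 : 0 < s) (hs1 : s < 1) (hqs : ‖q‖ = s ^ 2)
    (n : ℕ) (z : ℕ → ℂ) (hz : ∀ i < n, ‖z i‖ ≤ s ^ (2 * i + 1)) :
    phi s n ≤ ∏ i ∈ range n, ‖1 + z i‖ := by
  apply Finset.prod_le_prod
  · intro m _
    have : s ^ (m + 1) < 1 := pow_lt_one₀ hs0.le hs1 (by omega)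
    linarith
  · intro m hm
    have h1 := hz m (mem_range.1 hm)
    have h2 : s ^ (2 * m + 1) ≤ s ^ (m + 1) := pow_le_pow_of_le_one hs0.le hs1.le (by omega)
    have h3 := norm_sub_norm_le (1 : ℂ) (-z m)
    simp at h3
    linarith

lemma phi_lower' (q : ℂ) (s : ℝ) (hs0 : 0 < s) (hs1 : s < 1) (hqs : ‖q‖ = s ^ 2)
    (n : ℕ) : Real.exp (-(2 * (s / (1 - s)))) ≤ phi s n := phi_lower s hs0.le hs1 n

lemma qp_lower' (q : ℂ) (s : ℝ) (hs0 : 0 < s) (hs1 : s < 1) (hqs : ‖q‖ = s ^ 2)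
    (n : ℕ) : Real.exp (-(2 * (s / (1 - s)))) ≤ ‖qp q n‖ := by
  have hq1 : ‖q‖ < 1 := by rw [hqs]; exact pow_lt_one₀ hs0.le hs1 (by omega)
  refine (phi_lower s hs0.le hs1 n).trans (le_trans ?_ (norm_qp_lower q hq1 n))
  apply Finset.prod_le_prod
  · intro m _
    have : s ^ (m + 1) < 1 := pow_lt_one₀ hs0.le hs1 (by omega)
    linarith
  · intro m _
    have : ‖q‖ ^ (m + 1) ≤ s ^ (m + 1) := by
      have : ‖q‖ ≤ s := by rw [hqs]; nlinarith
      gcongr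
    linarith


lemma norm_v (q : ℂ) (x : ℂ) (s : ℝ) (hs0 : 0 < s) (hs1 : s < 1) (hqs : ‖q‖ = s ^ 2) (hx : 100 < ‖x‖)
    (m : ℕ) : ‖q ^ m * x⁻¹‖ ≤ s ^ (2 * m) / 100 := by
  rw [norm_mul, norm_pow, hqs, ← pow_mul, norm_inv, ← div_eq_mul_inv]
  gcongr

lemma inv_prod_lower (q : ℂ) (x : ℂ) (s : ℝ) (hs0 : 0 < s) (hs1 : s < 1) (hqs : ‖q‖ = s ^ 2) (hx : 100 < ‖x‖)
    (n : ℕ) :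
    Real.exp (-(2 * (s / (1 - s)))) / 2 ≤ ∏ m ∈ range n, ‖1 + q ^ m * x⁻¹‖ := by
  have h3 : ∀ m, 1 - s ^ (2 * m) / 100 ≤ ‖1 + q ^ m * x⁻¹‖ := by
    intro m
    have h1 := norm_v q x s hs0 hs1 hqs hx m
    have h3 := norm_sub_norm_le (1 : ℂ) (-(q ^ m * x⁻¹))
    rw [norm_neg, sub_neg_eq_add, norm_one] at h3
    linarith
  have hc : Real.exp (-(2 * (s / (1 - s)))) ≤ 1 := by
    rw [Real.exp_le_one_iff]
    have : 0 ≤ s / (1 - s) := div_nonneg hs0.le (by linarith)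
    linarith
  rcases n with _ | n
  · simp; linarith
  · rw [prod_range_succ']
    have h0 := h3 0
    have hp := phi_le_of q s hs0 hs1 hqs n (fun m => q ^ (m + 1) * x⁻¹) (by
      intro i _
      refine (norm_v q x s hs0 hs1 hqs hx (i + 1)).trans ?_
      have : s ^ (2 * (i + 1)) ≤ s ^ (2 * i + 1) := pow_le_pow_of_le_one hs0.le hs1.le (by omega)
      have : 0 ≤ s ^ (2 * (i + 1)) := by positivity
      linarith)
    have hq := phi_lower' q s hs0 hs1 hqs n
    have : (1 : ℝ) / 2 ≤ ‖1 + q ^ 0 * x⁻¹‖ := by norm_num at h0 ⊢; linarith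
    have h9 := mul_le_mul (hq.trans hp) this (by norm_num) (by positivity)
    linarith

/-- no tiny factor -/
lemma T_lower_zero (q : ℂ) (x : ℂ) (s : ℝ) (hs0 : 0 < s) (hs1 : s < 1) (hqs : ‖q‖ = s ^ 2) (hx : 100 < ‖x‖)
    (h2 : ‖x‖ * s ≤ 1) (n : ℕ) :
    Real.exp (-(2 * (s / (1 - s)))) ^ 3 / 2 ≤ ‖Tn q x n‖ := by
  set c := Real.exp (-(2 * (s / (1 - s))))
  have hc : 0 < c := Real.exp_pos _
  rw [Tn, norm_mul, norm_mul, norm_prod, norm_prod]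
  have a1 := qp_lower' q s hs0 hs1 hqs n
  have a2 := inv_prod_lower q x s hs0 hs1 hqs hx n
  have a3 := (phi_lower' q s hs0 hs1 hqs n).trans (phi_le_of q s hs0 hs1 hqs n (fun m => x * q ^ (m + 1)) (by
    intro i _
    rw [norm_z q x s hs0 hs1 hqs]
    have : 0 ≤ s ^ (2 * i + 1) := by positivity
    calc ‖x‖ * s ^ (2 * i + 2) = (‖x‖ * s) * s ^ (2 * i + 1) := by ring
      _ ≤ _ := by nlinarith))
  calc c ^ 3 / 2 = c * c * (c / 2) := by ring
    _ ≤ _ := by gcongr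


lemma hi_small (q : ℂ) (x : ℂ) (s : ℝ) (hs0 : 0 < s) (hs1 : s < 1) (hqs : ‖q‖ = s ^ 2) (K : ℕ) (h2 : ‖x‖ * s ^ (2 * K + 3) ≤ 1)
    (i : ℕ) : ‖x * q ^ (K + 1 + i + 1)‖ ≤ s ^ (2 * i + 1) := by
  rw [norm_z q x s hs0 hs1 hqs]
  have : 0 ≤ s ^ (2 * i + 1) := by positivity
  calc ‖x‖ * s ^ (2 * (K + 1 + i) + 2) = (‖x‖ * s ^ (2 * K + 3)) * s ^ (2 * i + 1) := by ring
    _ ≤ _ := by nlinarith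

lemma lo_big (q : ℂ) (x : ℂ) (s : ℝ) (hs0 : 0 < s) (hs1 : s < 1) (hqs : ‖q‖ = s ^ 2) (K : ℕ) (h1 : 1 ≤ ‖x‖ * s ^ (2 * K + 1))
    (i : ℕ) (hi : i < K) : s⁻¹ ^ (2 * i + 1) ≤ ‖x * q ^ (K - 1 - i + 1)‖ := by
  rw [norm_z q x s hs0 hs1 hqs, inv_pow, inv_le_iff_one_le_mul₀ (by positivity)]
  refine h1.trans_eq ?_
  rw [mul_assoc, ← pow_add]
  congr 2
  omega

lemma lo_prod (q : ℂ) (x : ℂ) (s : ℝ) (hs0 : 0 < s) (hs1 : s < 1) (hqs : ‖q‖ = s ^ 2) (K : ℕ) (h1 : 1 ≤ ‖x‖ * s ^ (2 * K + 1))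
    : s⁻¹ ^ (K ^ 2) * Real.exp (-(2 * (s / (1 - s)))) ≤ ∏ m ∈ range K, ‖1 + x * q ^ (m + 1)‖ := by
  have hp : ∀ n : ℕ, ∏ i ∈ range n, s⁻¹ ^ (2 * i + 1) = s⁻¹ ^ (n ^ 2) := by
    intro n
    induction n with
    | zero => simp
    | succ n ih => rw [prod_range_succ, ih, ← pow_add]; congr 1; ring
  have := phi_lower' q s hs0 hs1 hqs K
  calc s⁻¹ ^ (K ^ 2) * Real.exp (-(2 * (s / (1 - s)))) ≤ s⁻¹ ^ (K ^ 2) * phi s K := by gcongr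
    _ = ∏ i ∈ range K, (s⁻¹ ^ (2 * i + 1) * (1 - s ^ (i + 1))) := by
      rw [prod_mul_distrib, hp, phi]
    _ ≤ ∏ i ∈ range K, ‖1 + x * q ^ (K - 1 - i + 1)‖ := by
      apply Finset.prod_le_prod
      · intro m _
        have : s ^ (m + 1) < 1 := pow_lt_one₀ hs0.le hs1 (by omega)
        have : 0 ≤ 1 - s ^ (m + 1) := by linarith
        positivity
      · intro i hi
        have hb := lo_big q x s hs0 hs1 hqs K h1 i (mem_range.1 hi)
        have h2 : s ^ (2 * i + 1) ≤ s ^ (i + 1) := pow_le_pow_of_le_one hs0.le hs1.le (by omega)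
        have h3 := norm_sub_norm_le (x * q ^ (K - 1 - i + 1)) (-1)
        rw [norm_neg, norm_one, sub_neg_eq_add, add_comm _ (1 : ℂ)] at h3
        have h5 : s⁻¹ ^ (2 * i + 1) * s ^ (2 * i + 1) = 1 := by
          rw [← mul_pow, inv_mul_cancel₀ hs0.ne', one_pow]
        have h6 : s⁻¹ ^ (2 * i + 1) * s ^ (2 * i + 1) ≤ s⁻¹ ^ (2 * i + 1) * s ^ (i + 1) := by gcongr
        linarith
    _ = _ := prod_range_reflect (fun m => ‖1 + x * q ^ (m + 1)‖) K


lemma T_lower (q : ℂ) (x : ℂ) (s : ℝ) (hs0 : 0 < s) (hs1 : s < 1) (hqs : ‖q‖ = s ^ 2) (hx : 100 < ‖x‖) (K : ℕ) (h1 : 1 ≤ ‖x‖ * s ^ (2 * K + 1)) (h2 : ‖x‖ * s ^ (2 * K + 3) ≤ 1)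
    (M : ℕ) :
    Real.exp (-(2 * (s / (1 - s)))) ^ 4 / 2 * s⁻¹ ^ (K ^ 2) * ‖1 + x * q ^ (K + 1)‖
      ≤ ‖Tn q x (K + 1 + M)‖ := by
  set c := Real.exp (-(2 * (s / (1 - s))))
  have hc : 0 < c := Real.exp_pos _
  rw [Tn, norm_mul, norm_mul, norm_prod, norm_prod, prod_range_add _ (K + 1) M, prod_range_succ]
  have a1 := qp_lower' q s hs0 hs1 hqs (K + 1 + M)
  have a2 := inv_prod_lower q x s hs0 hs1 hqs hx (K + 1 + M)
  have a3 := (phi_lower' q s hs0 hs1 hqs M).trans (phi_le_of q s hs0 hs1 hqs M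
    (fun i => x * q ^ (K + 1 + i + 1)) (fun i _ => hi_small q x s hs0 hs1 hqs K h2 i))
  have a4 := lo_prod q x s hs0 hs1 hqs K h1
  calc c ^ 4 / 2 * s⁻¹ ^ (K ^ 2) * ‖1 + x * q ^ (K + 1)‖
      = c * ((s⁻¹ ^ (K ^ 2) * c) * ‖1 + x * q ^ (K + 1)‖ * c) * (c / 2) := by ring
    _ ≤ _ := by gcongr

lemma factors_ne (q : ℂ) (x : ℂ) (s : ℝ) (hs0 : 0 < s) (hs1 : s < 1) (hqs : ‖q‖ = s ^ 2) (hx : 100 < ‖x‖) (K : ℕ) (h1 : 1 ≤ ‖x‖ * s ^ (2 * K + 1)) (h2 : ‖x‖ * s ^ (2 * K + 3) ≤ 1)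
    (hδ : 1 + x * q ^ (K + 1) ≠ 0) (m : ℕ) : 1 + x * q ^ (m + 1) ≠ 0 := by
  intro h0
  have hn : ‖x * q ^ (m + 1)‖ = 1 := by
    rw [show x * q ^ (m + 1) = -1 by linear_combination h0]; simp
  rcases lt_trichotomy m K with h | h | h
  · have := lo_big q x s hs0 hs1 hqs K h1 (K - 1 - m) (by omega)
    rw [show K - 1 - (K - 1 - m) = m by omega, hn] at this
    have h8 : 1 < s⁻¹ ^ (2 * (K - 1 - m) + 1) := one_lt_pow₀ ((one_lt_inv₀ hs0).2 hs1) (by omega)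
    linarith
  · exact hδ (h ▸ h0)
  · have := hi_small q x s hs0 hs1 hqs K h2 (m - K - 1)
    rw [show K + 1 + (m - K - 1) + 1 = m + 1 by omega, hn] at this
    have h8 : s ^ (2 * (m - K - 1) + 1) < 1 := pow_lt_one₀ hs0.le hs1 (by omega)
    linarith

lemma inv_factors_ne (q : ℂ) (x : ℂ) (s : ℝ) (hs0 : 0 < s) (hs1 : s < 1) (hqs : ‖q‖ = s ^ 2) (hx : 100 < ‖x‖)
    (m : ℕ) : 1 + q ^ m * x⁻¹ ≠ 0 := by
  intro h0
  have hn : ‖q ^ m * x⁻¹‖ = 1 := by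
    rw [show q ^ m * x⁻¹ = -1 by linear_combination h0]; simp
  have := norm_v q x s hs0 hs1 hqs hx m
  have h8 : s ^ (2 * m) ≤ 1 := pow_le_one₀ hs0.le hs1.le
  linarith

lemma S_lower (q : ℂ) (x : ℂ) (s : ℝ) (hs0 : 0 < s) (hs1 : s < 1) (hqs : ‖q‖ = s ^ 2) (hx : 100 < ‖x‖) (K : ℕ) (h1 : 1 ≤ ‖x‖ * s ^ (2 * K + 1)) (h2 : ‖x‖ * s ^ (2 * K + 3) ≤ 1)
    (M : ℕ) :
    1 / ‖1 + x * q ^ (K + 1)‖ - 1 - ((K + 1) * (1 - s)⁻¹ + (1 - s)⁻¹ ^ 2) ≤ ‖Sn q x (K + 1 + M)‖ ∨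
    1 + x * q ^ (K + 1) = 0 := by
  by_cases hδ : 1 + x * q ^ (K + 1) = 0
  · exact Or.inr hδ
  left
  have hs : 0 < 1 - s := by linarith
  have hlo : ‖∑ m ∈ range K, (x * q ^ (m + 1)) / (1 + x * q ^ (m + 1))‖ ≤ K * (1 - s)⁻¹ := by
    rw [← sum_range_reflect]
    refine (norm_sum_le_of_le (f := fun i => (x * q ^ (K - 1 - i + 1)) / (1 + x * q ^ (K - 1 - i + 1))) (n := fun _ => (1 - s)⁻¹) _ ?_).trans ?_
    · intro i hi
      have hb := lo_big q x s hs0 hs1 hqs K h1 i (mem_range.1 hi)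
      have h3 := norm_sub_norm_le (x * q ^ (K - 1 - i + 1)) (-1)
      rw [norm_neg, norm_one, sub_neg_eq_add, add_comm _ (1 : ℂ)] at h3
      have h4 : s⁻¹ ≤ s⁻¹ ^ (2 * i + 1) := le_self_pow₀ ((one_lt_inv₀ hs0).2 hs1).le (by omega)
      have h5 : 1 < s⁻¹ := (one_lt_inv₀ hs0).2 hs1
      have h6 : 1 ≤ s * ‖x * q ^ (K - 1 - i + 1)‖ := by
        have := h4.trans hb
        rw [inv_le_iff_one_le_mul₀ hs0] at this
        linarith
      rw [norm_div, ← one_div, div_le_div_iff₀ (by linarith) hs]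
      nlinarith
    · simp
  have hhi : ‖∑ i ∈ range M, (x * q ^ (K + 1 + i + 1)) / (1 + x * q ^ (K + 1 + i + 1))‖ ≤ (1 - s)⁻¹ ^ 2 := by
    have hgs : ∑ i ∈ range M, s ^ i ≤ (1 - s)⁻¹ :=
      sum_le_hasSum _ (fun _ _ => by positivity) (hasSum_geometric_of_lt_one hs0.le hs1)
    refine (norm_sum_le_of_le (n := fun i => s ^ i * (1 - s)⁻¹) _ ?_).trans ?_
    · intro i _
      have hb := hi_small q x s hs0 hs1 hqs K h2 i
      have h3 := norm_sub_norm_le 1 (-(x * q ^ (K + 1 + i + 1)))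
      rw [norm_neg, norm_one, sub_neg_eq_add] at h3
      have h4 : s ^ (2 * i + 1) ≤ s := pow_le_of_le_one hs0.le hs1.le (by omega)
      have h5 : s ^ (2 * i + 1) ≤ s ^ i := pow_le_pow_of_le_one hs0.le hs1.le (by omega)
      rw [norm_div, ← div_eq_mul_inv]
      have h6 : 1 - s ≤ ‖1 + x * q ^ (K + 1 + i + 1)‖ := by linarith
      have h7 := hb.trans h5
      gcongr
    · rw [← sum_mul, sq]; gcongr
  have hin : ‖∑ m ∈ range (K + 1 + M), (q ^ m * x⁻¹) / (1 + q ^ m * x⁻¹)‖ ≤ (1 - s)⁻¹ := by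
    have hgs : ∑ i ∈ range (K + 1 + M), s ^ i ≤ (1 - s)⁻¹ :=
      sum_le_hasSum _ (fun _ _ => by positivity) (hasSum_geometric_of_lt_one hs0.le hs1)
    refine (norm_sum_le_of_le (n := fun i => s ^ i) _ ?_).trans hgs
    intro m _
    have hb := norm_v q x s hs0 hs1 hqs hx m
    have h3 := norm_sub_norm_le 1 (-(q ^ m * x⁻¹))
    rw [norm_neg, norm_one, sub_neg_eq_add] at h3
    have h4 : s ^ (2 * m) ≤ 1 := pow_le_one₀ hs0.le hs1.le
    have h5 : s ^ (2 * m) ≤ s ^ m := pow_le_pow_of_le_one hs0.le hs1.le (by omega)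
    have h6 : 0 < s ^ m := by positivity
    rw [norm_div, div_le_iff₀ (by linarith)]
    nlinarith
  rw [Sn, sum_range_add _ (K + 1) M, sum_range_succ]
  set A := ∑ m ∈ range K, (x * q ^ (m + 1)) / (1 + x * q ^ (m + 1))
  set B := ∑ i ∈ range M, (x * q ^ (K + 1 + i + 1)) / (1 + x * q ^ (K + 1 + i + 1))
  set D := ∑ m ∈ range (K + 1 + M), (q ^ m * x⁻¹) / (1 + q ^ m * x⁻¹)
  set d := 1 + x * q ^ (K + 1) with hd
  have e : x * q ^ (K + 1) / d = 1 - 1 / d := by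
    rw [eq_sub_iff_add_eq, ← add_div, add_comm, ← hd, div_self hδ]
  have hid : 1 / d = 1 - ((A + x * q ^ (K + 1) / d + B - D) - A - B + D) := by rw [e]; ring
  have n1 := congrArg norm hid
  rw [norm_div, norm_one] at n1
  set S := A + x * q ^ (K + 1) / d + B - D
  have m1 := norm_sub_le 1 (S - A - B + D)
  have m2 := norm_add_le (S - A - B) D
  have m3 := norm_sub_le (S - A) B
  have m4 := norm_sub_le S A
  rw [norm_one] at m1
  linarith


lemma numeric (X a s : ℝ) (K : ℕ) (hX : 8 ^ 11 < X) (ha : 0 < a) (hs : s = Real.exp (-a))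
    (hlog : Real.log X < (2 * K + 3) * a) :
    3 + ((K + 1) * (1 - s)⁻¹ + (1 - s)⁻¹ ^ 2) <
      X / 4 * (Real.exp (-(2 * (s / (1 - s)))) ^ 4 * s⁻¹ ^ (K ^ 2)) := by
  have hL : 22.8 < Real.log X := by
    have h1 : Real.log (8 ^ 11) < Real.log X := Real.log_lt_log (by norm_num) hX
    have h2 : Real.log (8 ^ 11 : ℝ) = 33 * Real.log 2 := by
      rw [show (8 : ℝ) ^ 11 = 2 ^ 33 by norm_num, Real.log_pow]; norm_num
    have := Real.log_two_gt_d9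
    linarith
  have hea : 1 + a ≤ Real.exp a := by linarith [Real.add_one_le_exp a]
  have hinv : (1 - s)⁻¹ ≤ 1 + a⁻¹ := by
    have h1 : s ≤ (1 + a)⁻¹ := by
      rw [hs, Real.exp_neg]; gcongr
    have h2 : 1 - (1 + a)⁻¹ = (1 + a⁻¹)⁻¹ := by field_simp; ring
    rw [inv_le_comm₀ (by have : (1 + a)⁻¹ < 1 := inv_lt_one_of_one_lt₀ (by linarith)
                         linarith) (by positivity), ← h2]
    linarith
  have hs1 : s < 1 := by rw [hs, Real.exp_lt_one_iff]; linarith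
  have hs0 : 0 < s := by rw [hs]; exact Real.exp_pos _
  have hss : s / (1 - s) ≤ a⁻¹ := by
    have : s / (1 - s) = (1 - s)⁻¹ - 1 := by
      have : 1 - s ≠ 0 := by linarith
      field_simp
      ring
    linarith
  set b := a⁻¹ with hb
  have hb0 : 0 < b := by positivity
  have hab : a * b = 1 := mul_inv_cancel₀ ha.ne'
  have hexp : Real.exp ((K : ℝ) ^ 2 * a - 8 * b) ≤ Real.exp (-(2 * (s / (1 - s)))) ^ 4 * s⁻¹ ^ (K ^ 2) := by
    rw [hs, ← Real.exp_neg, neg_neg, ← hs, ← Real.exp_nat_mul, ← Real.exp_nat_mul, ← Real.exp_add,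
      Real.exp_le_exp]
    push_cast
    linarith
  have h0 : (0 : ℝ) < (1 - s)⁻¹ := inv_pos.2 (by linarith)
  have hK : (0 : ℝ) ≤ K := Nat.cast_nonneg K
  have hLHS : 3 + ((K + 1) * (1 - s)⁻¹ + (1 - s)⁻¹ ^ 2) ≤ 3 + ((K + 1) * (1 + b) + (1 + b) ^ 2) := by
    gcongr
  refine hLHS.trans_lt (lt_of_lt_of_le ?_ (mul_le_mul_of_nonneg_left hexp (by linarith)))
  have hX4 : (2 : ℝ) ^ 31 < X / 4 := by norm_num at hX ⊢; linarith
  refine lt_of_lt_of_le ?_ (mul_le_mul_of_nonneg_right hX4.le (Real.exp_pos _).le)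
  rcases le_or_gt (1 / 2) a with h | h
  · have hb2 : b ≤ 2 := by nlinarith
    have e1 : Real.exp ((K : ℝ) ^ 2 * (1 / 2)) * Real.exp (-16) ≤ Real.exp ((K : ℝ) ^ 2 * a - 8 * b) := by
      rw [← Real.exp_add, Real.exp_le_exp]
      nlinarith [sq_nonneg (K : ℝ)]
    have e2 : 1 + (K : ℝ) ^ 2 * (1 / 2) ≤ Real.exp ((K : ℝ) ^ 2 * (1 / 2)) := by
      linarith [Real.add_one_le_exp ((K : ℝ) ^ 2 * (1 / 2))]
    have e3 : (1 / 2 ^ 24 : ℝ) ≤ Real.exp (-16) := by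
      rw [Real.exp_neg, one_div]
      have : Real.exp 16 = Real.exp 1 ^ 16 := by rw [← Real.exp_nat_mul]; norm_num
      rw [this]
      have h3 : Real.exp 1 ≤ 2.8 := by linarith [Real.exp_one_lt_d9]
      have h4 : Real.exp 1 ^ 16 ≤ 2.8 ^ 16 := by gcongr
      gcongr
      norm_num at h4 ⊢
      linarith
    have e4 : (1 + (K : ℝ) ^ 2 * (1 / 2)) * (1 / 2 ^ 24) ≤ Real.exp ((K : ℝ) ^ 2 * a - 8 * b) :=
      (mul_le_mul e2 e3 (by norm_num) (Real.exp_pos _).le).trans e1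
    have e5 : 3 + (((K : ℝ) + 1) * (1 + b) + (1 + b) ^ 2) ≤ 3 + ((K + 1) * 3 + 9) := by nlinarith
    nlinarith [sq_nonneg ((K : ℝ) - 1)]
  · have hKa : 10 ≤ K * a := by nlinarith
    have hbK : b ≤ K / 10 := by nlinarith
    have hK20 : (20 : ℝ) ≤ K := by nlinarith
    have e1 : Real.exp (9 * K) ≤ Real.exp ((K : ℝ) ^ 2 * a - 8 * b) := by
      rw [Real.exp_le_exp]
      nlinarith
    have e2 := Real.quadratic_le_exp_of_nonneg (x := 9 * (K : ℝ)) (by linarith)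
    have e3 : 3 + (((K : ℝ) + 1) * (1 + b) + (1 + b) ^ 2) ≤ 3 + ((K + 1) * (1 + K / 10) + (1 + K / 10) ^ 2) := by
      gcongr
    nlinarith

end PTheta

/-- For any complex `q` with `0 < |q| < 1`, every multiple zero `ζ` of the partial theta
function `θ(q,·) = ∑ q^{j(j+1)/2} x^j` satisfies `|ζ| ≤ 8^11`. -/
theorem partialTheta_multiple_zero_bound (q : ℂ) (hq0 : 0 < ‖q‖) (hq1 : ‖q‖ < 1) (ζ : ℂ)
    (hzero : ∑' j : ℕ, q ^ (j * (j + 1) / 2) * ζ ^ j = 0)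
    (hderiv : deriv (fun x : ℂ => ∑' j : ℕ, q ^ (j * (j + 1) / 2) * x ^ j) ζ = 0) :
    ‖ζ‖ ≤ 8 ^ 11 := by
  by_contra! hX
  have hch : ∀ j : ℕ, j * (j + 1) / 2 = (j + 1).choose 2 := by
    intro j; rw [Nat.choose_two_right, Nat.add_sub_cancel, mul_comm]
  simp only [hch] at hzero hderiv
  rw [(PTheta.theta_hasDerivAt q hq0 hq1 ζ).deriv] at hderiv
  have hx100 : 100 < ‖ζ‖ := by norm_num at hX; linarith
  have hX0 : 0 < ‖ζ‖ := by linarith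
  have hζ : ζ ≠ 0 := norm_pos_iff.1 hX0
  have hq : q ≠ 0 := norm_pos_iff.1 hq0
  obtain ⟨hT, hE⟩ := PTheta.limits q hq0 hq1 ζ (by linarith) hzero hderiv
  obtain ⟨hG0, hG1, hG2⟩ := PTheta.G_bounds q ζ hq1 hx100
  set G := ∑' j : ℕ, (q ^ ((j + 1).choose 2) * (ζ⁻¹) ^ (j + 1))
  set H := ∑' j : ℕ, (-((j : ℂ) + 1) * (q ^ ((j + 1).choose 2) * (ζ⁻¹) ^ (j + 1)))
  have hqp := PTheta.qp_ne q hq1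
  simp only [← PTheta.finite_T q ζ hq hζ hqp] at hT
  -- parameters
  obtain ⟨s, hs0, hs1, hqs⟩ : ∃ s : ℝ, 0 < s ∧ s < 1 ∧ ‖q‖ = s ^ 2 :=
    ⟨Real.sqrt ‖q‖, Real.sqrt_pos.2 hq0, by rw [Real.sqrt_lt' one_pos]; simpa using hq1,
      (Real.sq_sqrt hq0.le).symm⟩
  obtain ⟨a, ha, hsa⟩ : ∃ a : ℝ, 0 < a ∧ s = Real.exp (-a) :=
    ⟨-Real.log s, neg_pos.2 (Real.log_neg hs0 hs1), by rw [neg_neg, Real.exp_log hs0]⟩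
  have hXe : ‖ζ‖ = Real.exp (Real.log ‖ζ‖) := (Real.exp_log hX0).symm
  have hlog0 : 0 < Real.log ‖ζ‖ := Real.log_pos (by linarith)
  have hpow : ∀ m : ℕ, ‖ζ‖ * s ^ m = Real.exp (Real.log ‖ζ‖ - m * a) := by
    intro m
    rw [hsa, ← Real.exp_nat_mul, sub_eq_add_neg, Real.exp_add, ← hXe]
    congr 2; ring
  set c := Real.exp (-(2 * (s / (1 - s)))) with hc
  have hc0 : 0 < c := Real.exp_pos _
  set k := ⌊Real.log ‖ζ‖ / (2 * a) + 1 / 2⌋₊ with hk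
  have hk1 : (k : ℝ) ≤ Real.log ‖ζ‖ / (2 * a) + 1 / 2 := Nat.floor_le (by positivity)
  have hk2 : Real.log ‖ζ‖ / (2 * a) + 1 / 2 < k + 1 := Nat.lt_floor_add_one _
  have hdd : Real.log ‖ζ‖ / (2 * a) * (2 * a) = Real.log ‖ζ‖ := by field_simp
  have hk1' : 2 * a * k ≤ Real.log ‖ζ‖ + a := by nlinarith
  have hk2' : Real.log ‖ζ‖ < 2 * a * k + a := by nlinarith
  clear_value k
  rcases k with _ | K
  · -- no tiny factor
    have h2 : ‖ζ‖ * s ≤ 1 := by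
      have := hpow 1
      rw [pow_one] at this
      rw [this, Real.exp_le_one_iff]
      push_cast at *
      linarith
    have hge : c ^ 3 / 2 ≤ ‖G‖ := ge_of_tendsto hT.norm
      (Eventually.of_forall fun n => PTheta.T_lower_zero q ζ s hs0 hs1 hqs hx100 h2 n)
    have hs100 : s ≤ 1 / 100 := by nlinarith
    have hss : s / (1 - s) ≤ 1 / 20 := by
      rw [div_le_iff₀ (by linarith)]; linarith
    have hc9 : 9 / 10 ≤ c := by
      have := Real.add_one_le_exp (-(2 * (s / (1 - s))))
      linarith
    have hc3 : (9 / 10) ^ 3 ≤ c ^ 3 := by gcongr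
    have : 2 / ‖ζ‖ ≤ 2 / 100 := by gcongr
    norm_num at hc3
    linarith
  · push_cast at hk1' hk2'
    have h1 : 1 ≤ ‖ζ‖ * s ^ (2 * K + 1) := by
      rw [hpow, Real.one_le_exp_iff]; push_cast; linarith
    have h2 : ‖ζ‖ * s ^ (2 * K + 3) ≤ 1 := by
      rw [hpow, Real.exp_le_one_iff]; push_cast; linarith
    have hnum := PTheta.numeric ‖ζ‖ a s K hX ha hsa (by linarith)
    rw [← hc] at hnum
    set U := ((K : ℝ) + 1) * (1 - s)⁻¹ + (1 - s)⁻¹ ^ 2 with hU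
    have hU0 : 0 ≤ U := by
      have : 0 ≤ (1 - s)⁻¹ := inv_nonneg.2 (by linarith)
      positivity
    set d := 1 + ζ * q ^ (K + 1) with hd
    have hge : c ^ 4 / 2 * s⁻¹ ^ (K ^ 2) * ‖d‖ ≤ ‖G‖ := by
      apply ge_of_tendsto hT.norm
      filter_upwards [eventually_ge_atTop (K + 1)] with n hn
      obtain ⟨M, rfl⟩ := Nat.exists_eq_add_of_le hn
      exact PTheta.T_lower q ζ s hs0 hs1 hqs hx100 K h1 h2 M
    have hd0 : d ≠ 0 := by
      intro h0
      have : Tendsto (fun n => PTheta.Tn q ζ n) atTop (𝓝 0) := by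
        apply tendsto_const_nhds.congr'
        filter_upwards [eventually_ge_atTop (K + 1)] with n hn
        have : ∏ m ∈ range n, (1 + ζ * q ^ (m + 1)) = 0 :=
          prod_eq_zero (mem_range.2 (by omega : K < n)) h0
        rw [PTheta.Tn, this]; ring
      have := tendsto_nhds_unique hT this
      rw [this] at hG0
      simp at hG0
    have hdn : 0 < ‖d‖ := norm_pos_iff.2 hd0
    have hge2 : ‖G‖ * (1 / ‖d‖ - 1 - U) ≤ ‖H‖ := by
      apply le_of_tendsto_of_tendsto (hT.norm.mul_const _) hE.norm
      filter_upwards [eventually_ge_atTop (K + 1)] with n hn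
      rw [← PTheta.finite_E q ζ hq hζ hqp n
        (fun m _ => PTheta.factors_ne q ζ s hs0 hs1 hqs hx100 K h1 h2 hd0 m)
        (fun m _ => PTheta.inv_factors_ne q ζ s hs0 hs1 hqs hx100 m), norm_mul]
      obtain ⟨M, rfl⟩ := Nat.exists_eq_add_of_le hn
      have := (PTheta.S_lower q ζ s hs0 hs1 hqs hx100 K h1 h2 M).resolve_right hd0
      gcongr
    have h3 : 1 / ‖d‖ ≤ 3 + U := by
      have : ‖G‖ * (1 / ‖d‖ - 1 - U) ≤ ‖G‖ * 2 := by linarith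
      have := le_of_mul_le_mul_left this hG0
      linarith
    have h4 : ‖ζ‖ / 4 * (c ^ 4 * s⁻¹ ^ (K ^ 2)) ≤ 1 / ‖d‖ := by
      rw [le_div_iff₀ hdn]
      have := hge.trans hG1
      rw [le_div_iff₀ hX0] at this
      linarith
    linarith
end

section
/- Let q ∈ ℂ with 0 < |q| < 1 satisfy 2 Σ_{ν=1}^∞ |q|^{ν²/2} ≤ 1 (this holds precisely for |q| ≤ c₀, where c₀ = 0.2078750206… is the root of 2 Σ_{ν=1}^∞ t^{ν²/2} = 1). Then the function θ(q,·) has no multiple zeros: there is no ζ ∈ ℂ with θ(q,ζ) = 0 and ∂θ/∂x(q,ζ) = 0. -/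
open Complex Metric

/-- A holomorphic function vanishing at the centre cannot have positive real part on a circle. -/
lemma pt_no_pos_re {R : ℝ} (hR : 0 < R) {G : ℂ → ℂ} (hG : DifferentiableOn ℂ G (closedBall 0 R))
    (h0 : G 0 = 0) (hpos : ∀ x : ℂ, ‖x‖ = R → 0 < (G x).re) : False := by
  have hne : (sphere (0 : ℂ) R).Nonempty := NormedSpace.sphere_nonempty.2 hR.le
  have hcont : ContinuousOn (fun x => (G x).re) (sphere (0 : ℂ) R) :=
    Complex.continuous_re.comp_continuousOn (hG.continuousOn.mono sphere_subset_closedBall)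
  obtain ⟨x0, hx0, hmin⟩ := (isCompact_sphere (0 : ℂ) R).exists_isMinOn hne hcont
  have hx0' : 0 < (G x0).re := hpos x0 (by simpa using hx0)
  have hd : DiffContOnCl ℂ (fun x => Complex.exp (-G x)) (ball 0 R) :=
    DifferentiableOn.diffContOnCl_ball (U := closedBall 0 R) (hG.neg.cexp) subset_rfl
  have := Complex.norm_le_of_forall_mem_frontier_norm_le (U := ball (0 : ℂ) R) (C := Real.exp (-(G x0).re))
    isBounded_ball hd (by
      intro z hz
      rw [frontier_ball _ hR.ne'] at hz
      rw [Complex.norm_exp]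
      apply Real.exp_le_exp.2
      have := hmin hz
      simp only [Set.mem_ofPred_eq] at this
      simpa using this) (z := 0) (subset_closure (mem_ball_self hR))
  rw [h0] at this
  simp at this
  linarith

/-- The product of linear factors. -/
noncomputable def ptQ (s : Multiset ℂ) (x : ℂ) : ℂ := (s.map (fun z => x - z)).prod

/-- The reflected product. -/
noncomputable def ptQr (R : ℝ) (s : Multiset ℂ) (x : ℂ) : ℂ :=
  (s.map (fun z => (R : ℂ) ^ 2 - (starRingEnd ℂ) z * x)).prod

lemma ptQ_zero (x : ℂ) : ptQ 0 x = 1 := by simp [ptQ]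

lemma ptQ_cons (z : ℂ) (s : Multiset ℂ) (x : ℂ) : ptQ (z ::ₘ s) x = (x - z) * ptQ s x := by
  simp [ptQ]

lemma ptQr_zero (R : ℝ) (x : ℂ) : ptQr R 0 x = 1 := by simp [ptQr]

lemma ptQr_cons (R : ℝ) (z : ℂ) (s : Multiset ℂ) (x : ℂ) :
    ptQr R (z ::ₘ s) x = ((R : ℂ) ^ 2 - (starRingEnd ℂ) z * x) * ptQr R s x := by
  simp [ptQr]

lemma ptQ_diff (s : Multiset ℂ) : Differentiable ℂ (ptQ s) := by
  induction s using Multiset.induction with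
  | empty => 
    have : ptQ 0 = fun _ => 1 := funext ptQ_zero
    rw [this]; fun_prop
  | cons a s ih =>
    have : ptQ (a ::ₘ s) = fun x => (x - a) * ptQ s x := funext (ptQ_cons a s)
    rw [this]; fun_prop

lemma ptQr_diff (R : ℝ) (s : Multiset ℂ) : Differentiable ℂ (ptQr R s) := by
  induction s using Multiset.induction with
  | empty => 
    have : ptQr R 0 = fun _ => 1 := funext (ptQr_zero R)
    rw [this]; fun_prop
  | cons a s ih =>
    have : ptQr R (a ::ₘ s) = fun x => ((R : ℂ) ^ 2 - (starRingEnd ℂ) a * x) * ptQr R s x :=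
      funext (ptQr_cons R a s)
    rw [this]; fun_prop

lemma ptQ_ne (s : Multiset ℂ) (x : ℂ) (h : ∀ z ∈ s, x ≠ z) : ptQ s x ≠ 0 := by
  unfold ptQ
  apply Multiset.prod_ne_zero
  intro hm
  obtain ⟨z, hz, hzx⟩ := Multiset.mem_map.1 hm
  exact h z hz (sub_eq_zero.1 hzx)

lemma ptQr_ne {R : ℝ} (hR : 0 < R) (s : Multiset ℂ) (x : ℂ) (hx : ‖x‖ ≤ R)
    (h : ∀ z ∈ s, ‖z‖ < R) : ptQr R s x ≠ 0 := by
  apply Multiset.prod_ne_zero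
  intro hm
  obtain ⟨z, hz, hzx⟩ := Multiset.mem_map.1 hm
  have h1 := congrArg norm (sub_eq_zero.1 hzx)
  have h2 := h z hz
  rw [norm_pow, norm_mul, Complex.norm_conj, Complex.norm_real, Real.norm_of_nonneg hR.le] at h1
  nlinarith [norm_nonneg z, norm_nonneg x]

lemma ptQr_sphere {R : ℝ} (s : Multiset ℂ) (x : ℂ) (hx : ‖x‖ = R) :
    ptQr R s x = x ^ (Multiset.card s) * (starRingEnd ℂ) (ptQ s x) := by
  have hxx : (R : ℂ) ^ 2 = x * (starRingEnd ℂ) x := by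
    rw [Complex.mul_conj, Complex.normSq_eq_norm_sq, hx]; push_cast; rfl
  induction s using Multiset.induction with
  | empty => simp [ptQr_zero, ptQ_zero]
  | cons a s ih =>
    rw [ptQr_cons, ptQ_cons, ih, Multiset.card_cons, map_mul, hxx, map_sub]
    ring

/-- At most `k` zeros. -/
lemma pt_upper {R : ℝ} (hR : 0 < R) {f h : ℂ → ℂ} {a : ℂ} {k : ℕ} (s : Multiset ℂ)
    (hs : ∀ z ∈ s, ‖z‖ < R) (hh : Differentiable ℂ h) (hf : ∀ x, f x = ptQ s x * h x)
    (hpos : ∀ x, ‖x‖ = R → 0 < (f x / (a * x ^ k)).re) : Multiset.card s ≤ k := by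
  by_contra hlt
  push Not at hlt
  refine pt_no_pos_re hR (G := fun x => h x * x ^ (Multiset.card s - k) / (a * ptQr R s x)) ?_ ?_ ?_
  · by_cases ha : a = 0
    · simp [ha]
    refine DifferentiableOn.div (by fun_prop)
      ((differentiable_const a).mul (ptQr_diff R s)).differentiableOn ?_
    intro x hx
    exact mul_ne_zero ha (ptQr_ne hR s x (by simpa using hx) hs)
  · have : Multiset.card s - k ≠ 0 := by omega
    simp [this]
  · intro x hx
    have hx0 : x ≠ 0 := by
      rintro rfl; simp at hx; linarith
    have hQ : ptQ s x ≠ 0 := ptQ_ne s x (by rintro z hz rfl; exact absurd (hs _ hz) (by simp [hx]))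
    have hQ' : (starRingEnd ℂ) (ptQ s x) ≠ 0 := by simpa using hQ
    have e : h x * x ^ (Multiset.card s - k) / (a * ptQr R s x)
        = (((Complex.normSq (ptQ s x))⁻¹ : ℝ) : ℂ) * (f x / (a * x ^ k)) := by
      rw [ptQr_sphere s x hx, hf x, Complex.ofReal_inv, ← Complex.mul_conj]
      by_cases ha : a = 0
      · simp [ha]
      have : x ^ (Multiset.card s) = x ^ (Multiset.card s - k) * x ^ k := by
        rw [← pow_add]; congr 1; omega
      rw [this]
      field_simp
    rw [e, Complex.re_ofReal_mul]
    exact mul_pos (inv_pos.2 (Complex.normSq_pos.2 hQ)) (hpos x hx)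

/-- At least `k` zeros. -/
lemma pt_lower {R : ℝ} (hR : 0 < R) {f h : ℂ → ℂ} {a : ℂ} {k : ℕ} (s : Multiset ℂ)
    (hs : ∀ z ∈ s, ‖z‖ < R) (hh : Differentiable ℂ h) (hf : ∀ x, f x = ptQ s x * h x)
    (hh0 : ∀ x, ‖x‖ ≤ R → h x ≠ 0)
    (hpos : ∀ x, ‖x‖ = R → 0 < (f x / (a * x ^ k)).re) : k ≤ Multiset.card s := by
  by_contra hlt
  push Not at hlt
  refine pt_no_pos_re hR (G := fun x => a * x ^ (k - Multiset.card s) * ptQr R s x / h x) ?_ ?_ ?_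
  · refine DifferentiableOn.div
      (((differentiable_const a).mul (differentiable_id.pow _)).mul
        (ptQr_diff R s)).differentiableOn hh.differentiableOn ?_
    intro x hx
    exact hh0 x (by simpa using hx)
  · have : k - Multiset.card s ≠ 0 := by omega
    simp [this]
  · intro x hx
    have hx0 : x ≠ 0 := by
      rintro rfl; simp at hx; linarith
    have hQ : ptQ s x ≠ 0 := ptQ_ne s x (by rintro z hz rfl; exact absurd (hs _ hz) (by simp [hx]))
    have hhx := hh0 x hx.le
    have e : a * x ^ (k - Multiset.card s) * ptQr R s x / h x
        = ((Complex.normSq (ptQ s x) : ℝ) : ℂ) * (f x / (a * x ^ k))⁻¹ := by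
      rw [ptQr_sphere s x hx, hf x, ← Complex.mul_conj]
      have : x ^ k = x ^ (k - Multiset.card s) * x ^ (Multiset.card s) := by
        rw [← pow_add]; congr 1; omega
      rw [this]
      field_simp
    rw [e, Complex.re_ofReal_mul]
    refine mul_pos (Complex.normSq_pos.2 hQ) ?_
    have hp := hpos x hx
    rw [Complex.inv_re]
    refine div_pos hp (Complex.normSq_pos.2 ?_)
    intro h0; rw [h0] at hp; simp at hp

lemma pt_divide {h : ℂ → ℂ} (hh : Differentiable ℂ h) {z : ℂ} (hz : h z = 0) :
    ∃ g : ℂ → ℂ, Differentiable ℂ g ∧ (∀ x, h x = (x - z) * g x) ∧ g z = deriv h z := by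
  refine ⟨dslope h z, ?_, ?_, dslope_same _ _⟩
  · rw [← differentiableOn_univ] at *
    exact (Complex.differentiableOn_dslope Filter.univ_mem).2 hh
  · intro x
    have := sub_smul_dslope h z x
    rw [hz, sub_zero, smul_eq_mul] at this
    exact this.symm

/-- Exactly `k` zeros: a full factorization exists. -/
lemma pt_factor {R : ℝ} (hR : 0 < R) {f : ℂ → ℂ} {a : ℂ} {k : ℕ} (hf : Differentiable ℂ f)
    (hpos : ∀ x, ‖x‖ = R → 0 < (f x / (a * x ^ k)).re) :
    ∃ (s : Multiset ℂ) (h : ℂ → ℂ), Multiset.card s = k ∧ (∀ z ∈ s, ‖z‖ < R) ∧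
      Differentiable ℂ h ∧ ∀ x, f x = ptQ s x * h x := by
  classical
  let P : ℕ → Prop := fun m => ∃ (s : Multiset ℂ) (h : ℂ → ℂ), Multiset.card s = m ∧
    (∀ z ∈ s, ‖z‖ < R) ∧ Differentiable ℂ h ∧ ∀ x, f x = ptQ s x * h x
  have hP0 : P 0 := ⟨0, f, by simp, by simp, hf, by simp [ptQ_zero]⟩
  have hPg : P (Nat.findGreatest P k) := Nat.findGreatest_spec (Nat.zero_le k) hP0
  obtain ⟨s, h, hcard, hs, hh, hfs⟩ := hPg
  have hfne : ∀ x, ‖x‖ = R → f x ≠ 0 := by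
    intro x hx h0
    have := hpos x hx
    simp [h0] at this
  have hh0 : ∀ x, ‖x‖ ≤ R → h x ≠ 0 := by
    intro x hx h0
    rcases hx.lt_or_eq with hlt | heq
    · obtain ⟨g, hg, hgx, -⟩ := pt_divide hh h0
      have hP1 : P (Multiset.card s + 1) := by
        refine ⟨x ::ₘ s, g, by simp, ?_, hg, ?_⟩
        · intro z hz
          rcases Multiset.mem_cons.1 hz with rfl | hz
          · exact hlt
          · exact hs z hz
        · intro y
          rw [hfs, hgx, ptQ_cons]; ring
      have hle : Multiset.card s + 1 ≤ k := by
        obtain ⟨s', h', hc, h1, h2, h3⟩ := hP1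
        rw [← hc]
        exact pt_upper hR s' h1 h2 h3 hpos
      have := Nat.le_findGreatest hle hP1
      omega
    · exact hfne x heq (by rw [hfs, h0, mul_zero])
  exact ⟨s, h, le_antisymm (pt_upper hR s hs hh hfs hpos) (pt_lower hR s hs hh hfs hh0 hpos),
    hs, hh, hfs⟩

/-- A double zero in addition to a given set of zeros. -/
lemma pt_double {f h : ℂ → ℂ} {s : Multiset ℂ} (hh : Differentiable ℂ h)
    (hf : ∀ x, f x = ptQ s x * h x) {ζ : ℂ} (hQ : ptQ s ζ ≠ 0) (h0 : f ζ = 0)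
    (h1 : deriv f ζ = 0) :
    ∃ g : ℂ → ℂ, Differentiable ℂ g ∧ ∀ x, f x = ptQ (ζ ::ₘ ζ ::ₘ s) x * g x := by
  have hz : h ζ = 0 := by
    rw [hf] at h0
    exact (mul_eq_zero.1 h0).resolve_left hQ
  have hz' : deriv h ζ = 0 := by
    have : f = fun x => ptQ s x * h x := funext hf
    rw [this, deriv_fun_mul (ptQ_diff s ζ) (hh ζ), hz, mul_zero, zero_add] at h1
    exact (mul_eq_zero.1 h1).resolve_left hQ
  obtain ⟨g, hg, hgx, hgz⟩ := pt_divide hh hz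
  rw [hz'] at hgz
  obtain ⟨g', hg', hgx', -⟩ := pt_divide hg hgz
  refine ⟨g', hg', fun x => ?_⟩
  rw [hf, hgx, hgx', ptQ_cons, ptQ_cons]; ring

lemma pt_tri (j : ℕ) : (((j * (j + 1) / 2 : ℕ) : ℝ)) = (j : ℝ) * (j + 1) / 2 := by
  rw [Nat.cast_div (even_iff_two_dvd.1 (Nat.even_mul_succ_self j)) (by norm_num)]
  push_cast; ring

lemma pt_summable {t : ℝ} (ht0 : 0 < t) (ht1 : t < 1) {r : ℝ} (hr : 0 < r) :
    Summable (fun j : ℕ => t ^ (j * (j + 1) / 2) * r ^ j) := by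
  refine summable_of_ratio_test_tendsto_lt_one (l := 0) (by norm_num)
    (Filter.Eventually.of_forall fun j => by positivity) ?_
  have h := ((tendsto_pow_atTop_nhds_zero_of_lt_one ht0.le ht1).mul_const (t * r))
  rw [zero_mul] at h
  refine h.congr fun j => ?_
  rw [Real.norm_of_nonneg (by positivity), Real.norm_of_nonneg (by positivity)]
  have : (j + 1) * (j + 1 + 1) / 2 = j * (j + 1) / 2 + (j + 1) := by
    have : (j + 1) * (j + 1 + 1) = j * (j + 1) + (j + 1) * 2 := by ring
    rw [this, Nat.add_mul_div_right _ _ (by norm_num)]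
  rw [this, eq_div_iff (by positivity), pow_add, pow_succ, pow_succ]
  ring

lemma pt_summable_c (q : ℂ) (hq0 : 0 < ‖q‖) (hq1 : ‖q‖ < 1) (x : ℂ) :
    Summable (fun j : ℕ => q ^ (j * (j + 1) / 2) * x ^ j) := by
  refine Summable.of_norm_bounded (pt_summable hq0 hq1 (r := ‖x‖ + 1) (by positivity)) fun j => ?_
  rw [norm_mul, norm_pow, norm_pow]
  gcongr
  linarith

lemma pt_entire (q : ℂ) (hq0 : 0 < ‖q‖) (hq1 : ‖q‖ < 1) :
    Differentiable ℂ (fun x : ℂ => ∑' j : ℕ, q ^ (j * (j + 1) / 2) * x ^ j) := by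
  intro x
  have := differentiableOn_tsum_of_summable_norm (U := ball (0 : ℂ) (‖x‖ + 1))
    (F := fun (j : ℕ) (x : ℂ) => q ^ (j * (j + 1) / 2) * x ^ j)
    (pt_summable hq0 hq1 (r := ‖x‖ + 1) (by positivity)) (fun j => by fun_prop) isOpen_ball
    (fun j w hw => by
      rw [norm_mul, norm_pow, norm_pow]
      have : ‖w‖ ≤ ‖x‖ + 1 := by simpa using (mem_ball.1 hw).le
      gcongr)
  exact this.differentiableAt (isOpen_ball.mem_nhds (by simp))

/-- On the circle `|x| = |q|^{-(k+1/2)}` the `k`-th term dominates. -/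
lemma pt_pos (q : ℂ) (hq0 : 0 < ‖q‖) (hq1 : ‖q‖ < 1)
    (hsum : 2 * ∑' ν : ℕ, ‖q‖ ^ ((((ν : ℝ) + 1) ^ 2) / 2) ≤ 1) (k : ℕ) (x : ℂ)
    (hx : ‖x‖ = ‖q‖ ^ (-((k : ℝ) + 1 / 2))) :
    0 < ((∑' j : ℕ, q ^ (j * (j + 1) / 2) * x ^ j) / (q ^ (k * (k + 1) / 2) * x ^ k)).re := by
  set t := ‖q‖ with ht
  have hqn : q ≠ 0 := norm_pos_iff.1 hq0
  have hxpos : 0 < ‖x‖ := by rw [hx]; positivity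
  have hxn : x ≠ 0 := norm_pos_iff.1 hxpos
  set S := ∑' ν : ℕ, t ^ ((((ν : ℝ) + 1) ^ 2) / 2) with hS
  have hsS : Summable (fun ν : ℕ => t ^ ((((ν : ℝ) + 1) ^ 2) / 2)) := by
    have := (pt_summable hq0 hq1 (r := t ^ (1 / 2 : ℝ)) (by positivity)).mul_left (t ^ (1 / 2 : ℝ))
    refine this.congr fun j => ?_
    rw [← Real.rpow_natCast, ← Real.rpow_natCast, ← Real.rpow_mul hq0.le, ← Real.rpow_add hq0,
      ← Real.rpow_add hq0, pt_tri]
    congr 1; ring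
  let w : ℕ → ℂ := fun j => q ^ (j * (j + 1) / 2) * x ^ j / (q ^ (k * (k + 1) / 2) * x ^ k)
  have hwn : ∀ j, ‖w j‖ = t ^ ((((j : ℝ) - k) ^ 2) / 2) := by
    intro j
    simp only [w]
    rw [norm_div, norm_mul, norm_mul, norm_pow, norm_pow, norm_pow, norm_pow, hx, ← ht,
      ← Real.rpow_natCast, ← Real.rpow_natCast, ← Real.rpow_natCast, ← Real.rpow_natCast,
      ← Real.rpow_mul hq0.le, ← Real.rpow_mul hq0.le, ← Real.rpow_add hq0,
      ← Real.rpow_add hq0, ← Real.rpow_sub hq0, pt_tri, pt_tri]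
    congr 1; ring
  have hwk : w k = 1 := div_self (mul_ne_zero (pow_ne_zero _ hqn) (pow_ne_zero _ hxn))
  have hws : Summable w := (pt_summable_c q hq0 hq1 x).div_const _
  have e : (∑' j : ℕ, q ^ (j * (j + 1) / 2) * x ^ j) / (q ^ (k * (k + 1) / 2) * x ^ k)
      = ∑ j ∈ Finset.range k, w j + 1 + ∑' j, w (j + (k + 1)) := by
    rw [← tsum_div_const, ← hwk, ← Finset.sum_range_succ]
    exact (hws.sum_add_tsum_nat_add (k + 1)).symm
  have b1 : ‖∑ j ∈ Finset.range k, w j‖ < S := by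
    have h1 : ‖∑ j ∈ Finset.range k, w j‖ ≤ ∑ j ∈ Finset.range k, t ^ ((((j : ℝ) + 1) ^ 2) / 2) := by
      refine (norm_sum_le _ _).trans (le_of_eq ?_)
      rw [← Finset.sum_range_reflect]
      refine Finset.sum_congr rfl fun j hj => ?_
      have hj' := Finset.mem_range.1 hj
      rw [hwn]
      have : ((k - 1 - j : ℕ) : ℝ) = (k : ℝ) - 1 - j := by
        rw [Nat.sub_sub, Nat.cast_sub (by omega)]; push_cast; ring
      rw [this]
      congr 2; ring
    have h2 : ∑ j ∈ Finset.range (k + 1), t ^ ((((j : ℝ) + 1) ^ 2) / 2) ≤ S :=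
      hsS.sum_le_tsum _ fun i _ => by positivity
    rw [Finset.sum_range_succ] at h2
    have : 0 < t ^ ((((k : ℝ) + 1) ^ 2) / 2) := by positivity
    linarith
  have b2 : ‖∑' j, w (j + (k + 1))‖ ≤ S := by
    refine tsum_of_norm_bounded hsS.hasSum fun j => ?_
    rw [hwn]
    apply le_of_eq
    push_cast
    congr 2; ring
  rw [e, Complex.add_re, Complex.add_re, Complex.one_re]
  have c1 := (abs_le.1 (Complex.abs_re_le_norm (∑ j ∈ Finset.range k, w j))).1
  have c2 := (abs_le.1 (Complex.abs_re_le_norm (∑' j, w (j + (k + 1))))).1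
  linarith

/-- If `2 ∑_{ν=1}^∞ |q|^{ν²/2} ≤ 1` then the partial theta function `θ(q,·)` has no
multiple zeros. -/
theorem partialTheta_no_multiple_zero_of_small_q (q : ℂ) (hq0 : 0 < ‖q‖) (hq1 : ‖q‖ < 1)
    (hsum : 2 * ∑' ν : ℕ, ‖q‖ ^ ((((ν : ℝ) + 1) ^ 2) / 2) ≤ 1) :
    ¬ ∃ ζ : ℂ, (∑' j : ℕ, q ^ (j * (j + 1) / 2) * ζ ^ j = 0) ∧
      deriv (fun x : ℂ => ∑' j : ℕ, q ^ (j * (j + 1) / 2) * x ^ j) ζ = 0 := by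
  classical
  rintro ⟨ζ, h0, h1⟩
  set f : ℂ → ℂ := fun x : ℂ => ∑' j : ℕ, q ^ (j * (j + 1) / 2) * x ^ j with hfdef
  have h0' : f ζ = 0 := h0
  have hf : Differentiable ℂ f := pt_entire q hq0 hq1
  let R : ℕ → ℝ := fun k => ‖q‖ ^ (-((k : ℝ) + 1 / 2))
  have hRpos : ∀ k, 0 < R k := fun k => Real.rpow_pos_of_pos hq0 _
  have hpos : ∀ k x, ‖x‖ = R k → 0 < (f x / (q ^ (k * (k + 1) / 2) * x ^ k)).re :=
    fun k x hx => pt_pos q hq0 hq1 hsum k x hx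
  have hex : ∃ k, ‖ζ‖ < R k := by
    obtain ⟨n, hn⟩ := pow_unbounded_of_one_lt ‖ζ‖ ((one_lt_inv₀ hq0).2 hq1)
    refine ⟨n, hn.trans_le ?_⟩
    rw [inv_pow, ← Real.rpow_natCast, ← Real.rpow_neg hq0.le]
    exact Real.rpow_le_rpow_of_exponent_ge hq0 hq1.le (by linarith)
  obtain ⟨k, hk, hmin⟩ : ∃ k, ‖ζ‖ < R k ∧ ∀ m < k, ¬ ‖ζ‖ < R m :=
    ⟨Nat.find hex, Nat.find_spec hex, fun m hm => Nat.find_min hex hm⟩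
  obtain ⟨s, h, hc, hs, hQ, hh, hfs⟩ : ∃ (s : Multiset ℂ) (h : ℂ → ℂ), k ≤ Multiset.card s + 1 ∧
      (∀ z ∈ s, ‖z‖ < R k) ∧ ptQ s ζ ≠ 0 ∧ Differentiable ℂ h ∧ ∀ x, f x = ptQ s x * h x := by
    rcases k with _ | m
    · exact ⟨0, f, by simp, by simp, by simp [ptQ_zero], hf, by simp [ptQ_zero]⟩
    · obtain ⟨s, h, hc, hs, hh, hfs⟩ := pt_factor (hRpos m) hf (hpos m)
      have hge : R m ≤ ‖ζ‖ := not_lt.1 (hmin m (Nat.lt_succ_self m))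
      refine ⟨s, h, by omega, fun z hz => (hs z hz).trans_le (hge.trans hk.le), ?_, hh, hfs⟩
      apply ptQ_ne
      rintro z hz rfl
      exact absurd (hs _ hz) (not_lt.2 hge)
  obtain ⟨g, hg, hfg⟩ := pt_double hh hfs hQ h0' h1
  have := pt_upper (hRpos k) (ζ ::ₘ ζ ::ₘ s) (by
    intro z hz
    rcases Multiset.mem_cons.1 hz with rfl | hz
    · exact hk
    rcases Multiset.mem_cons.1 hz with rfl | hz
    · exact hk
    exact hs z hz) hg hfg (hpos k)
  simp only [Multiset.card_cons] at this
  omega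
end

section
/- Let q ∈ ℂ with 0 < |q| < 1 satisfy 2 Σ_{ν=1}^∞ |q|^{ν²/2} ≤ 1, and let k ∈ ℕ, k ≥ 1. Then for every x ∈ ℂ with |x| = |q|^{-k-1/2}, the term of index k dominates the rest of the series: |x^k q^{k(k+1)/2}| > Σ_{j ≥ 0, j ≠ k} |q^{j(j+1)/2} x^j|. In particular θ(q,x) ≠ 0 for every x with |x| = |q|^{-k-1/2}. -/
lemma pt_split {E : Type*} [NormedAddCommGroup E] [CompleteSpace E] (f : ℕ → E)
    (hf : Summable f) (k : ℕ) :
    f k + ∑' j : {j : ℕ // j ≠ k}, f j = ∑' j, f j := by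
  rw [← hf.sum_add_tsum_subtype_compl {k}, Finset.sum_singleton]
  congr 1
  exact (Equiv.subtypeEquivRight (p := fun j => j ≠ k) (q := fun j => j ∉ ({k} : Finset ℕ))
    (fun j => by simp)).tsum_eq (fun j : {j : ℕ // j ∉ ({k} : Finset ℕ)} => f j)

lemma pt_summable_s2 (r : ℝ) (h0 : 0 < r) (h1 : r < 1) :
    Summable (fun ν : ℕ => r ^ ((((ν : ℝ) + 1) ^ 2) / 2)) := by
  have hs : Summable (fun ν : ℕ => (r ^ (1/2 : ℝ)) ^ ν) :=
    summable_geometric_of_lt_one (by positivity) (Real.rpow_lt_one h0.le h1 (by norm_num))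
  refine Summable.of_nonneg_of_le (fun _ => by positivity) (fun ν => ?_) hs
  rw [← Real.rpow_natCast (r ^ (1/2 : ℝ)), ← Real.rpow_mul h0.le]
  apply Real.rpow_le_rpow_of_exponent_ge h0 h1.le
  have : (0:ℝ) ≤ ν := by positivity
  nlinarith

lemma pt_norm (q : ℂ) (hq0 : 0 < ‖q‖) (k : ℕ) (x : ℂ)
    (hx : ‖x‖ = ‖q‖ ^ (-(k : ℝ) - 1/2)) (j : ℕ) :
    ‖q ^ (j * (j + 1) / 2) * x ^ j‖
      = ‖q‖ ^ (-(k : ℝ) ^ 2 / 2) * ‖q‖ ^ (((j : ℝ) - k) ^ 2 / 2) := by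
  rw [norm_mul, norm_pow, norm_pow, hx, ← Real.rpow_natCast, ← Real.rpow_natCast,
    ← Real.rpow_mul hq0.le, ← Real.rpow_add hq0, ← Real.rpow_add hq0,
    Nat.cast_div (Nat.even_mul_succ_self j).two_dvd (by norm_num)]
  congr 1
  push_cast
  ring

/-- If `2 ∑_{ν=1}^∞ |q|^{ν²/2} ≤ 1` and `|x| = |q|^{-k-1/2}` for `k ≥ 1`, then the `k`-th term
of the partial theta series dominates the sum of the moduli of all the other terms; in
particular `θ(q,x) ≠ 0`. -/
theorem partialTheta_dominant_term (q : ℂ) (hq0 : 0 < ‖q‖) (hq1 : ‖q‖ < 1)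
    (hsum : 2 * ∑' ν : ℕ, ‖q‖ ^ ((((ν : ℝ) + 1) ^ 2) / 2) ≤ 1)
    (k : ℕ) (hk : 1 ≤ k) (x : ℂ) (hx : ‖x‖ = ‖q‖ ^ (-(k : ℝ) - 1/2)) :
    (∑' j : {j : ℕ // j ≠ k}, ‖q ^ ((j : ℕ) * ((j : ℕ) + 1) / 2) * x ^ (j : ℕ)‖)
        < ‖x ^ k * q ^ (k * (k + 1) / 2)‖ ∧
      ∑' j : ℕ, q ^ (j * (j + 1) / 2) * x ^ j ≠ 0 := by
  have hN := pt_norm q hq0 k x hx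
  have ha := pt_summable_s2 ‖q‖ hq0 hq1
  set C : ℝ := ‖q‖ ^ (-(k : ℝ) ^ 2 / 2) with hC
  have hCpos : 0 < C := by positivity
  set a : ℕ → ℝ := fun ν : ℕ => ‖q‖ ^ ((((ν : ℝ) + 1) ^ 2) / 2) with hadef
  have hapos : ∀ n, 0 < a n := fun n => by positivity
  set f : ℕ → ℂ := fun j => q ^ (j * (j + 1) / 2) * x ^ j with hf
  have hN' : ∀ j, ‖f j‖ = C * ‖q‖ ^ (((j : ℝ) - k) ^ 2 / 2) := hN
  have hup : ∀ j, ‖f (j + (k + 1))‖ = C * a j := by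
    intro j
    rw [hN', hadef]
    congr 3
    push_cast
    ring
  have hdown : ∀ j ∈ Finset.range k, ‖f (k - 1 - j)‖ = C * a j := by
    intro j hj
    have hj := Finset.mem_range.1 hj
    rw [hN', hadef]
    have : ((k - 1 - j : ℕ) : ℝ) = k - 1 - j := by
      rw [Nat.cast_sub (by omega), Nat.cast_sub hk]; simp
    rw [this]
    congr 2
    ring
  have hS : Summable (fun j => ‖f j‖) := by
    rw [← summable_nat_add_iff (k + 1)]
    simp only [hup]
    exact ha.mul_left C
  have hk0 : ‖f k‖ = C := by rw [hN']; simp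
  have htot : ∑' j, ‖f j‖ = C * ∑ i ∈ Finset.range k, a i + C + C * ∑' i, a i := by
    rw [← hS.sum_add_tsum_nat_add (k + 1), Finset.sum_range_succ, hk0]
    simp only [hup]
    rw [tsum_mul_left, ← Finset.sum_range_reflect, Finset.sum_congr rfl hdown, Finset.mul_sum]
  have hlt : ∑ i ∈ Finset.range k, a i < ∑' i, a i := by
    have h := ha.sum_le_tsum (Finset.range (k + 1)) (fun i _ => (hapos i).le)
    rw [Finset.sum_range_succ] at h
    linarith [hapos k]
  have hsplit := pt_split (fun j => ‖f j‖) hS k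
  have hmain : (∑' j : {j : ℕ // j ≠ k}, ‖f j‖) < ‖f k‖ := by
    have hs : 2 * ∑' i, a i ≤ 1 := hsum
    simp only [hk0] at hsplit ⊢
    nlinarith
  refine ⟨by rw [mul_comm (x ^ k)]; exact hmain, fun h0 => ?_⟩
  have h1 := pt_split f hS.of_norm k
  rw [h0] at h1
  have h2 : ‖f k‖ = ‖∑' j : {j : ℕ // j ≠ k}, f j‖ := by
    rw [eq_neg_of_add_eq_zero_left h1, norm_neg]
  have h3 : ‖∑' j : {j : ℕ // j ≠ k}, f j‖ ≤ ∑' j : {j : ℕ // j ≠ k}, ‖f j‖ :=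
    norm_tsum_le_tsum_norm (hS.subtype _)
  linarith
end

section
/- Suppose b > 1 and q ∈ ℂ with 0 < |q| ≤ 1 - 1/b. Then the infinite product Q := Π_{m=1}^∞ (1 - q^m) satisfies |Q| ≥ e^{(π²/6)(1-b)}. -/
theorem Q_aux_pow (r : ℝ) (h0 : 0 ≤ r) (h1 : r < 1) (k : ℕ) :
    (1 - r) * ((k + 1) * r ^ k) ≤ 1 - r ^ (k + 1) := by
  have h := mul_neg_geom_sum r (k + 1)
  rw [← h]
  refine mul_le_mul_of_nonneg_left ?_ (by linarith)
  have : ∑ i ∈ Finset.range (k + 1), r ^ k ≤ ∑ i ∈ Finset.range (k + 1), r ^ i := by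
    refine Finset.sum_le_sum fun i hi => ?_
    exact pow_le_pow_of_le_one h0 h1.le (by have := Finset.mem_range.1 hi; omega)
  simpa using this

theorem Q_aux_sum (b r : ℝ) (h0 : 0 < r) (h1 : r < 1) (hb : r ≤ (1 - r) * (b - 1))
    (k N : ℕ) :
    ∑ m ∈ Finset.range N, (r ^ (m + 1)) ^ (k + 1) / ((k : ℝ) + 1)
      ≤ (b - 1) * (1 / ((k : ℝ) + 1) ^ 2) := by
  have hx1 : r ^ (k + 1) < 1 := pow_lt_one₀ h0.le h1 (by omega)
  have hx0 : 0 < r ^ (k + 1) := pow_pos h0 _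
  have hk : (0 : ℝ) < (k : ℝ) + 1 := by positivity
  have hb1 : 0 ≤ b - 1 := by
    by_contra hcon
    push Not at hcon
    nlinarith
  have hS : ∑ m ∈ Finset.range N, (r ^ (m + 1)) ^ (k + 1)
      = r ^ (k + 1) * ∑ m ∈ Finset.range N, (r ^ (k + 1)) ^ m := by
    rw [Finset.mul_sum]
    refine Finset.sum_congr rfl fun m _ => ?_
    ring
  have hg := mul_neg_geom_sum (r ^ (k + 1)) N
  have hp := Q_aux_pow r h0.le h1 k
  have key : r ^ (k + 1) * (k + 1) ≤ (1 - r ^ (k + 1)) * (b - 1) := by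
    calc r ^ (k + 1) * ((k : ℝ) + 1) = r * ((k + 1) * r ^ k) := by ring
      _ ≤ ((1 - r) * (b - 1)) * ((k + 1) * r ^ k) :=
        mul_le_mul_of_nonneg_right hb (by positivity)
      _ = ((1 - r) * ((k + 1) * r ^ k)) * (b - 1) := by ring
      _ ≤ _ := mul_le_mul_of_nonneg_right hp hb1
  rw [← Finset.sum_div, hS]
  set x := r ^ (k + 1) with hx
  set G := ∑ m ∈ Finset.range N, x ^ m with hG
  have hG1 : (1 - x) * G ≤ 1 := by
    rw [hg]
    have : 0 ≤ x ^ N := by positivity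
    linarith
  have h2 : x * G * (k + 1) ≤ b - 1 := by
    have h3 : (1 - x) * (x * G * (k + 1)) ≤ (1 - x) * (b - 1) := by
      calc (1 - x) * (x * G * ((k : ℝ) + 1)) = (x * (k + 1)) * ((1 - x) * G) := by ring
        _ ≤ (x * (k + 1)) * 1 := mul_le_mul_of_nonneg_left hG1 (by positivity)
        _ ≤ _ := by linarith
    exact le_of_mul_le_mul_left h3 (by linarith)
  rw [mul_one_div, div_le_div_iff₀ hk (by positivity)]
  nlinarith

/-- For `b > 1` and `0 < |q| ≤ 1 - 1/b`, the product `Q = ∏_{m=1}^∞ (1 - q^m)` satisfies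
`|Q| ≥ e^{(π²/6)(1-b)}`. -/
theorem Q_lower_bound (b : ℝ) (hb : 1 < b) (q : ℂ) (hq0 : 0 < ‖q‖) (hq : ‖q‖ ≤ 1 - 1 / b) :
    Real.exp ((Real.pi ^ 2 / 6) * (1 - b)) ≤ ‖∏' m : ℕ, (1 - q ^ (m + 1))‖ := by
  have hbi : 0 < 1 / b := by positivity
  have h1 : ‖q‖ < 1 := by linarith
  have hbb : 1 / b * b = 1 := by field_simp
  have hr : ‖q‖ ≤ (1 - ‖q‖) * (b - 1) := by nlinarith
  have hT := (ModularForm.multipliable_one_sub_pow h1).hasProd.tendsto_prod_nat.norm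
  refine ge_of_tendsto' hT fun N => ?_
  rw [norm_prod]
  have hpos : ∀ m : ℕ, 0 < 1 - ‖q‖ ^ (m + 1) := fun m => by
    have : ‖q‖ ^ (m + 1) < 1 := pow_lt_one₀ hq0.le h1 (by omega)
    linarith
  have hle : ∏ m ∈ Finset.range N, (1 - ‖q‖ ^ (m + 1))
      ≤ ∏ m ∈ Finset.range N, ‖1 - q ^ (m + 1)‖ := by
    refine Finset.prod_le_prod (fun m _ => (hpos m).le) fun m _ => ?_
    have := norm_sub_norm_le (1 : ℂ) (q ^ (m + 1))
    simpa using this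
  refine le_trans ?_ hle
  rw [← Real.le_log_iff_exp_le (Finset.prod_pos fun m _ => hpos m),
    Real.log_prod (fun m _ => (hpos m).ne')]
  have hs : HasSum (fun k : ℕ => ∑ m ∈ Finset.range N,
      (‖q‖ ^ (m + 1)) ^ (k + 1) / ((k : ℝ) + 1))
      (∑ m ∈ Finset.range N, -Real.log (1 - ‖q‖ ^ (m + 1))) := by
    refine hasSum_sum fun m _ => ?_
    refine Real.hasSum_pow_div_log_of_abs_lt_one ?_
    rw [abs_of_nonneg (by positivity)]
    linarith [hpos m]
  have hz : HasSum (fun k : ℕ => (1 : ℝ) / ((k : ℝ) + 1) ^ 2) (Real.pi ^ 2 / 6) := by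
    have := (hasSum_nat_add_iff' 1).2 hasSum_zeta_two
    simpa using this
  have := hasSum_le (fun k => Q_aux_sum b ‖q‖ hq0 h1 hr k N) hs (hz.mul_left (b - 1))
  rw [Finset.sum_neg_distrib] at this
  linarith
end

section
/- Suppose b > 1, q ∈ ℂ with 0 < |q| ≤ 1 - 1/b, and x ∈ ℂ with |x| > 1. Then the infinite product R := Π_{m=1}^∞ (1 + q^{m-1}/x) satisfies |R| ≥ (1 - 1/|x|) · e^{(π²/6)(1-b)}. -/
theorem aux_term (r : ℝ) (h0 : 0 < r) (h1 : r < 1) (n N : ℕ) :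
    ∑ k ∈ Finset.range N, (r ^ (k + 1)) ^ (n + 1) / ((n : ℝ) + 1)
      ≤ r / (1 - r) * (1 / ((n + 1 : ℕ) : ℝ) ^ 2) := by
  have hr : 0 < 1 - r := by linarith
  have hn : (0 : ℝ) < (n : ℝ) + 1 := by positivity
  set t := r ^ (n + 1) with ht
  have ht0 : 0 < t := by positivity
  have ht1 : t < 1 := pow_lt_one₀ h0.le h1 (by omega)
  have ht1' : 0 < 1 - t := by linarith
  have e1 : ∀ k, (r ^ (k + 1)) ^ (n + 1) / ((n : ℝ) + 1) = t / ((n : ℝ) + 1) * t ^ k := by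
    intro k
    rw [ht, ← pow_mul, mul_comm (k + 1), pow_mul, pow_succ _ k]
    ring
  simp_rw [e1]
  rw [← Finset.mul_sum]
  have h2 : (∑ k ∈ Finset.range N, t ^ k) * (1 - t) = 1 - t ^ N := geom_sum_mul_neg t N
  have h3 : (∑ k ∈ Finset.range N, t ^ k) ≤ 1 / (1 - t) := by
    rw [le_div_iff₀ ht1', h2]
    linarith [pow_pos ht0 N]
  have h4 : (∑ k ∈ Finset.range (n + 1), r ^ k) * (1 - r) = 1 - t := geom_sum_mul_neg r (n + 1)
  have h5 : ((n : ℝ) + 1) * r ^ n ≤ ∑ k ∈ Finset.range (n + 1), r ^ k := by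
    have := Finset.card_nsmul_le_sum (Finset.range (n + 1)) (fun k => r ^ k) (r ^ n)
      (fun k hk => pow_le_pow_of_le_one h0.le h1.le (by simp at hk; omega))
    simpa using this
  have h6 : t * (1 - r) * ((n : ℝ) + 1) ≤ r * (1 - t) := by
    rw [← h4]
    have := mul_le_mul_of_nonneg_left h5 (mul_pos h0 hr).le
    calc t * (1 - r) * ((n : ℝ) + 1) = r * (1 - r) * (((n : ℝ) + 1) * r ^ n) := by
          rw [ht, pow_succ]; ring
      _ ≤ _ := this
      _ = _ := by ring
  calc t / ((n : ℝ) + 1) * ∑ k ∈ Finset.range N, t ^ k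
      ≤ t / ((n : ℝ) + 1) * (1 / (1 - t)) := by gcongr
    _ ≤ r / (1 - r) * (1 / ((n + 1 : ℕ) : ℝ) ^ 2) := by
      push_cast
      rw [div_mul_div_comm, div_mul_div_comm, div_le_div_iff₀ (by positivity) (by positivity)]
      have := mul_le_mul_of_nonneg_right h6 hn.le
      nlinarith

theorem aux_prod (r : ℝ) (h0 : 0 < r) (h1 : r < 1) (N : ℕ) :
    Real.exp (-(r / (1 - r) * (Real.pi ^ 2 / 6))) ≤ ∏ k ∈ Finset.range N, (1 - r ^ (k + 1)) := by
  have hlt : ∀ k, r ^ (k + 1) < 1 := fun k => pow_lt_one₀ h0.le h1 (by omega)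
  have hpos : ∀ k, 0 < 1 - r ^ (k + 1) := fun k => by linarith [hlt k]
  have hs : HasSum (fun n : ℕ => ∑ k ∈ Finset.range N, (r ^ (k + 1)) ^ (n + 1) / ((n : ℝ) + 1))
      (∑ k ∈ Finset.range N, -Real.log (1 - r ^ (k + 1))) := by
    apply hasSum_sum
    intro k _
    apply Real.hasSum_pow_div_log_of_abs_lt_one
    rw [abs_of_pos (by positivity)]
    exact hlt k
  have hz : HasSum (fun n : ℕ => 1 / ((n + 1 : ℕ) : ℝ) ^ 2) (Real.pi ^ 2 / 6) := by
    have := (hasSum_nat_add_iff' 1).2 hasSum_zeta_two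
    simpa using this
  have hle := hasSum_le (fun n => aux_term r h0 h1 n N) hs (hz.mul_left (r / (1 - r)))
  rw [← Real.le_log_iff_exp_le (Finset.prod_pos fun k _ => hpos k),
    Real.log_prod (fun k _ => (hpos k).ne')]
  rw [Finset.sum_neg_distrib] at hle
  linarith

/-- For `b > 1`, `0 < |q| ≤ 1 - 1/b` and `|x| > 1`, the product
`R = ∏_{m=1}^∞ (1 + q^{m-1}/x)` satisfies `|R| ≥ (1 - 1/|x|) e^{(π²/6)(1-b)}`. -/
theorem R_lower_bound (b : ℝ) (hb : 1 < b) (q : ℂ) (hq0 : 0 < ‖q‖) (hq : ‖q‖ ≤ 1 - 1 / b)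
    (x : ℂ) (hx : 1 < ‖x‖) :
    (1 - 1 / ‖x‖) * Real.exp ((Real.pi ^ 2 / 6) * (1 - b))
      ≤ ‖∏' m : ℕ, (1 + q ^ m / x)‖ := by
  have hb0 : 0 < b := by linarith
  have hq1 : ‖q‖ < 1 := by
    have : 0 < 1 / b := by positivity
    linarith
  have hx0 : 0 < ‖x‖ := by linarith
  have hx1 : 1 / ‖x‖ < 1 := by rw [div_lt_one hx0]; exact hx
  have hm : Multipliable (fun m : ℕ => 1 + q ^ m / x) := by
    apply multipliable_one_add_of_summable
    simp only [norm_div, norm_pow]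
    exact (summable_geometric_of_lt_one hq0.le hq1).div_const _
  have ht := ((hm.hasProd.tendsto_prod_nat).comp (Filter.tendsto_add_atTop_nat 1)).norm
  refine ge_of_tendsto' ht fun N => ?_
  simp only [Function.comp]
  rw [norm_prod, Finset.prod_range_succ', mul_comm]
  have hterm : ∀ m : ℕ, 1 - ‖q‖ ^ m / ‖x‖ ≤ ‖1 + q ^ m / x‖ := by
    intro m
    have := norm_sub_le_norm_add (1 : ℂ) (q ^ m / x)
    simpa using this
  have hr : ‖q‖ / (1 - ‖q‖) ≤ b - 1 := by
    rw [div_le_iff₀ (by linarith)]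
    have : ‖q‖ * b ≤ (1 - 1 / b) * b := mul_le_mul_of_nonneg_right hq hb0.le
    have h2 : (1 - 1 / b) * b = b - 1 := by field_simp
    nlinarith
  apply mul_le_mul _ _ (by linarith) (by positivity)
  · calc Real.exp ((Real.pi ^ 2 / 6) * (1 - b))
        ≤ Real.exp (-(‖q‖ / (1 - ‖q‖) * (Real.pi ^ 2 / 6))) := by
          apply Real.exp_le_exp.2
          have := mul_le_mul_of_nonneg_right hr (by positivity : 0 ≤ Real.pi ^ 2 / 6)
          linarith
      _ ≤ ∏ k ∈ Finset.range N, (1 - ‖q‖ ^ (k + 1)) := aux_prod _ hq0 hq1 N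
      _ ≤ _ := by
          apply Finset.prod_le_prod
          · intro k _
            linarith [pow_le_one₀ (n := k + 1) hq0.le hq1.le]
          · intro k _
            refine le_trans ?_ (hterm (k + 1))
            have := div_le_self (pow_nonneg hq0.le (k + 1)) hx.le
            linarith
  · simpa using hterm 0
end

section
/- Let n ≥ 3 be an integer, let q ∈ ℂ with 1 - 1/(n-1) ≤ |q| ≤ 1 - 1/n, and let x ∈ ℂ with |x| > 8^11 be a point lying outside all open disks D(μ_i, 1/(2n)), i ∈ ℕ, i ≥ 1, where μ_i := -q^{-i}. Let κ be the least positive integer m with |x q^m| < 1. Then |x q^κ + 1| · |x q + 1| · |x q² + 1| ≥ (1 - |x|^{-1/2})² / (2n) and |x q^{κ-1} + 1| · |x q³ + 1| · |x q⁴ + 1| ≥ (1 - |x|^{-1/2})² / (2n). -/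
/-- Part (C) of the proof: for `x` with `|x| > 8^11` lying outside all open disks
`D(μ_i, 1/(2n))`, `μ_i = -q^{-i}`, the stated products of factors `|x q^m + 1|` are bounded
below by `(1 - |x|^{-1/2})² / (2n)`. -/
theorem factor_products_lower_bound (n : ℕ) (hn : 3 ≤ n) (q : ℂ)
    (hq1 : 1 - 1 / ((n : ℝ) - 1) ≤ ‖q‖) (hq2 : ‖q‖ ≤ 1 - 1 / (n : ℝ))
    (x : ℂ) (hx : (8 : ℝ) ^ 11 < ‖x‖)
    (hout : ∀ i : ℕ, 1 ≤ i → 1 / (2 * (n : ℝ)) ≤ ‖x - (-q ^ (-(i : ℤ)))‖)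
    (κ : ℕ) (hκ : IsLeast {m : ℕ | 1 ≤ m ∧ ‖x * q ^ m‖ < 1} κ) :
    (1 - ‖x‖ ^ (-(1 / 2) : ℝ)) ^ 2 / (2 * (n : ℝ))
        ≤ ‖x * q ^ κ + 1‖ * ‖x * q + 1‖ * ‖x * q ^ 2 + 1‖ ∧
      (1 - ‖x‖ ^ (-(1 / 2) : ℝ)) ^ 2 / (2 * (n : ℝ))
        ≤ ‖x * q ^ (κ - 1) + 1‖ * ‖x * q ^ 3 + 1‖ * ‖x * q ^ 4 + 1‖ := by
  have hn' : (3 : ℝ) ≤ n := by exact_mod_cast hn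
  have hx0 : (0 : ℝ) < ‖x‖ := lt_trans (by norm_num) hx
  have hx' : (8589934592 : ℝ) < ‖x‖ := by norm_num at hx; exact hx
  have hqh : 1 / 2 ≤ ‖q‖ := by
    have : 1 / ((n : ℝ) - 1) ≤ 1 / 2 := one_div_le_one_div_of_le (by norm_num) (by linarith)
    linarith
  have hq0 : q ≠ 0 := by
    intro h
    rw [h, norm_zero] at hqh
    linarith
  -- general lower bound for a factor from the disk condition
  have key : ∀ m : ℕ, 1 ≤ m → ‖q‖ ^ m / (2 * (n : ℝ)) ≤ ‖x * q ^ m + 1‖ := by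
    intro m hm
    have h1 : x * q ^ m + 1 = q ^ m * (x - (-q ^ (-(m : ℤ)))) := by
      rw [zpow_neg, zpow_natCast]
      field_simp
      ring
    rw [h1, norm_mul, norm_pow]
    have := mul_le_mul_of_nonneg_left (hout m hm) (pow_nonneg (norm_nonneg q) m)
    rwa [mul_one_div] at this
  have low : ∀ m : ℕ, ‖x‖ * (1 / 2) ^ m - 1 ≤ ‖x * q ^ m + 1‖ := by
    intro m
    have h1 : ‖x * q ^ m‖ ≤ ‖x * q ^ m + 1‖ + 1 := by
      have := norm_sub_le (x * q ^ m + 1) 1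
      simpa using this
    rw [norm_mul, norm_pow] at h1
    have h2 : (1 / 2 : ℝ) ^ m ≤ ‖q‖ ^ m := pow_le_pow_left₀ (by norm_num) hqh m
    have h3 := mul_le_mul_of_nonneg_left h2 hx0.le
    linarith
  obtain ⟨⟨hk1, hk2⟩, hk3⟩ := hκ
  have hk : 2 ≤ κ := by
    by_contra h
    have h1 : κ = 1 := by omega
    rw [h1, pow_one, norm_mul] at hk2
    nlinarith
  have hmin : 1 ≤ ‖x‖ * ‖q‖ ^ (κ - 1) := by
    by_contra h
    push Not at h
    have h1 : κ ≤ κ - 1 := hk3 ⟨by omega, by rw [norm_mul, norm_pow]; exact h⟩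
    omega
  have hA : 1 / ‖x‖ ≤ ‖q‖ ^ (κ - 1) := by
    rw [div_le_iff₀ hx0]; linarith
  have hB : (1 / ‖x‖) / 2 ≤ ‖q‖ ^ κ := by
    have h1 : ‖q‖ ^ κ = ‖q‖ ^ (κ - 1) * ‖q‖ := by
      rw [← pow_succ]; congr 1; omega
    rw [h1]
    have h2 : 0 < 1 / ‖x‖ := by positivity
    nlinarith
  have hs : (1 - ‖x‖ ^ (-(1 / 2) : ℝ)) ^ 2 ≤ 1 := by
    have h0 : 0 ≤ ‖x‖ ^ (-(1 / 2) : ℝ) := Real.rpow_nonneg hx0.le _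
    have h1 : ‖x‖ ^ (-(1 / 2) : ℝ) ≤ 1 :=
      Real.rpow_le_one_of_one_le_of_nonpos (by linarith) (by norm_num)
    nlinarith
  have fin : ∀ a b c : ℝ, (1 / ‖x‖) / 2 / (2 * (n : ℝ)) ≤ a → ‖x‖ / 8 - 1 ≤ b →
      ‖x‖ / 16 - 1 ≤ c → (1 - ‖x‖ ^ (-(1 / 2) : ℝ)) ^ 2 / (2 * (n : ℝ)) ≤ a * b * c := by
    intro a b c ha hb hc
    have hb' : ‖x‖ / 16 ≤ b := by linarith
    have hc' : (32 : ℝ) ≤ c := by linarith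
    calc (1 - ‖x‖ ^ (-(1 / 2) : ℝ)) ^ 2 / (2 * (n : ℝ)) ≤ 1 / (2 * (n : ℝ)) := by gcongr
      _ = (1 / ‖x‖) / 2 / (2 * (n : ℝ)) * (‖x‖ / 16) * 32 := by field_simp; norm_num
      _ ≤ a * b * c := by
        have ha0 : 0 ≤ a := le_trans (by positivity) ha
        have hb0 : 0 ≤ b := le_trans (by positivity) hb'
        gcongr
  constructor
  · refine fin _ _ _ (le_trans ?_ (key κ hk1)) ?_ ?_
    · gcongr
    · have := low 1
      rw [pow_one, pow_one] at this
      linarith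
    · have := low 2
      linarith
  · refine fin _ _ _ (le_trans ?_ (key (κ - 1) (by omega))) ?_ ?_
    · have h2 : 0 < 1 / ‖x‖ := by positivity
      have : (1 / ‖x‖) / 2 ≤ ‖q‖ ^ (κ - 1) := by linarith
      gcongr
    · have := low 3
      linarith
    · have := low 4
      linarith
end

section
/- Let n ≥ 3 be an integer and let q ∈ ℂ with 1 - 1/(n-1) ≤ |q| ≤ 1 - 1/n. Suppose s ∈ ℕ, s ≥ 1, is such that the circle C(μ_s, 1/(2n)) about μ_s := -q^{-s} of radius 1/(2n) is contained in the set {x ∈ ℂ : |x| > 8^11}. Then at every point x of this circle one has |Θ*(q,x)| > 1 > 1/(8^11 - 1) ≥ |G(q,x)|, where Θ*(q,x) := Σ_{j=-∞}^{∞} q^{j(j+1)/2} x^j and G(q,x) := Σ_{j=-∞}^{-1} q^{j(j+1)/2} x^j. -/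
open Filter Topology

/-- Partial products of the Euler function. -/
noncomputable def eulP (q : ℂ) (N : ℕ) : ℂ := ∏ i ∈ Finset.range N, (1 - q ^ (i + 1))

lemma eulP_succ (q : ℂ) (N : ℕ) : eulP q (N + 1) = eulP q N * (1 - q ^ (N + 1)) := by
  simp [eulP, Finset.prod_range_succ]

lemma one_sub_pow_ne {q : ℂ} (hq : ‖q‖ < 1) (i : ℕ) : (1 - q ^ (i + 1)) ≠ 0 := by
  intro h
  have h1 : q ^ (i + 1) = 1 := (sub_eq_zero.mp h).symm
  have h2 : ‖q‖ ^ (i + 1) = 1 := by rw [← norm_pow, h1, norm_one]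
  have h3 : ‖q‖ ^ (i + 1) < 1 := pow_lt_one₀ (norm_nonneg _) hq (by omega)
  linarith

lemma eulP_ne {q : ℂ} (hq : ‖q‖ < 1) (N : ℕ) : eulP q N ≠ 0 :=
  Finset.prod_ne_zero_iff.mpr fun i _ => one_sub_pow_ne hq i

lemma rothe {q : ℂ} (hq : ‖q‖ < 1) (z : ℂ) (M : ℕ) :
    ∏ k ∈ Finset.range M, (1 + z * q ^ k) =
      eulP q M * ∑ p ∈ Finset.HasAntidiagonal.antidiagonal M,
        (q ^ (p.1.choose 2) * z ^ p.1 / eulP q p.1) * (1 / eulP q p.2) := by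
  induction M with
  | zero => simp [eulP]
  | succ M ih =>
    rw [Finset.prod_range_succ, ih, eulP_succ, mul_assoc, mul_assoc]
    congr 1
    set u : ℕ → ℂ := fun i => q ^ (i.choose 2) * z ^ i / eulP q i with hu
    set v : ℕ → ℂ := fun i => 1 / eulP q i with hv
    have hus : ∀ i, (1 - q ^ (i + 1)) * u (i + 1) = q ^ i * z * u i := by
      intro i
      simp only [hu, eulP_succ]
      have h1 := one_sub_pow_ne hq i
      have h2 := eulP_ne hq i
      have : (i + 1).choose 2 = i + i.choose 2 := by
        rw [Nat.choose_succ_succ' i 1, Nat.choose_one_right]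
      rw [this]
      field_simp
      ring
    have hvs : ∀ i, (1 - q ^ (i + 1)) * v (i + 1) = v i := by
      intro i
      simp only [hv, eulP_succ]
      have h1 := one_sub_pow_ne hq i
      have h2 := eulP_ne hq i
      field_simp
    change (∑ p ∈ Finset.HasAntidiagonal.antidiagonal M, u p.1 * v p.2) * (1 + z * q ^ M) =
      (1 - q ^ (M + 1)) * ∑ p ∈ Finset.HasAntidiagonal.antidiagonal (M + 1), u p.1 * v p.2
    have e1 : (1 - q ^ (M + 1)) * ∑ p ∈ Finset.HasAntidiagonal.antidiagonal (M + 1), u p.1 * v p.2 =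
        ∑ p ∈ Finset.HasAntidiagonal.antidiagonal (M + 1), u p.1 * ((1 - q ^ p.2) * v p.2) +
        ∑ p ∈ Finset.HasAntidiagonal.antidiagonal (M + 1), ((1 - q ^ p.1) * u p.1) * (q ^ p.2 * v p.2) := by
      rw [Finset.mul_sum, ← Finset.sum_add_distrib]
      refine Finset.sum_congr rfl fun p hp => ?_
      rw [Finset.HasAntidiagonal.mem_antidiagonal] at hp
      rw [← hp, pow_add]; ring
    have e2 : ∑ p ∈ Finset.HasAntidiagonal.antidiagonal (M + 1), u p.1 * ((1 - q ^ p.2) * v p.2) =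
        ∑ p ∈ Finset.HasAntidiagonal.antidiagonal M, u p.1 * v p.2 := by
      rw [Finset.Nat.sum_antidiagonal_succ']
      simp [hvs]
    have e3 : ∑ p ∈ Finset.HasAntidiagonal.antidiagonal (M + 1), ((1 - q ^ p.1) * u p.1) * (q ^ p.2 * v p.2) =
        (z * q ^ M) * ∑ p ∈ Finset.HasAntidiagonal.antidiagonal M, u p.1 * v p.2 := by
      rw [Finset.Nat.sum_antidiagonal_succ, Finset.mul_sum]
      simp only [hus, pow_zero, sub_self, zero_mul, zero_add]
      refine Finset.sum_congr rfl fun p hp => ?_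
      rw [Finset.HasAntidiagonal.mem_antidiagonal] at hp
      rw [← hp, pow_add]; ring
    rw [e1, e2, e3]; ring

lemma two_choose_int (i : ℕ) : 2 * ((i.choose 2 : ℕ) : ℤ) = (i : ℤ) * (i - 1) := by
  induction i with
  | zero => simp
  | succ i ih =>
    rw [Nat.choose_succ_succ' i 1, Nat.choose_one_right]
    push_cast
    linarith

lemma two_tri_int (j : ℤ) : 2 * (j * (j + 1) / 2) = j * (j + 1) :=
  Int.mul_ediv_cancel' (Int.even_mul_succ_self j).two_dvd

/-- The terms of the finite triple product. -/
noncomputable def tpTerm (q x : ℂ) (N : ℕ) (j : ℤ) : ℂ :=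
  if j ∈ Finset.Icc (-(N : ℤ)) N then
    eulP q N * eulP q (2 * N) / (eulP q (N + j).toNat * eulP q (N - j).toNat) *
      (q ^ (j * (j + 1) / 2) * x ^ j) else 0

lemma prod_first {q x : ℂ} (hq0 : q ≠ 0) (hx : x ≠ 0) (N : ℕ) :
    ∏ k ∈ Finset.range N, (1 + x * q ^ (1 - (N : ℤ)) * q ^ k) =
      x ^ N * q ^ (-((N.choose 2 : ℕ) : ℤ)) * ∏ k ∈ Finset.range N, (1 + q ^ k / x) := by
  rw [← Finset.prod_range_reflect]
  have h1 : ∀ k ∈ Finset.range N, (1 + x * q ^ (1 - (N : ℤ)) * q ^ (N - 1 - k)) =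
      (x * q ^ (-(k : ℤ))) * (1 + q ^ k / x) := by
    intro k hk
    rw [Finset.mem_range] at hk
    have : (q ^ (1 - (N : ℤ)) * q ^ (N - 1 - k) : ℂ) = q ^ (-(k : ℤ)) := by
      rw [← zpow_natCast, ← zpow_add₀ hq0]
      congr 1
      omega
    rw [mul_assoc, this, zpow_neg, zpow_natCast]
    field_simp
    ring
  rw [Finset.prod_congr rfl h1, Finset.prod_mul_distrib]
  congr 1
  clear h1
  induction N with
  | zero => simp
  | succ N ih =>
    rw [Finset.prod_range_succ, ih, Nat.choose_succ_succ' N 1, Nat.choose_one_right]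
    push_cast
    rw [neg_add, zpow_add₀ hq0]
    ring

lemma finite_tp {q x : ℂ} (hq : ‖q‖ < 1) (hq0 : q ≠ 0) (hx : x ≠ 0) (N : ℕ) :
    ∑' j : ℤ, tpTerm q x N j = eulP q N * (∏ k ∈ Finset.range N, (1 + x * q ^ (k + 1))) *
      ∏ k ∈ Finset.range N, (1 + q ^ k / x) := by
  have hr := rothe hq (x * q ^ (1 - (N : ℤ))) (N + N)
  rw [Finset.prod_range_add, prod_first hq0 hx] at hr
  have h2 : ∀ k ∈ Finset.range N, (1 + x * q ^ (1 - (N : ℤ)) * q ^ (N + k)) =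
      1 + x * q ^ (k + 1) := by
    intro k _
    have : (q ^ (1 - (N : ℤ)) * q ^ (N + k) : ℂ) = q ^ (k + 1) := by
      rw [← zpow_natCast, ← zpow_natCast, ← zpow_add₀ hq0]
      congr 1
      push_cast; ring
    rw [mul_assoc, this]
  rw [Finset.prod_congr rfl h2] at hr
  set A := ∏ k ∈ Finset.range N, (1 + x * q ^ (k + 1))
  set B := ∏ k ∈ Finset.range N, (1 + q ^ k / x)
  rw [tsum_eq_sum (s := Finset.Icc (-(N : ℤ)) N) (fun j hj => by simp only [tpTerm, if_neg hj])]
  set D : ℂ := x ^ N * q ^ (-((N.choose 2 : ℕ) : ℤ)) with hD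
  have hD0 : D ≠ 0 := mul_ne_zero (pow_ne_zero _ hx) (zpow_ne_zero _ hq0)
  apply mul_left_cancel₀ hD0
  have : D * (eulP q N * A * B) = eulP q N * (D * B * A) := by ring
  rw [this, hr, ← mul_assoc, Finset.mul_sum, Finset.mul_sum]
  symm
  refine Finset.sum_bij (fun p _ => (p.1 : ℤ) - N) ?_ ?_ ?_ ?_
  · intro p hp
    rw [Finset.HasAntidiagonal.mem_antidiagonal] at hp
    rw [Finset.mem_Icc]; omega
  · intro p hp p' hp' h
    rw [Finset.HasAntidiagonal.mem_antidiagonal] at hp hp'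
    ext <;> omega
  · intro j hj
    rw [Finset.mem_Icc] at hj
    refine ⟨((N + j).toNat, (N - j).toNat), ?_, ?_⟩
    · rw [Finset.HasAntidiagonal.mem_antidiagonal]; omega
    · simp only; omega
  · rintro ⟨i, k⟩ hp
    rw [Finset.HasAntidiagonal.mem_antidiagonal] at hp
    simp only at hp
    have hmem : (i : ℤ) - N ∈ Finset.Icc (-(N : ℤ)) N := by rw [Finset.mem_Icc]; omega
    have e1 : ((N : ℤ) + ((i : ℤ) - N)).toNat = i := by omega
    have e2 : ((N : ℤ) - ((i : ℤ) - N)).toNat = k := by omega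
    simp only [tpTerm, if_pos hmem, e1, e2]
    have hk : (q ^ (i.choose 2) * (x * q ^ (1 - (N : ℤ))) ^ i : ℂ) =
        D * (q ^ (((i : ℤ) - N) * ((i : ℤ) - N + 1) / 2) * x ^ ((i : ℤ) - N)) := by
      rw [hD, mul_pow, ← zpow_natCast (q ^ (1 - (N : ℤ))), ← zpow_mul]
      have hx1 : x ^ i = x ^ N * x ^ ((i : ℤ) - N) := by
        rw [← zpow_natCast, ← zpow_natCast, ← zpow_add₀ hx]; congr 1; ring
      have hq1 : (q ^ (i.choose 2) * q ^ ((1 - (N : ℤ)) * i) : ℂ) =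
          q ^ (-((N.choose 2 : ℕ) : ℤ)) * q ^ (((i : ℤ) - N) * ((i : ℤ) - N + 1) / 2) := by
        rw [← zpow_natCast, ← zpow_add₀ hq0, ← zpow_add₀ hq0]
        congr 1
        have a1 := two_choose_int i
        have a2 := two_choose_int N
        have a3 := two_tri_int ((i : ℤ) - N)
        apply mul_left_cancel₀ (two_ne_zero : (2 : ℤ) ≠ 0)
        linear_combination a1 + a2 - a3
      rw [hx1]
      linear_combination (x ^ N * x ^ ((i : ℤ) - N)) * hq1
    rw [hk, two_mul N]
    have h1 := eulP_ne hq i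
    have h2 := eulP_ne hq k
    field_simp

lemma eulP_tendsto {q : ℂ} (hq : ‖q‖ < 1) :
    ∃ P : ℂ, P ≠ 0 ∧ Tendsto (eulP q) atTop (𝓝 P) := by
  have hs : Summable (fun i : ℕ => ‖-q ^ (i + 1)‖) := by
    simp only [norm_neg, norm_pow]
    exact (summable_nat_add_iff 1).mpr (summable_geometric_of_lt_one (norm_nonneg _) hq)
  refine ⟨∏' i : ℕ, (1 + -q ^ (i + 1)), ?_, ?_⟩
  · refine tprod_one_add_ne_zero_of_summable (fun i => ?_) hs
    rw [← sub_eq_add_neg]; exact one_sub_pow_ne hq i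
  · have := (multipliable_one_add_of_summable hs).hasProd.tendsto_prod_nat
    refine this.congr fun N => ?_
    simp only [eulP, sub_eq_add_neg]

lemma summable_nat_part {a y : ℝ} (ha0 : 0 < a) (ha : a < 1) (hy : 0 < y) :
    Summable (fun j : ℕ => a ^ ((j : ℤ) * (j + 1) / 2) * y ^ (j : ℤ)) := by
  refine summable_of_ratio_test_tendsto_lt_one (l := 0) one_pos
    (Eventually.of_forall fun j => by positivity) ?_
  have : Tendsto (fun j : ℕ => a ^ (j + 1) * y) atTop (𝓝 (0 * y)) :=
    (((tendsto_pow_atTop_nhds_zero_of_lt_one ha0.le ha).comp (tendsto_add_atTop_nat 1))).mul_const y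
  rw [zero_mul] at this
  refine this.congr fun j => ?_
  have e : (((j + 1 : ℕ) : ℤ) * (((j + 1 : ℕ) : ℤ) + 1) / 2) = (j : ℤ) * (j + 1) / 2 + (j + 1 : ℕ) := by
    have a1 := two_tri_int ((j + 1 : ℕ) : ℤ)
    have a2 := two_tri_int (j : ℤ)
    apply mul_left_cancel₀ (two_ne_zero : (2 : ℤ) ≠ 0)
    push_cast at *
    linear_combination a1 - a2
  rw [e, zpow_add₀ ha0.ne']
  have h1 : 0 < a ^ ((j : ℤ) * (j + 1) / 2) := by positivity
  have h2 : 0 < y ^ j := by positivity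
  rw [Real.norm_of_nonneg (by positivity), Real.norm_of_nonneg (by positivity)]
  rw [zpow_natCast, zpow_natCast, zpow_natCast, pow_succ y]
  field_simp

lemma summable_int_part {a y : ℝ} (ha0 : 0 < a) (ha : a < 1) (hy : 0 < y) :
    Summable (fun j : ℤ => a ^ (j * (j + 1) / 2) * y ^ j) := by
  refine Summable.of_nat_of_neg (summable_nat_part ha0 ha hy) ?_
  refine (summable_nat_part ha0 ha (y := (a * y)⁻¹) (by positivity)).congr fun j => ?_
  have e : (-(j : ℤ) * (-(j : ℤ) + 1) / 2) = (j : ℤ) * (j + 1) / 2 + (-j) := by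
    have a1 := two_tri_int (-(j : ℤ))
    have a2 := two_tri_int (j : ℤ)
    apply mul_left_cancel₀ (two_ne_zero : (2 : ℤ) ≠ 0)
    linear_combination a1 - a2
  rw [e, zpow_add₀ ha0.ne', inv_zpow, mul_zpow, zpow_neg, zpow_neg]
  rw [mul_inv]; ring

lemma tp_tendsto {q x : ℂ} (hq : ‖q‖ < 1) (hq0 : q ≠ 0) (hx : x ≠ 0) :
    Tendsto (fun N : ℕ => eulP q N * (∏ k ∈ Finset.range N, (1 + x * q ^ (k + 1))) *
      ∏ k ∈ Finset.range N, (1 + q ^ k / x)) atTop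
      (𝓝 (∑' j : ℤ, q ^ (j * (j + 1) / 2) * x ^ j)) := by
  obtain ⟨P, hP0, hP⟩ := eulP_tendsto hq
  simp only [← finite_tp hq hq0 hx]
  obtain ⟨C, hC⟩ := hP.norm.bddAbove_range
  obtain ⟨C', hC'⟩ := (hP.inv₀ hP0).norm.bddAbove_range
  have hC : ∀ N, ‖eulP q N‖ ≤ C := fun N => hC ⟨N, rfl⟩
  have hC' : ∀ N, ‖(eulP q N)⁻¹‖ ≤ C' := fun N => hC' ⟨N, rfl⟩
  have hC0 : 0 ≤ C := (norm_nonneg _).trans (hC 0)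
  have hC0' : 0 ≤ C' := (norm_nonneg _).trans (hC' 0)
  refine tendsto_tsum_of_dominated_convergence
    (bound := fun j : ℤ => (C * C * (C' * C')) * (‖q‖ ^ (j * (j + 1) / 2) * ‖x‖ ^ j)) ?_ ?_ ?_
  · exact (summable_int_part (norm_pos_iff.mpr hq0) hq (norm_pos_iff.mpr hx)).mul_left _
  · intro j
    have h1 : Tendsto (fun N : ℕ => eulP q ((N : ℤ) + j).toNat) atTop (𝓝 P) := by
      refine hP.comp (tendsto_atTop.mpr fun b => ?_)
      filter_upwards [eventually_ge_atTop (b + j.natAbs)] with N hN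
      omega
    have h2 : Tendsto (fun N : ℕ => eulP q ((N : ℤ) - j).toNat) atTop (𝓝 P) := by
      refine hP.comp (tendsto_atTop.mpr fun b => ?_)
      filter_upwards [eventually_ge_atTop (b + j.natAbs)] with N hN
      omega
    have h3 : Tendsto (fun N : ℕ => eulP q (2 * N)) atTop (𝓝 P) := by
      refine hP.comp (tendsto_atTop.mpr fun b => ?_)
      filter_upwards [eventually_ge_atTop b] with N hN
      omega
    have h4 := (((hP.mul h3).div (h1.mul h2) (mul_ne_zero hP0 hP0))).mul_const
      (q ^ (j * (j + 1) / 2) * x ^ j)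
    rw [div_self (mul_ne_zero hP0 hP0), one_mul] at h4
    refine h4.congr' ?_
    filter_upwards [eventually_ge_atTop j.natAbs] with N hN
    have hmem : j ∈ Finset.Icc (-(N : ℤ)) N := by rw [Finset.mem_Icc]; omega
    simp only [tpTerm, if_pos hmem, Pi.div_apply]
  · refine Eventually.of_forall fun N j => ?_
    unfold tpTerm
    split_ifs
    · rw [norm_mul, norm_mul (q ^ _), norm_zpow, norm_zpow, div_eq_mul_inv, mul_inv, norm_mul,
        norm_mul, norm_mul (eulP q _)⁻¹]
      gcongr
      all_goals first | exact hC _ | exact hC' _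
    · rw [norm_zero]; positivity

lemma euler_log_bound {ρ : ℝ} (h0 : 0 < ρ) (h1 : ρ < 1) (N : ℕ) :
    Real.exp (-(2 / (1 - ρ))) ≤ ∏ m ∈ Finset.range N, (1 - ρ ^ (m + 1)) := by
  have hlt : ∀ m : ℕ, ρ ^ (m + 1) < 1 := fun m => pow_lt_one₀ h0.le h1 (by omega)
  have hpos : 0 < ∏ m ∈ Finset.range N, (1 - ρ ^ (m + 1)) :=
    Finset.prod_pos fun m _ => by have := hlt m; linarith
  rw [← Real.le_log_iff_exp_le hpos, Real.log_prod (fun m _ => by have := hlt m; linarith)]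
  have hs : ∀ m : ℕ, HasSum (fun k : ℕ => (ρ ^ (m + 1)) ^ (k + 1) / ((k : ℝ) + 1))
      (-Real.log (1 - ρ ^ (m + 1))) := fun m =>
    Real.hasSum_pow_div_log_of_abs_lt_one (by rw [abs_of_pos (by positivity)]; exact hlt m)
  have hS := hasSum_sum (s := Finset.range N) (fun m _ => hs m)
  have hz : HasSum (fun k : ℕ => (1 / (1 - ρ)) * (1 / ((k : ℝ) + 1) ^ 2))
      ((1 / (1 - ρ)) * (Real.pi ^ 2 / 6)) := by
    have := (hasSum_nat_add_iff' 1).mpr hasSum_zeta_two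
    simp only [Finset.sum_range_one] at this
    refine HasSum.mul_left _ ?_
    simpa using this
  have hle := hasSum_le (fun k => ?_) hS hz
  · rw [Finset.sum_neg_distrib] at hle
    have hpi : Real.pi ^ 2 / 6 ≤ 2 := by nlinarith [Real.pi_lt_d2, Real.pi_pos]
    have h3 : (1 / (1 - ρ)) * (Real.pi ^ 2 / 6) ≤ (1 / (1 - ρ)) * 2 := by
      have : 0 < 1 - ρ := by linarith
      gcongr
    have h4 : (1 / (1 - ρ)) * 2 = 2 / (1 - ρ) := by ring
    linarith
  · -- termwise bound
    have hr : 0 < 1 - ρ := by linarith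
    have hk : (0 : ℝ) < (k : ℝ) + 1 := by positivity
    have hgeom : ∀ M : ℕ, (∑ m ∈ Finset.range M, (ρ ^ (m + 1)) ^ (k + 1)) * (1 - ρ ^ (k + 1))
        ≤ ρ ^ (k + 1) := by
      intro M
      have : (∑ m ∈ Finset.range M, (ρ ^ (m + 1)) ^ (k + 1)) * (1 - ρ ^ (k + 1)) =
          ρ ^ (k + 1) - (ρ ^ (k + 1)) ^ (M + 1) := by
        induction M with
        | zero => simp
        | succ M ih =>
          rw [Finset.sum_range_succ, add_mul, ih, ← pow_mul ρ (M + 1) (k + 1), mul_comm (M + 1), pow_mul]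
          ring
      rw [this]
      have : 0 < (ρ ^ (k + 1)) ^ (M + 1) := by positivity
      linarith
    have hb : ((k : ℝ) + 1) * (1 - ρ) * ρ ^ (k + 1) ≤ 1 - ρ ^ (k + 1) := by
      clear hgeom hk
      induction k with
      | zero => simp; nlinarith
      | succ k ih =>
        have hp : 0 < ρ ^ (k + 1) := by positivity
        have hk0 : (0 : ℝ) ≤ k := by positivity
        have e : ρ ^ (k + 1 + 1) = ρ ^ (k + 1) * ρ := pow_succ _ _
        push_cast
        rw [e]
        have h5 : ρ ^ (k + 1) * ρ ≤ ρ ^ (k + 1) := by nlinarith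
        have h6 : ((k : ℝ) + 1 + 1) * (1 - ρ) * (ρ ^ (k + 1) * ρ) ≤
           ((k : ℝ) + 1 + 1) * (1 - ρ) * ρ ^ (k + 1) := by gcongr
        linarith
    have hg := hgeom N
    rw [← Finset.sum_div, div_le_iff₀ hk]
    set S := ∑ m ∈ Finset.range N, (ρ ^ (m + 1)) ^ (k + 1)
    have hS0 : 0 ≤ S := Finset.sum_nonneg fun m _ => by positivity
    have hp : 0 < ρ ^ (k + 1) := by positivity
    have h7 : S * (((k : ℝ) + 1) * (1 - ρ)) ≤ 1 := by
      have : S * (((k : ℝ) + 1) * (1 - ρ) * ρ ^ (k + 1)) ≤ ρ ^ (k + 1) :=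
        (mul_le_mul_of_nonneg_left hb hS0).trans hg
      by_contra! hcon
      nlinarith
    have h8 : 1 / (1 - ρ) * (1 / ((k : ℝ) + 1) ^ 2) * (k + 1) = 1 / (((k : ℝ) + 1) * (1 - ρ)) := by
      field_simp
    rw [h8, le_div_iff₀ (by positivity)]
    exact h7

lemma prod_exp_tri (l : ℝ) (t : ℕ) :
    ∏ k ∈ Finset.range t, Real.exp (l * (k + 1)) = Real.exp (l * (t * (t + 1) / 2)) := by
  induction t with
  | zero => simp
  | succ t ih => rw [Finset.prod_range_succ, ih, ← Real.exp_add]; congr 1; push_cast; ring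

lemma pow_small {a h : ℝ} (ha0 : 0 < a) (hh : 0 < h) (ha : a ≤ 1 - 2 * h) (k : ℕ) :
    a ^ (k + 1) * (1 + h) ≤ (1 - h) ^ (k + 1) := by
  have h1 : a * (1 + h) ≤ 1 - h := by nlinarith
  have h2 : a ^ k ≤ (1 - h) ^ k := pow_le_pow_left₀ ha0.le (by linarith) k
  have h3 : 0 < a ^ k := by positivity
  calc a ^ (k + 1) * (1 + h) = a ^ k * (a * (1 + h)) := by ring
    _ ≤ (1 - h) ^ k * (1 - h) := by
        apply mul_le_mul h2 h1 (by positivity)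
        exact h3.le.trans h2
    _ = _ := (pow_succ _ _).symm

lemma norm_one_sub_ge (z : ℂ) : 1 - ‖z‖ ≤ ‖1 + z‖ := by
  have := norm_sub_norm_le (1 : ℂ) (-z)
  simpa using this

lemma prod_lower (n : ℕ) (hn : 3 ≤ n) (q : ℂ) (hq0 : q ≠ 0)
    (hq2 : ‖q‖ ≤ 1 - 2 * (1 / (2 * (n : ℝ)))) (t : ℕ) (x : ℂ)
    (hxs : ‖x + (q ^ (t + 1))⁻¹‖ = 1 / (2 * (n : ℝ))) (hx2 : 1 ≤ ‖q‖ * ‖x‖) (K : ℕ) :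
    Real.exp (-(4 * n)) ^ 4 * (Real.exp (-Real.log ‖q‖ * (t * (t + 1) / 2)) *
      (‖q‖ ^ (t + 1) * (1 / (2 * n)))) ≤
    ‖eulP q (t + 1 + K) * (∏ k ∈ Finset.range (t + 1 + K), (1 + x * q ^ (k + 1))) *
      ∏ k ∈ Finset.range (t + 1 + K), (1 + q ^ k / x)‖ := by
  have hn0 : (3 : ℝ) ≤ n := by exact_mod_cast hn
  set h : ℝ := 1 / (2 * (n : ℝ)) with hh
  have hh0 : 0 < h := by positivity
  have hh1 : h < 1 := by
    rw [hh, div_lt_one (by positivity)]; linarith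
  have ha0 : 0 < ‖q‖ := norm_pos_iff.mpr hq0
  set a := ‖q‖ with ha
  have ha1 : a < 1 := by linarith
  set c := Real.exp (-(4 * n)) with hc
  have hc0 : 0 < c := Real.exp_pos _
  have hR : ∀ N : ℕ, c ≤ ∏ m ∈ Finset.range N, (1 - (1 - h) ^ (m + 1)) := by
    intro N
    have := euler_log_bound (ρ := 1 - h) (by linarith) (by linarith) N
    have e : 2 / (1 - (1 - h)) = 4 * n := by
      rw [hh]; field_simp; norm_num
    rwa [e] at this
  have hE : ∀ k : ℕ, 0 ≤ 1 - (1 - h) ^ (k + 1) := fun k => by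
    have := pow_le_one₀ (n := k + 1) (by linarith : 0 ≤ 1 - h) (by linarith); linarith
  have hsm := pow_small ha0 hh0 hq2
  set e : ℂ := x + (q ^ (t + 1))⁻¹ with he
  have hxe : x * q ^ (t + 1) = -1 + e * q ^ (t + 1) := by
    have : q ^ (t + 1) ≠ 0 := pow_ne_zero _ hq0
    rw [he, add_mul, inv_mul_cancel₀ this]; ring
  have hx0 : 0 < ‖x‖ := by
    by_contra! hcon
    nlinarith [norm_nonneg x]
  -- first factor
  have b1 : c ≤ ‖eulP q (t + 1 + K)‖ := by
    refine (hR (t + 1 + K)).trans ?_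
    rw [eulP, norm_prod]
    refine Finset.prod_le_prod (fun k _ => hE k) fun k _ => ?_
    have h1 := norm_one_sub_ge (-q ^ (k + 1))
    rw [norm_neg, norm_pow, ← sub_eq_add_neg] at h1
    have h2 := hsm k
    have h3 : 0 < a ^ (k + 1) := by positivity
    nlinarith
  -- third factor
  have b3 : c ≤ ‖∏ k ∈ Finset.range (t + 1 + K), (1 + q ^ k / x)‖ := by
    refine (hR (t + 1 + K)).trans ?_
    rw [norm_prod]
    refine Finset.prod_le_prod (fun k _ => hE k) fun k _ => ?_
    have h1 := norm_one_sub_ge (q ^ k / x)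
    rw [norm_div, norm_pow] at h1
    have h2 := hsm k
    have h3 : 0 < a ^ (k + 1) := by positivity
    have h4 : a ^ k / ‖x‖ ≤ a ^ (k + 1) := by
      rw [div_le_iff₀ hx0, pow_succ, mul_assoc]
      exact le_mul_of_one_le_right (by positivity) hx2
    nlinarith
  -- middle factors
  have m1 : c * Real.exp (-Real.log a * (t * (t + 1) / 2)) ≤
      ‖∏ k ∈ Finset.range t, (1 + x * q ^ (k + 1))‖ := by
    rw [← prod_exp_tri, norm_prod, ← Finset.prod_range_reflect (fun k => ‖1 + x * q ^ (k + 1)‖)]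
    refine (mul_le_mul_of_nonneg_right (hR t) (Finset.prod_nonneg fun k _ => (Real.exp_pos _).le)).trans ?_
    rw [← Finset.prod_mul_distrib]
    refine Finset.prod_le_prod (fun k _ => mul_nonneg (hE k) (Real.exp_pos _).le) fun k hk => ?_
    rw [Finset.mem_range] at hk
    have e1 : q ^ (k + 1) * (1 + x * q ^ (t - 1 - k + 1)) = -(1 + (-q ^ (k + 1) + -(e * q ^ (t + 1)))) := by
      have : q ^ (t + 1) = q ^ (k + 1) * q ^ (t - 1 - k + 1) := by
        rw [← pow_add]; congr 1; omega
      have h5 : x * (q ^ (k + 1) * q ^ (t - 1 - k + 1)) = x * q ^ (t + 1) := by rw [← this]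
      linear_combination h5 + hxe
    have e2 : a ^ (k + 1) * ‖1 + x * q ^ (t - 1 - k + 1)‖ =
        ‖1 + (-q ^ (k + 1) + -(e * q ^ (t + 1)))‖ := by
      rw [ha, ← norm_pow, ← norm_mul, e1, norm_neg]
    have e3 := norm_one_sub_ge (-q ^ (k + 1) + -(e * q ^ (t + 1)))
    have e4 : ‖-q ^ (k + 1) + -(e * q ^ (t + 1))‖ ≤ a ^ (k + 1) + h * a ^ (t + 1) := by
      refine (norm_add_le _ _).trans_eq ?_
      rw [norm_neg, norm_neg, norm_mul, norm_pow, norm_pow, hxs]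
    have e5 : a ^ (t + 1) ≤ a ^ (k + 1) := pow_le_pow_of_le_one ha0.le ha1.le (by omega)
    have e6 : h * a ^ (t + 1) ≤ h * a ^ (k + 1) := by gcongr
    have e7 : Real.exp (-Real.log a * (k + 1)) = (a ^ (k + 1))⁻¹ := by
      rw [neg_mul, Real.exp_neg, mul_comm]
      congr 1
      rw [← Nat.cast_succ, Real.exp_nat_mul, Real.exp_log ha0]
    have h3 : 0 < a ^ (k + 1) := by positivity
    rw [e7, ← div_eq_mul_inv, div_le_iff₀ h3, mul_comm ‖_‖, e2]
    have h2 := hsm k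
    linarith
  have m2 : ‖1 + x * q ^ (t + 1)‖ = a ^ (t + 1) * h := by
    rw [hxe, ← hxs, ha, ← norm_pow, ← norm_mul]
    congr 1; ring
  have m3 : c ≤ ‖∏ k ∈ Finset.range K, (1 + x * q ^ (t + 1 + k + 1))‖ := by
    refine (hR K).trans ?_
    rw [norm_prod]
    refine Finset.prod_le_prod (fun k _ => hE k) fun k _ => ?_
    have e1 : 1 + x * q ^ (t + 1 + k + 1) = 1 + (-q ^ (k + 1) + e * q ^ (t + 1) * q ^ (k + 1)) := by
      have : q ^ (t + 1 + k + 1) = q ^ (t + 1) * q ^ (k + 1) := by rw [← pow_add]; congr 1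
      rw [this]
      linear_combination q ^ (k + 1) * hxe
    rw [e1]
    have e3 := norm_one_sub_ge (-q ^ (k + 1) + e * q ^ (t + 1) * q ^ (k + 1))
    have e4 : ‖-q ^ (k + 1) + e * q ^ (t + 1) * q ^ (k + 1)‖ ≤ a ^ (k + 1) + h * a ^ (t + 1) * a ^ (k + 1) := by
      refine (norm_add_le _ _).trans_eq ?_
      rw [norm_neg, norm_mul, norm_mul, norm_pow, norm_pow, hxs]
    have e5 : a ^ (t + 1) ≤ 1 := pow_le_one₀ ha0.le ha1.le
    have e6 : h * a ^ (t + 1) * a ^ (k + 1) ≤ h * 1 * a ^ (k + 1) := by gcongr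
    have h2 := hsm k
    linarith
  rw [Finset.prod_range_add, Finset.prod_range_succ]
  simp only [norm_mul]
  rw [m2]
  set X := Real.exp (-Real.log a * (t * (t + 1) / 2)) with hX
  have hX0 : 0 < X := Real.exp_pos _
  calc c ^ 4 * (X * (a ^ (t + 1) * h)) = c * (c * X * (a ^ (t + 1) * h) * c) * c := by ring
    _ ≤ _ := by gcongr

lemma const_gt (n : ℕ) (hn : 3 ≤ n) (a : ℝ) (ha0 : 0 < a)
    (hq1 : 1 - 1 / ((n : ℝ) - 1) ≤ a) (t : ℕ) (hQ : (8 : ℝ) ^ 11 - 1 ≤ (a ^ (t + 1))⁻¹) :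
    1 < Real.exp (-(4 * n)) ^ 4 * (Real.exp (-Real.log a * (t * (t + 1) / 2)) *
      (a ^ (t + 1) * (1 / (2 * n)))) := by
  have hn0 : (3 : ℝ) ≤ n := by exact_mod_cast hn
  set l := -Real.log a with hl
  have hat : a ^ (t + 1) = Real.exp (-(l * (t + 1))) := by
    rw [hl, neg_mul, neg_neg, mul_comm, ← Nat.cast_succ, Real.exp_nat_mul, Real.exp_log ha0]
  -- 22 ≤ l (t+1)
  have hL : 22 ≤ l * (t + 1) := by
    rw [hat, ← Real.exp_neg, neg_neg] at hQ
    rw [← Real.exp_le_exp]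
    refine le_trans ?_ hQ
    have h1 : Real.exp 22 = Real.exp 1 ^ 22 := by rw [← Real.exp_nat_mul]; norm_num
    have h2 : Real.exp 1 ^ 22 ≤ 2.72 ^ 22 :=
      pow_le_pow_left₀ (Real.exp_pos _).le (by linarith [Real.exp_one_lt_d9]) _
    rw [h1]
    refine h2.trans ?_
    norm_num
  have hln : l * ((n : ℝ) - 2) ≤ 1 := by
    have h1 : ((n : ℝ) - 2) / (n - 1) ≤ a := by
      refine le_trans (le_of_eq ?_) hq1
      have : (n : ℝ) - 1 ≠ 0 := by linarith
      field_simp; ring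
    have h2 : a⁻¹ ≤ ((n : ℝ) - 1) / (n - 2) := by
      rw [← inv_div]
      exact inv_anti₀ (div_pos (by linarith) (by linarith)) h1
    have h3 : l ≤ a⁻¹ - 1 := by
      rw [hl, ← Real.log_inv]; exact Real.log_le_sub_one_of_pos (by positivity)
    have h4 : l ≤ 1 / ((n : ℝ) - 2) := by
      refine (h3.trans (sub_le_sub_right h2 1)).trans_eq ?_
      have : (n : ℝ) - 2 ≠ 0 := by linarith
      field_simp; ring
    rwa [le_div_iff₀ (by linarith)] at h4
  have h2n : Real.exp (-(2 * n)) ≤ 1 / (2 * (n : ℝ)) := by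
    rw [Real.exp_neg, ← one_div]
    apply one_div_le_one_div_of_le (by positivity)
    linarith [Real.add_one_le_exp (2 * (n : ℝ))]
  have hst : 22 * ((n : ℝ) - 2) ≤ t + 1 := by
    have ht : (0 : ℝ) < t + 1 := by positivity
    have h5 : 22 * ((n : ℝ) - 2) ≤ (l * (t + 1)) * (n - 2) := by
      apply mul_le_mul_of_nonneg_right hL; linarith
    nlinarith
  rw [hat, ← Real.exp_nat_mul]
  refine lt_of_lt_of_le ?_ (mul_le_mul_of_nonneg_left (mul_le_mul_of_nonneg_left
    (mul_le_mul_of_nonneg_left h2n (Real.exp_pos _).le) (Real.exp_pos _).le) (Real.exp_pos _).le)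
  rw [← Real.exp_add, ← Real.exp_add, ← Real.exp_add, Real.one_lt_exp_iff]
  have h6 : 22 * ((t : ℝ) - 2) ≤ (l * (t + 1)) * (t - 2) := by
    apply mul_le_mul_of_nonneg_right hL; linarith
  push_cast
  nlinarith

/-- Proposition 4: if the circle `C(μ_s, 1/(2n))` lies in `{|x| > 8^11}` then at every
point of it `|Θ*| > 1 > 1/(8^11 - 1) ≥ |G|`. -/
theorem thetaStar_gt_G_on_circle (n : ℕ) (hn : 3 ≤ n) (q : ℂ)
    (hq1 : 1 - 1 / ((n : ℝ) - 1) ≤ ‖q‖) (hq2 : ‖q‖ ≤ 1 - 1 / (n : ℝ))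
    (s : ℕ) (hs : 1 ≤ s)
    (hsub : Metric.sphere (-q ^ (-(s : ℤ)) : ℂ) (1 / (2 * (n : ℝ)))
      ⊆ {x : ℂ | (8 : ℝ) ^ 11 < ‖x‖}) :
    ∀ x ∈ Metric.sphere (-q ^ (-(s : ℤ)) : ℂ) (1 / (2 * (n : ℝ))),
      1 < ‖∑' j : ℤ, q ^ (j * (j + 1) / 2) * x ^ j‖ ∧
      (1 : ℝ) / ((8 : ℝ) ^ 11 - 1) < 1 ∧
      ‖∑' ν : ℕ, q ^ (ν * (ν + 1) / 2) * x ^ (-(ν + 1 : ℤ))‖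
        ≤ (1 : ℝ) / ((8 : ℝ) ^ 11 - 1) := by
  intro x hx
  have hX : (8 : ℝ) ^ 11 < ‖x‖ := hsub hx
  have hn0 : (3 : ℝ) ≤ n := by exact_mod_cast hn
  have ha : 1 / 2 ≤ ‖q‖ := by
    refine le_trans ?_ hq1
    have : 1 / ((n : ℝ) - 1) ≤ 1 / 2 := one_div_le_one_div_of_le (by norm_num) (by linarith)
    linarith
  have hq0 : q ≠ 0 := by
    rw [← norm_pos_iff]; linarith
  have hlt : ‖q‖ < 1 := by
    have : 0 < 1 / (n : ℝ) := by positivity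
    linarith
  have hx1 : 1 < ‖x‖ := lt_trans (by norm_num) hX
  have hx0 : x ≠ 0 := by rw [← norm_pos_iff]; linarith
  refine ⟨?_, by norm_num, ?_⟩
  · obtain ⟨t, rfl⟩ : ∃ t, s = t + 1 := ⟨s - 1, by omega⟩
    have hxs : ‖x + (q ^ (t + 1))⁻¹‖ = 1 / (2 * (n : ℝ)) := by
      rw [mem_sphere_iff_norm, sub_neg_eq_add, zpow_neg, zpow_natCast] at hx
      exact hx
    have hQ : (8 : ℝ) ^ 11 - 1 ≤ (‖q‖ ^ (t + 1))⁻¹ := by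
      have h1 : ‖x‖ ≤ ‖x + (q ^ (t + 1))⁻¹‖ + ‖(q ^ (t + 1))⁻¹‖ := by
        have := norm_sub_le (x + (q ^ (t + 1))⁻¹) (q ^ (t + 1))⁻¹
        simpa using this
      rw [hxs, norm_inv, norm_pow] at h1
      have h2 : 1 / (2 * (n : ℝ)) ≤ 1 := by
        rw [div_le_one (by positivity)]; linarith
      linarith
    have hq2' : ‖q‖ ≤ 1 - 2 * (1 / (2 * (n : ℝ))) := by
      refine hq2.trans_eq ?_
      field_simp
    have hx2 : 1 ≤ ‖q‖ * ‖x‖ := by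
      have : (2 : ℝ) ≤ ‖x‖ := le_trans (by norm_num) hX.le
      nlinarith
    refine (const_gt n hn ‖q‖ (by linarith) hq1 t hQ).trans_le ?_
    refine ge_of_tendsto (tp_tendsto hlt hq0 hx0).norm ?_
    filter_upwards [eventually_ge_atTop (t + 1)] with N hN
    obtain ⟨K, rfl⟩ := Nat.exists_eq_add_of_le hN
    exact prod_lower n hn q hq0 hq2' t x hxs hx2 K
  · have hgeo := (hasSum_geometric_of_lt_one (r := ‖x‖⁻¹) (by positivity)
      (inv_lt_one_of_one_lt₀ hx1)).mul_left ‖x‖⁻¹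
    have hb := tsum_of_norm_bounded (f := fun ν : ℕ => q ^ (ν * (ν + 1) / 2) * x ^ (-(ν + 1 : ℤ)))
      hgeo (fun ν => by
        rw [norm_mul, norm_pow, norm_zpow, zpow_neg, ← Nat.cast_succ, zpow_natCast, ← inv_pow,
          Nat.succ_eq_add_one, pow_succ' _ ν]
        exact mul_le_of_le_one_left (by positivity) (pow_le_one₀ (norm_nonneg _) hlt.le))
    refine hb.trans ?_
    have : ‖x‖⁻¹ * (1 - ‖x‖⁻¹)⁻¹ = 1 / (‖x‖ - 1) := by
      rw [← mul_inv, mul_sub, mul_inv_cancel₀ (by linarith), one_div, mul_one]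
    rw [this]
    exact one_div_le_one_div_of_le (by norm_num) (by linarith)
end

section
/- Let n ≥ 3 be an integer and let q ∈ ℂ with 1 - 1/(n-1) ≤ |q| ≤ 1 - 1/n. Suppose s ∈ ℕ, s ≥ 1, is such that the closed disk of radius 1/(2n) centered at μ_s := -q^{-s} is contained in {x ∈ ℂ : |x| > 8^11}. Then the partial theta function θ(q,·) has exactly one zero, counted with multiplicity (hence a simple zero), in the open disk D(μ_s, 1/(2n)). -/
open Metric Set Filter Topology in
theorem abstract_zero (f G : ℂ → ℂ) (μ : ℂ) (r c : ℝ) (hr : 0 < r) (hc : 0 < c)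
    (hF : DifferentiableOn ℂ (fun x => f x + G x) (ball μ (2*r)))
    (hG : DifferentiableOn ℂ G (ball μ (2*r)))
    (h0 : f μ + G μ = 0)
    (hlow : ∀ x ∈ ball μ (2*r), c * ‖x - μ‖ ≤ ‖f x + G x‖)
    (hup : ∀ x ∈ ball μ (2*r), ‖G x‖ ≤ c * (r/4)) :
    ∃ z ∈ ball μ r, f z = 0 ∧ deriv f z ≠ 0 ∧ ∀ w ∈ ball μ r, f w = 0 → w = z := by
  set F : ℂ → ℂ := fun x => f x + G x with hFdef
  have hμ : ball μ (2*r) ∈ 𝓝 μ := ball_mem_nhds _ (by positivity)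
  set K := dslope F μ with hK
  have hKd : DifferentiableOn ℂ K (ball μ (2*r)) := (Complex.differentiableOn_dslope hμ).2 hF
  have hFK : ∀ x, F x = (x - μ) * K x := by
    intro x
    have := sub_smul_dslope F μ x
    rw [smul_eq_mul] at this
    rw [hK, this]
    simp [hFdef, h0]
  have hKne : ∀ x ∈ ball μ (2*r), x ≠ μ → c ≤ ‖K x‖ := by
    intro x hx hne
    have h1 := hlow x hx
    have h2 := hFK x
    simp only [hFdef] at h2
    rw [h2, norm_mul, mul_comm] at h1
    exact le_of_mul_le_mul_left h1 (norm_pos_iff.2 (sub_ne_zero.2 hne))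
  have hKlow : ∀ x ∈ ball μ (2*r), c ≤ ‖K x‖ := by
    intro x hx
    by_cases hne : x = μ
    · subst hne
      have hcont : ContinuousAt K x := (hKd.differentiableAt hμ).continuousAt
      have ht : Tendsto (fun y => ‖K y‖) (𝓝[≠] x) (𝓝 ‖K x‖) :=
        (hcont.norm.tendsto).mono_left nhdsWithin_le_nhds
      refine ge_of_tendsto ht ?_
      have : ∀ᶠ y in 𝓝[≠] x, y ∈ ball x (2*r) := nhdsWithin_le_nhds hμ
      filter_upwards [this, self_mem_nhdsWithin] with y hy hy2
      exact hKne y hy hy2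
    · exact hKne x hx hne
  have hK0 : ∀ x ∈ ball μ (2*r), K x ≠ 0 := fun x hx h => by
    have := hKlow x hx; rw [h, norm_zero] at this; linarith
  set h : ℂ → ℂ := fun x => G x / K x with hh
  have hhd : DifferentiableOn ℂ h (ball μ (2*r)) := hG.div hKd hK0
  have hhn : ∀ x ∈ ball μ (2*r), ‖h x‖ ≤ r/4 := by
    intro x hx
    rw [hh]; simp only [norm_div]
    rw [div_le_iff₀ (lt_of_lt_of_le hc (hKlow x hx))]
    calc _ ≤ c * (r/4) := hup x hx
      _ ≤ ‖K x‖ * (r/4) := by gcongr; exact hKlow x hx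
      _ = _ := mul_comm _ _
  have hfe : ∀ x ∈ ball μ (2*r), f x = K x * (x - μ - h x) := by
    intro x hx
    have h2 := hFK x
    simp only [hFdef] at h2
    have h3 := hK0 x hx
    simp only [hh]
    field_simp
    linear_combination h2
  have hsub : ball μ r ⊆ ball μ (2*r) := ball_subset_ball (by linarith)
  have hderiv : ∀ x ∈ ball μ r, ‖deriv h x‖ ≤ 1/4 := by
    intro x hx
    have hcb : closedBall x r ⊆ ball μ (2*r) := by
      intro y hy
      rw [mem_ball] at *
      rw [mem_closedBall] at hy
      linarith [dist_triangle y x μ]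
    have := Complex.norm_deriv_le_of_forall_mem_sphere_norm_le (f := h) (c := x) (R := r) (C := r/4) hr
      ((hhd.mono hcb).diffContOnCl_ball (subset_refl _))
      (fun y hy => hhn y (hcb (sphere_subset_closedBall hy)))
    calc _ ≤ _ := this
      _ = 1/4 := by field_simp
  have hlip : ∀ x ∈ ball μ r, ∀ y ∈ ball μ r, ‖h y - h x‖ ≤ 1/4 * ‖y - x‖ := by
    intro x hx y hy
    exact Convex.norm_image_sub_le_of_norm_deriv_le
      (fun z hz => hhd.differentiableAt (isOpen_ball.mem_nhds (hsub hz))) hderiv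
      (convex_ball μ r) hx hy
  have hcbs : closedBall μ (r/2) ⊆ ball μ r := closedBall_subset_ball (by linarith)
  have hmaps : MapsTo (fun x => μ + h x) (closedBall μ (r/2)) (closedBall μ (r/2)) := by
    intro x hx
    rw [mem_closedBall, dist_eq_norm]
    have := hhn x (hsub (hcbs hx))
    simp only [add_sub_cancel_left]
    linarith
  have hcontr : ContractingWith (1/4) (hmaps.restrict _ _ _) := by
    refine ⟨?_, ?_⟩
    · rw [← NNReal.coe_lt_coe]; norm_num
    · refine LipschitzWith.of_dist_le_mul ?_
      rintro ⟨x, hx⟩ ⟨y, hy⟩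
      simp only [Subtype.dist_eq, MapsTo.val_restrict_apply, dist_eq_norm]
      have := hlip y (hcbs hy) x (hcbs hx)
      simpa using this
  obtain ⟨z, hz, hfix, -⟩ := hcontr.exists_fixedPoint' (isClosed_closedBall.isComplete) hmaps
    (x := μ) (mem_closedBall_self (by positivity)) (edist_ne_top _ _)
  have hzh : μ + h z = z := hfix
  have hzr := hcbs hz
  refine ⟨z, hzr, ?_, ?_, ?_⟩
  · rw [hfe z (hsub hzr)]
    have : z - μ - h z = 0 := by linear_combination -hzh
    rw [this, mul_zero]
  · have hev : f =ᶠ[𝓝 z] fun x => K x * (x - μ - h x) := by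
      filter_upwards [isOpen_ball.mem_nhds (hsub hzr)] with x hx using hfe x hx
    rw [hev.deriv_eq]
    have hnb := isOpen_ball.mem_nhds (hsub hzr)
    have d1 := (hKd.differentiableAt hnb).hasDerivAt
    have d2 := (hhd.differentiableAt hnb).hasDerivAt
    have d3 := d1.mul (((hasDerivAt_id z).sub_const μ).sub d2)
    have d4 := d3.deriv
    have hz0 : z - μ - h z = 0 := by linear_combination -hzh
    have e1 : deriv (fun x => K x * (x - μ - h x)) z = K z * (1 - deriv h z) := by
      refine Eq.trans d4 ?_
      simp [hz0]
    rw [e1]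
    refine mul_ne_zero (hK0 z (hsub hzr)) ?_
    intro h1
    have h2 := hderiv z hzr
    rw [← sub_eq_zero.1 h1] at h2
    norm_num at h2
  · intro w hw hw0
    rw [hfe w (hsub hw)] at hw0
    have h1 := (mul_eq_zero.1 hw0).resolve_left (hK0 w (hsub hw))
    have h2 := hlip z hzr w hw
    have h3 : h w - h z = w - z := by linear_combination -h1 - hzh
    rw [h3] at h2
    have h4 : ‖w - z‖ = 0 := by
      have := norm_nonneg (w - z); linarith
    exact sub_eq_zero.1 (norm_eq_zero.1 h4)

/-- q-Pochhammer product. -/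
noncomputable def qP (q : ℂ) (N : ℕ) : ℂ := ∏ k ∈ Finset.range N, (1 - q ^ (k + 1))

/-- Gaussian binomials. -/
noncomputable def gb (q : ℂ) : ℕ → ℕ → ℂ
  | _, 0 => 1
  | 0, _ + 1 => 0
  | N + 1, k + 1 => gb q N (k + 1) + q ^ (N - k) * gb q N k

theorem gb_zero (q : ℂ) (N : ℕ) : gb q N 0 = 1 := by cases N <;> simp [gb]

theorem gb_gt (q : ℂ) : ∀ N k : ℕ, N < k → gb q N k = 0
  | _, 0, h => by omega
  | 0, _ + 1, _ => by simp [gb]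
  | N + 1, k + 1, h => by
    rw [gb, gb_gt q N (k+1) (by omega), gb_gt q N k (by omega)]; simp

theorem qP_succ (q : ℂ) (N : ℕ) : qP q (N+1) = qP q N * (1 - q^(N+1)) := by
  simp [qP, Finset.prod_range_succ]

theorem gb_mul (q : ℂ) : ∀ N k d : ℕ, k + d = N → gb q N k * qP q k * qP q d = qP q N := by
  intro N
  induction N with
  | zero =>
    intro k d h
    obtain ⟨rfl, rfl⟩ : k = 0 ∧ d = 0 := by omega
    simp [gb, qP]
  | succ N ih =>
    intro k d h
    cases k with
    | zero =>
      obtain rfl : d = N + 1 := by omega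
      rw [gb_zero]; simp [qP]
    | succ k =>
      have hd : N - k = d := by omega
      rw [gb, hd]
      cases d with
      | zero =>
        have := ih k 0 (by omega)
        obtain rfl : k = N := by omega
        rw [gb_gt q k (k+1) (by omega), qP_succ]
        linear_combination (1 - q^(k+1)) * this
      | succ d =>
        have h1 := ih k (d+1) (by omega)
        have h2 := ih (k+1) d (by omega)
        obtain rfl : N = k + d + 1 := by omega
        rw [qP_succ q k] at h2
        rw [qP_succ q d] at h1
        rw [qP_succ q k, qP_succ q d, qP_succ q (k+d+1)]
        linear_combination (q^(d+1)*(1-q^(k+1))) * h1 + (1 - q^(d+1)) * h2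

theorem tri_succ (k : ℕ) : (k+1) * (k+1+1) / 2 = k * (k+1) / 2 + (k + 1) := by
  have : (k+1) * (k+1+1) = k*(k+1) + (k+1) * 2 := by ring
  rw [this, Nat.add_mul_div_right _ _ (by norm_num)]

theorem q_binomial (q y : ℂ) (N : ℕ) :
    ∏ m ∈ Finset.range N, (1 + y * q^(m+1)) =
      ∑ k ∈ Finset.range (N+1), gb q N k * (q^(k*(k+1)/2) * y^k) := by
  induction N with
  | zero => simp [gb]
  | succ N ih =>
    rw [Finset.prod_range_succ, ih, Finset.sum_range_succ' _ (N+1), gb_zero]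
    have h1 : ∑ k ∈ Finset.range (N+1), gb q N k * (q^(k*(k+1)/2) * y^k) =
      (∑ k ∈ Finset.range (N+1), gb q N (k+1) * (q^((k+1)*(k+1+1)/2) * y^(k+1))) + 1 := by
      have := Finset.sum_range_succ' (fun k => gb q N k * (q^(k*(k+1)/2) * y^k)) (N+1)
      rw [Finset.sum_range_succ, gb_gt q N (N+1) (by omega)] at this
      rw [zero_mul, add_zero] at this
      rw [this, gb_zero]; simp
    have h2 : (∑ k ∈ Finset.range (N+1), gb q N k * (q^(k*(k+1)/2) * y^k)) * (y * q^(N+1)) =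
      ∑ k ∈ Finset.range (N+1), q^(N-k) * gb q N k * (q^((k+1)*(k+1+1)/2) * y^(k+1)) := by
      rw [Finset.sum_mul]
      refine Finset.sum_congr rfl fun k hk => ?_
      have hk' : k ≤ N := by simpa [Nat.lt_succ_iff] using hk
      obtain ⟨d, rfl⟩ := Nat.exists_eq_add_of_le hk'
      rw [tri_succ, Nat.add_sub_cancel_left]
      ring
    rw [mul_add, mul_one, h2, h1]
    simp only [gb, add_mul, Finset.sum_add_distrib]
    simp
    ring

theorem tri_add (M j : ℕ) : (M+j)*(M+j+1)/2 = M*(M+1)/2 + M*j + j*(j+1)/2 := by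
  induction j with
  | zero => simp
  | succ j ih =>
    rw [← add_assoc, tri_succ, tri_succ, ih]; ring

theorem tri_two (j : ℕ) : j*(j+1)/2 + j*(j+1)/2 = j*(j+1) := by
  have := Nat.even_mul_succ_self j
  have := Nat.div_two_mul_two_of_even this
  omega

theorem finite_triple (q x : ℂ) (hq : q ≠ 0) (hx : x ≠ 0) (M : ℕ) :
    (∏ m ∈ Finset.range M, (1 + x * q^(m+1))) * (∏ k ∈ Finset.range M, (1 + q^k * x⁻¹)) =
    ∑ j ∈ Finset.range (M+1), gb q (M+M) (M+j) * (q^(j*(j+1)/2) * x^j) +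
    x⁻¹ * ∑ j ∈ Finset.range M, gb q (M+M) (M-1-j) * (q^(j*(j+1)/2) * x⁻¹^j) := by
  set y := x / q^M with hy
  have hqM : q^M ≠ 0 := pow_ne_zero _ hq
  set K := q^(M*(M+1)/2) * y^M with hK
  have hyne : y ≠ 0 := div_ne_zero hx hqM
  have hKne : K ≠ 0 := mul_ne_zero (pow_ne_zero _ hq) (pow_ne_zero _ hyne)
  have hxy : x = y * q^M := by rw [hy]; field_simp
  have key := q_binomial q y (M+M)
  rw [Finset.prod_range_add, add_assoc, Finset.sum_range_add] at key
  have hA : ∏ m ∈ Finset.range M, (1 + y * q^(M+m+1)) = ∏ m ∈ Finset.range M, (1 + x * q^(m+1)) := by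
    refine Finset.prod_congr rfl fun m _ => ?_
    rw [hxy]; ring
  have hB : ∏ m ∈ Finset.range M, (1 + y * q^(m+1)) =
      K * ∏ k ∈ Finset.range M, (1 + q^k * x⁻¹) := by
    rw [← Finset.prod_range_reflect]
    have h1 : ∀ k ∈ Finset.range M, (1 + y * q^(M-1-k+1)) = (y * q^(M-1-k+1)) * (1 + q^k * x⁻¹) := by
      intro k hk
      rw [Finset.mem_range] at hk
      obtain ⟨d, rfl⟩ := Nat.exists_eq_add_of_lt hk
      have : k + d + 1 - 1 - k + 1 = d + 1 := by omega
      rw [this, hxy]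
      field_simp
      ring
    rw [Finset.prod_congr rfl h1, Finset.prod_mul_distrib]
    congr 1
    rw [Finset.prod_range_reflect (fun m => y * q^(m+1)) M, hK]
    clear_value y
    clear h1 hA key hK hKne hxy hy hqM K
    induction M with
    | zero => simp
    | succ M ih => rw [Finset.prod_range_succ, ih, tri_succ]; ring
  have hC : ∑ j ∈ Finset.range (M+1), gb q (M+M) (M+j) * (q^((M+j)*(M+j+1)/2) * y^(M+j)) =
     K * ∑ j ∈ Finset.range (M+1), gb q (M+M) (M+j) * (q^(j*(j+1)/2) * x^j) := by
    rw [Finset.mul_sum]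
    refine Finset.sum_congr rfl fun j _ => ?_
    rw [tri_add, hK, hxy, mul_pow, ← pow_mul]; ring
  have hD : ∑ j ∈ Finset.range M, gb q (M+M) j * (q^(j*(j+1)/2) * y^j) =
     K * (x⁻¹ * ∑ j ∈ Finset.range M, gb q (M+M) (M-1-j) * (q^(j*(j+1)/2) * x⁻¹^j)) := by
    rw [← Finset.sum_range_reflect, Finset.mul_sum, Finset.mul_sum]
    refine Finset.sum_congr rfl fun j hj => ?_
    rw [Finset.mem_range] at hj
    obtain ⟨k, hk⟩ := Nat.exists_eq_add_of_lt hj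
    have hk' : M - 1 - j = k := by omega
    rw [hk']
    have e1 : q^(k*(k+1)/2) * y^k * x^(j+1) = K * q^(j*(j+1)/2) := by
      have hM : M = k + (j+1) := by omega
      have e2 : k*(k+1)/2 + M*(j+1) = M*(M+1)/2 + j*(j+1)/2 := by
        have t1 := tri_add k (j+1)
        have t2 := tri_succ j
        have t3 := tri_two j
        rw [hM, t1, t2]
        nlinarith
      rw [hK, hxy, mul_pow, ← pow_mul]
      calc _ = q^(k*(k+1)/2 + M*(j+1)) * y^(k+(j+1)) := by ring
        _ = _ := by rw [e2, ← hM]; ring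
    have e3 : q^(k*(k+1)/2) * y^k = K * (x⁻¹ * (q^(j*(j+1)/2) * x⁻¹^j)) := by
      have hxp : x^(j+1) ≠ 0 := pow_ne_zero _ hx
      apply mul_right_cancel₀ hxp
      rw [e1, inv_pow]; field_simp; ring
    rw [e3]; ring
  rw [hA, hB, hC, hD] at key
  apply mul_left_cancel₀ hKne
  linear_combination key

theorem phi_low (a D : ℝ) (ha0 : 0 < a) (ha1 : a < 1) (hD : a ≤ D * (1 - a)) (N : ℕ) :
    Real.exp (-(2 * D)) ≤ ∏ k ∈ Finset.range N, (1 - a ^ (k+1)) := by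
  have hpos : ∀ k ∈ Finset.range N, 0 < 1 - a^(k+1) := fun k _ => by
    have := pow_lt_one₀ ha0.le ha1 (Nat.succ_ne_zero k)
    simpa using this
  have hDpos : 0 < D := by
    by_contra h
    nlinarith
  rw [← Real.le_log_iff_exp_le (Finset.prod_pos hpos), Real.log_prod (fun k hk => (hpos k hk).ne')]
  have h1 : HasSum (fun i : ℕ => ∑ k ∈ Finset.range N, (a^(k+1))^(i+1) / ((i:ℝ)+1))
      (∑ k ∈ Finset.range N, -Real.log (1 - a^(k+1))) := by
    refine hasSum_sum fun k _ => Real.hasSum_pow_div_log_of_abs_lt_one ?_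
    rw [abs_of_pos (by positivity)]
    exact pow_lt_one₀ ha0.le ha1 (Nat.succ_ne_zero k)
  have h2 : HasSum (fun i : ℕ => D * (1 / ((i+1 : ℕ):ℝ)^2)) (D * (Real.pi^2/6)) := by
    have := (hasSum_nat_add_iff' (f := fun n : ℕ => 1 / (n:ℝ)^2) 1).2 hasSum_zeta_two
    simp only [Finset.range_one, Finset.sum_singleton] at this
    have h3 := this.mul_left D
    simpa using h3
  have h3 := hasSum_le (fun i => ?_) h1 h2
  · rw [Finset.sum_neg_distrib] at h3
    have hpi : Real.pi^2/6 ≤ 2 := by nlinarith [Real.pi_lt_d2, Real.pi_pos]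
    nlinarith
  · set b := a^(i+1) with hb
    have hb0 : 0 < b := by positivity
    have hb1 : b < 1 := pow_lt_one₀ ha0.le ha1 (Nat.succ_ne_zero i)
    have hgeo : ∑ k ∈ Finset.range N, b^(k+1) ≤ b / (1 - b) := by
      have hs := (hasSum_geometric_of_lt_one hb0.le hb1).mul_left b
      have := sum_le_hasSum (Finset.range N) (fun k _ => by positivity) hs
      calc _ = ∑ k ∈ Finset.range N, b * b^k := by
              refine Finset.sum_congr rfl fun k _ => ?_
              ring
        _ ≤ _ := this
        _ = _ := by rw [div_eq_mul_inv]
    have hbern : ((i:ℝ)+1) * b ≤ D * (1 - b) := by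
      have hinv : 1/D ≤ 1/a - 1 := by
        have : 1/a - 1 = (1-a)/a := by field_simp
        rw [this, div_le_div_iff₀ hDpos ha0]; linarith
      have hB := one_add_mul_le_pow (a := 1/a - 1) (by
        have : 0 < 1/D := by positivity
        linarith) (i+1)
      have e : (1 + (1/a - 1))^(i+1) = 1/b := by
        rw [hb]; simp
      rw [e] at hB
      push_cast at hB
      have h5 : 1 + ((i:ℝ)+1) * (1/D) ≤ 1/b := by
        refine le_trans ?_ hB
        gcongr
      have h6 : (1 + ((i:ℝ)+1) * (1/D)) * (b * D) ≤ 1/b * (b*D) := by gcongr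
      have h7 : 1/b * (b*D) = D := by field_simp
      have h8 : (1 + ((i:ℝ)+1) * (1/D)) * (b * D) = b*D + (i+1)*b := by field_simp
      linarith
    rw [← Finset.sum_div]
    have e2 : ∑ k ∈ Finset.range N, (a^(k+1))^(i+1) = ∑ k ∈ Finset.range N, b^(k+1) := by
      refine Finset.sum_congr rfl fun k _ => ?_
      rw [hb, ← pow_mul, ← pow_mul, mul_comm]
    rw [e2]
    have hi : (0:ℝ) < (i:ℝ)+1 := by positivity
    have h9 : b/(1-b) ≤ D/((i:ℝ)+1) := by
      rw [div_le_div_iff₀ (by linarith) hi]; linarith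
    push_cast
    calc _ ≤ (D/((i:ℝ)+1)) / ((i:ℝ)+1) := by gcongr; linarith
      _ = _ := by field_simp

/-- The partial theta function. -/
noncomputable def pth (q x : ℂ) : ℂ := ∑' j : ℕ, q ^ (j * (j + 1) / 2) * x ^ j

theorem pth_summable (a R : ℝ) (ha0 : 0 < a) (ha1 : a < 1) (hR : 0 < R) :
    Summable (fun j : ℕ => a ^ (j*(j+1)/2) * R^j) := by
  refine summable_of_ratio_test_tendsto_lt_one (l := 0) (by norm_num) ?_ ?_
  · exact Filter.Eventually.of_forall fun j => by positivity
  · have : ∀ j : ℕ, ‖a ^ ((j+1)*(j+1+1)/2) * R^(j+1)‖ / ‖a ^ (j*(j+1)/2) * R^j‖ = a^(j+1) * R := by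
      intro j
      rw [Real.norm_of_nonneg (by positivity), Real.norm_of_nonneg (by positivity), tri_succ]
      field_simp
      ring
    simp_rw [this]
    have h := ((tendsto_pow_atTop_nhds_zero_of_lt_one ha0.le ha1).comp
      (Filter.tendsto_add_atTop_nat 1)).mul_const R
    simpa using h

theorem pth_diff (q : ℂ) (h0 : 0 < ‖q‖) (h1 : ‖q‖ < 1) : Differentiable ℂ (pth q) := by
  intro x
  have hd : DifferentiableOn ℂ (pth q) (Metric.ball 0 (‖x‖+1)) := by
    refine Complex.differentiableOn_tsum_of_summable_norm
      (pth_summable ‖q‖ (‖x‖+1) h0 h1 (by positivity)) (fun j => by fun_prop) Metric.isOpen_ball ?_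
    intro j w hw
    rw [norm_mul, norm_pow, norm_pow]
    have : ‖w‖ ≤ ‖x‖+1 := by
      have := Metric.mem_ball.1 hw
      rw [dist_zero_right] at this; exact this.le
    gcongr
  exact hd.differentiableAt (Metric.isOpen_ball.mem_nhds (by simp))

theorem pth_bound (q x : ℂ) (h1 : ‖q‖ < 1) (hx : ‖x‖ ≤ 1/2) : ‖pth q x‖ ≤ 2 := by
  refine tsum_of_norm_bounded (hasSum_geometric_two) ?_
  intro j
  rw [norm_mul, norm_pow, norm_pow]
  calc _ ≤ 1 * ‖x‖^j := by
        gcongr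
        exact pow_le_one₀ (norm_nonneg _) h1.le
    _ ≤ (1/2)^j := by rw [one_mul]; gcongr

open Filter Topology in
theorem tannery (q x : ℂ) (h0 : 0 < ‖q‖) (h1 : ‖q‖ < 1) (hx : x ≠ 0)
    (c : ℕ → ℕ → ℂ) (C : ℝ) (g : ℕ → ℕ) (hg : Tendsto g atTop atTop)
    (hb : ∀ M j, j < g M → ‖c M j‖ ≤ C) (hl : ∀ j, Tendsto (fun M => c M j) atTop (𝓝 1)) :
    Tendsto (fun M => ∑ j ∈ Finset.range (g M), c M j * (q ^ (j*(j+1)/2) * x^j)) atTop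
      (𝓝 (pth q x)) := by
  have hC : 0 ≤ max C 0 := le_max_right _ _
  have key := tendsto_tsum_of_dominated_convergence (𝓕 := atTop)
    (f := fun M j => if j < g M then c M j * (q ^ (j*(j+1)/2) * x^j) else 0)
    (g := fun j => q ^ (j*(j+1)/2) * x^j)
    (bound := fun j => max C 0 * (‖q‖ ^ (j*(j+1)/2) * ‖x‖^j))
    ((pth_summable ‖q‖ ‖x‖ h0 h1 (norm_pos_iff.2 hx)).mul_left _) ?_ ?_
  · refine key.congr fun M => ?_
    rw [tsum_eq_sum (s := Finset.range (g M))]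
    · exact Finset.sum_congr rfl fun j hj => by rw [if_pos (Finset.mem_range.1 hj)]
    · intro j hj
      rw [if_neg]; simpa using hj
  · intro j
    have h := (hl j).mul_const (q ^ (j*(j+1)/2) * x^j)
    rw [one_mul] at h
    refine h.congr' ?_
    filter_upwards [hg.eventually_gt_atTop j] with M hM
    rw [if_pos hM]
  · refine Eventually.of_forall fun M j => ?_
    split_ifs with h
    · rw [norm_mul, norm_mul, norm_pow, norm_pow]
      gcongr
      exact (hb M j h).trans (le_max_left _ _)
    · rw [norm_zero]; positivity

theorem qP_norm_low (q : ℂ) (D : ℝ) (h0 : 0 < ‖q‖) (h1 : ‖q‖ < 1) (hD : ‖q‖ ≤ D * (1 - ‖q‖)) (N : ℕ) :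
    Real.exp (-(2 * D)) ≤ ‖qP q N‖ := by
  refine (phi_low ‖q‖ D h0 h1 hD N).trans ?_
  rw [qP, norm_prod]
  refine Finset.prod_le_prod ?_ ?_
  · intro k _
    have := pow_le_one₀ (n := k+1) h0.le h1.le
    linarith
  · intro k _
    have := norm_sub_norm_le (1:ℂ) (q^(k+1))
    simpa using this

open Filter Topology in
theorem triple_tendsto (q x : ℂ) (D : ℝ) (h0 : 0 < ‖q‖) (h1 : ‖q‖ < 1) (hD : ‖q‖ ≤ D * (1 - ‖q‖))
    (hx : x ≠ 0) :
    Tendsto (fun M => qP q M * ((∏ m ∈ Finset.range M, (1 + x * q^(m+1))) *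
        (∏ k ∈ Finset.range M, (1 + q^k * x⁻¹)))) atTop (𝓝 (pth q x + x⁻¹ * pth q x⁻¹)) := by
  have hq : q ≠ 0 := norm_pos_iff.1 h0
  have hlow := qP_norm_low q D h0 h1 hD
  have hexp := Real.exp_pos (-(2*D))
  have hne : ∀ N, qP q N ≠ 0 := fun N h => by
    have := hlow N; rw [h, norm_zero] at this; linarith
  obtain ⟨L, hL⟩ : ∃ L, Tendsto (qP q) atTop (𝓝 L) := by
    have hm : Multipliable (fun k : ℕ => 1 + (-q^(k+1))) := by
      apply multipliable_one_add_of_summable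
      simp only [norm_neg, norm_pow]
      exact (summable_nat_add_iff 1).2 (summable_geometric_of_lt_one h0.le h1)
    refine ⟨_, hm.hasProd.tendsto_prod_nat.congr fun N => ?_⟩
    rw [qP]
    exact Finset.prod_congr rfl fun k _ => by ring
  have hLne : L ≠ 0 := by
    have := ge_of_tendsto' hL.norm hlow
    exact norm_pos_iff.1 (by linarith)
  have hLi := hL.inv₀ hLne
  obtain ⟨C, hC⟩ := hL.norm.bddAbove_range
  have hC' : ∀ N, ‖qP q N‖ ≤ C := fun N => hC ⟨N, rfl⟩
  have hC0 : 0 ≤ C := (norm_nonneg _).trans (hC' 0)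
  have hI : ∀ N, ‖(qP q N)⁻¹‖ ≤ (Real.exp (-(2*D)))⁻¹ := fun N => by
    rw [norm_inv]
    exact inv_anti₀ hexp (hlow N)
  have hgb : ∀ N k d, k + d = N → gb q N k = qP q N * (qP q k)⁻¹ * (qP q d)⁻¹ := by
    intro N k d h
    have := gb_mul q N k d h
    have a1 := hne k
    have a2 := hne d
    field_simp
    linear_combination this
  have hbd : ∀ M N k d, k + d = N → ‖qP q M * gb q N k‖ ≤
      C * (C * (Real.exp (-(2*D)))⁻¹ * (Real.exp (-(2*D)))⁻¹) := by
    intro M N k d h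
    rw [hgb N k d h, norm_mul, norm_mul, norm_mul]
    gcongr
    · exact hC' _
    · exact hC' _
    · exact hI _
    · exact hI _
  have hlim : ∀ u v : ℕ → ℕ, Tendsto u atTop atTop → Tendsto v atTop atTop →
      (∀ᶠ M in atTop, u M + v M = M + M) →
      Tendsto (fun M => qP q M * gb q (M+M) (u M)) atTop (𝓝 1) := by
    intro u v hu hv huv
    have hMM : Tendsto (fun M : ℕ => M + M) atTop atTop := tendsto_atTop_mono (fun M => by simp) tendsto_id
    have h := hL.mul (((hL.comp hMM).mul (hLi.comp hu)).mul (hLi.comp hv))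
    have e : L * (L * L⁻¹ * L⁻¹) = 1 := by field_simp
    rw [e] at h
    refine h.congr' ?_
    filter_upwards [huv] with M hM
    rw [hgb _ _ _ hM]
    rfl
  have t1 := tannery q x h0 h1 hx (fun M j => qP q M * gb q (M+M) (M+j))
    (C * (C * (Real.exp (-(2*D)))⁻¹ * (Real.exp (-(2*D)))⁻¹)) (fun M => M+1)
    (tendsto_add_atTop_nat 1)
    (fun M j hj => hbd _ _ _ (M - j) (by omega))
    (fun j => hlim (fun M => M + j) (fun M => M - j) (tendsto_add_atTop_nat j)
      (tendsto_sub_atTop_nat j) (by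
        filter_upwards [eventually_ge_atTop j] with M hM; omega))
  have t2 := tannery q x⁻¹ h0 h1 (inv_ne_zero hx) (fun M j => qP q M * gb q (M+M) (M-1-j))
    (C * (C * (Real.exp (-(2*D)))⁻¹ * (Real.exp (-(2*D)))⁻¹)) (fun M => M)
    tendsto_id
    (fun M j hj => hbd _ _ _ (M + 1 + j) (by omega))
    (fun j => hlim (fun M => M - 1 - j) (fun M => M + 1 + j)
      ((tendsto_sub_atTop_nat (1+j)).congr fun M => by omega)
      ((tendsto_add_atTop_nat (1+j)).congr fun M => by omega) (by
        filter_upwards [eventually_ge_atTop (j+1)] with M hM; omega))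
  refine (t1.add (t2.const_mul x⁻¹)).congr fun M => ?_
  rw [finite_triple q x hq hx M, mul_add, Finset.mul_sum, Finset.mul_sum, Finset.mul_sum, Finset.mul_sum]
  congr 1
  · exact Finset.sum_congr rfl fun j _ => by ring
  · exact Finset.sum_congr rfl fun j _ => by ring

theorem prod_low (q x : ℂ) (D : ℝ) (u d : ℕ) (h0 : 0 < ‖q‖) (h1 : ‖q‖ < 1)
    (hD : ‖q‖ ≤ D * (1 - ‖q‖)) (hx : ‖x⁻¹‖ ≤ ‖q‖)
    (hδ : ‖x + (q^(u+1))⁻¹‖ * ‖q‖^(u+1) ≤ (1 - ‖q‖)/2)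
    (ht : ‖q‖^(u+1) ≤ (1/2)^33) :
    ‖x + (q^(u+1))⁻¹‖ * (‖q‖^(u+1) * (Real.exp (-(2*D))^5 * 2^(15*u))) ≤
    ‖qP q (u+1+d) * ((∏ m ∈ Finset.range (u+1+d), (1 + x * q^(m+1))) *
        (∏ k ∈ Finset.range (u+1+d), (1 + q^k * x⁻¹)))‖ := by
  set φ := Real.exp (-(2*D)) with hφ
  have hφ0 : 0 < φ := Real.exp_pos _
  set a := ‖q‖ with ha
  set δ := x + (q^(u+1))⁻¹ with hδd
  have hq : q ≠ 0 := norm_pos_iff.1 h0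
  have hxe : x = δ - (q^(u+1))⁻¹ := by rw [hδd]; ring
  have hP := phi_low a D h0 h1 hD
  have hpw : ∀ k : ℕ, a^(k+1) ≤ a := fun k => by
    rw [pow_succ]
    have := pow_le_one₀ (n := k) h0.le h1.le
    nlinarith
  have f1 := qP_norm_low q D h0 h1 hD (u+1+d)
  have f5 : φ ≤ ‖∏ k ∈ Finset.range (u+1+d), (1 + q^k * x⁻¹)‖ := by
    refine (hP (u+1+d)).trans ?_
    rw [norm_prod]
    refine Finset.prod_le_prod (fun k _ => by linarith [hpw k]) fun k _ => ?_
    have h2 := norm_sub_le_norm_add (1:ℂ) (q^k * x⁻¹)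
    rw [norm_one, norm_mul, norm_pow] at h2
    refine le_trans ?_ h2
    have : a^k * ‖x⁻¹‖ ≤ a^k * a := by gcongr
    rw [pow_succ]; linarith
  have f4 : φ^2 ≤ ‖∏ k ∈ Finset.range d, (1 + x * q^(u+1+k+1))‖ := by
    calc φ^2 ≤ (∏ k ∈ Finset.range d, (1 - a^(k+1)))^2 := by gcongr; exact hP d
      _ = ∏ k ∈ Finset.range d, (1 - a^(k+1))^2 := by rw [Finset.prod_pow]
      _ ≤ _ := by
        rw [norm_prod]
        refine Finset.prod_le_prod (fun k _ => by positivity) fun k _ => ?_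
        have e : 1 + x * q^(u+1+k+1) = 1 - (q^(k+1) - δ * q^(u+1) * q^(k+1)) := by
          rw [hxe]; field_simp; ring
        rw [e]
        have h2 := norm_sub_norm_le (1:ℂ) (q^(k+1) - δ * q^(u+1) * q^(k+1))
        have h3 := norm_sub_le (q^(k+1)) (δ * q^(u+1) * q^(k+1))
        rw [norm_one] at h2
        rw [norm_mul, norm_mul, norm_pow, norm_pow] at h3
        have h4 := hpw k
        have h5 : 0 < a^(k+1) := by positivity
        have h6 : ‖δ‖ * a^(u+1) * a^(k+1) ≤ (1 - a^(k+1)) * a^(k+1) := by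
          gcongr; linarith
        nlinarith
  have f3 : ‖1 + x * q^(u+1)‖ = ‖δ‖ * a^(u+1) := by
    have e : 1 + x * q^(u+1) = δ * q^(u+1) := by
      rw [hxe]; field_simp; ring
    rw [e, norm_mul, norm_pow]
  have f2 : φ * 2^(15*u) ≤ ‖∏ m ∈ Finset.range u, (1 + x * q^(m+1))‖ := by
    rw [← Finset.prod_range_reflect]
    have g1 : ∏ k ∈ Finset.range u, ((1 - a^(k+1)) * (2 * a^(k+1))⁻¹) ≤
        ‖∏ k ∈ Finset.range u, (1 + x * q^(u-1-k+1))‖ := by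
      rw [norm_prod]
      refine Finset.prod_le_prod (fun k _ => ?_) fun k hk => ?_
      · have := hpw k
        have : 0 ≤ 1 - a^(k+1) := by linarith
        positivity
      · rw [Finset.mem_range] at hk
        obtain ⟨v, rfl⟩ := Nat.exists_eq_add_of_lt hk
        have e0 : k + v + 1 - 1 - k + 1 = v + 1 := by omega
        rw [e0]
        have hak : 0 < a^(k+1) := by positivity
        rw [← div_eq_mul_inv, div_le_iff₀ (by positivity)]
        have e : (1 + x * q^(v+1)) * q^(k+1) = δ * q^(k+v+1+1) + q^(k+1) - 1 := by
          rw [hxe]; field_simp; ring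
        have e' : ‖1 + x * q^(v+1)‖ * a^(k+1) = ‖δ * q^(k+v+1+1) + q^(k+1) - 1‖ := by
          rw [← e, norm_mul, norm_pow]
        have h2 := norm_sub_norm_le (1:ℂ) (δ * q^(k+v+1+1) + q^(k+1))
        rw [norm_sub_rev] at h2
        have h3 := norm_add_le (δ * q^(k+v+1+1)) (q^(k+1))
        rw [norm_mul, norm_pow, norm_pow] at h3
        rw [norm_one] at h2
        have := hpw k
        linarith
    refine le_trans ?_ g1
    rw [Finset.prod_mul_distrib]
    have g2 : (2:ℝ)^(15*u) ≤ ∏ k ∈ Finset.range u, (2 * a^(k+1))⁻¹ := by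
      rw [Finset.prod_inv_distrib, Finset.prod_mul_distrib, Finset.prod_const, Finset.card_range]
      set A := ∏ k ∈ Finset.range u, a^(k+1) with hA
      have hA0 : 0 < A := Finset.prod_pos fun k _ => by positivity
      have hA2 : A^2 = (a^(u+1))^u := by
        have hr := Finset.prod_range_reflect (fun k => a^(k+1)) u
        have hr2 : A^2 = (∏ j ∈ Finset.range u, a ^ (u - 1 - j + 1)) *
            ∏ j ∈ Finset.range u, a ^ (j + 1) := by rw [hr, sq]
        rw [hr2, ← Finset.prod_mul_distrib]
        have : ∀ k ∈ Finset.range u, a^(u-1-k+1) * a^(k+1) = a^(u+1) := by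
          intro k hk
          rw [Finset.mem_range] at hk
          rw [← pow_add]; congr 1; omega
        rw [Finset.prod_congr rfl this]
        simp
      have hA3 : A ≤ (1/2)^(16*u) := by
        have : A^2 ≤ ((1/2)^(16*u))^2 := by
          rw [hA2]
          calc (a^(u+1))^u ≤ ((1/2)^33)^u := by gcongr
            _ = (1/2:ℝ)^(33*u) := by rw [pow_mul]
            _ ≤ (1/2:ℝ)^(16*u*2) := pow_le_pow_of_le_one (by norm_num) (by norm_num) (by omega)
            _ = _ := by rw [pow_mul]
        exact (pow_le_pow_iff_left₀ hA0.le (by positivity) (by norm_num)).1 this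
      rw [le_inv_comm₀ (by positivity) (by positivity)]
      calc 2^u * A ≤ 2^u * (1/2)^(16*u) := by gcongr
        _ = (2^(15*u))⁻¹ := by
          have : 16*u = u + 15*u := by ring
          rw [this, pow_add, one_div, inv_pow, inv_pow]
          field_simp
    have g3 := hP u
    have g4 := hφ0.le.trans g3
    gcongr
  rw [norm_mul, norm_mul, Finset.prod_range_add, Finset.prod_range_succ, norm_mul, norm_mul, f3]
  calc _ = φ * (φ * 2^(15*u) * (‖δ‖ * a^(u+1)) * φ^2 * φ) := by ring
    _ ≤ _ := by gcongr

theorem size_bound (n u : ℕ) (hn : 3 ≤ n) (hu : 16 * (n - 2) ≤ u) :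
    32 * (n:ℝ) ≤ Real.exp (-(2*((n:ℝ)-1)))^5 * 2^(15*u) := by
  obtain ⟨p, rfl⟩ : ∃ p, n = p + 3 := ⟨n - 3, by omega⟩
  have hu' : 16 * (p+1) ≤ u := by omega
  have e1 : Real.exp 1 ≤ 4 := by linarith [Real.exp_one_lt_d9]
  have e2 : ((4:ℝ)⁻¹)^(10*(p+2)) ≤ Real.exp (-(2*(((p+3:ℕ):ℝ)-1)))^5 := by
    rw [← Real.exp_nat_mul]
    have : ((5:ℕ):ℝ) * (-(2*(((p+3:ℕ):ℝ)-1))) = ((10*(p+2) : ℕ):ℝ) * (-1) := by push_cast; ring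
    rw [this, Real.exp_nat_mul, Real.exp_neg]
    gcongr
  have e3 : (2:ℝ)^(240*(p+1)) ≤ 2^(15*u) := pow_le_pow_right₀ (by norm_num) (by omega)
  have e4 : ((4:ℝ)⁻¹)^(10*(p+2)) * 2^(240*(p+1)) = 2^(220*p+200) := by
    have : (4:ℝ) = 2^2 := by norm_num
    rw [this, inv_pow, ← pow_mul]
    have h : 240*(p+1) = 2*(10*(p+2)) + (220*p+200) := by ring
    rw [h, pow_add]
    field_simp
  have e5 : (32:ℝ) * ((p+3:ℕ):ℝ) ≤ 2^(220*p+200) := by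
    have h1 : ((p+3:ℕ):ℝ) ≤ 2^(p+3) := by exact_mod_cast Nat.lt_two_pow_self.le
    calc (32:ℝ) * ((p+3:ℕ):ℝ) ≤ 32 * 2^(p+3) := by gcongr
      _ = 2^(p+8) := by rw [pow_add, pow_add]; ring
      _ ≤ _ := pow_le_pow_right₀ (by norm_num) (by omega)
  calc _ ≤ _ := e5
    _ = _ := e4.symm
    _ ≤ _ := by gcongr

theorem s_bound (n u : ℕ) (hn : 3 ≤ n) (a : ℝ) (ha : 1 - 1/((n:ℝ)-1) ≤ a)
    (ht : a^(u+1) < (1/2)^33) : 16 * (n-2) ≤ u := by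
  obtain ⟨p, rfl⟩ : ∃ p, n = p + 3 := ⟨n - 3, by omega⟩
  by_contra hcon
  have hu : u + 1 ≤ (p+1) * 16 := by omega
  push_cast at ha
  set b : ℝ := ((p:ℝ)+1)/((p:ℝ)+2) with hb
  have hp : (0:ℝ) ≤ p := by positivity
  have hba : b ≤ a := by
    refine le_trans (le_of_eq ?_) ha
    rw [hb]
    have : (p:ℝ) + 3 - 1 = p + 2 := by ring
    rw [this]; field_simp; ring
  have hb0 : 0 < b := by positivity
  have hb1 : b ≤ 1 := by rw [hb, div_le_one (by positivity)]; linarith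
  have h1 : (1/4:ℝ) ≤ b^(p+1) := by
    have hinv : b⁻¹ ≤ Real.exp (1/((p:ℝ)+1)) := by
      have := Real.add_one_le_exp (1/((p:ℝ)+1))
      refine le_trans (le_of_eq ?_) this
      rw [hb]; field_simp; ring
    have h2 : (b⁻¹)^(p+1) ≤ 4 := by
      calc (b⁻¹)^(p+1) ≤ (Real.exp (1/((p:ℝ)+1)))^(p+1) := by gcongr
        _ = Real.exp 1 := by
          rw [← Real.exp_nat_mul]; congr 1; push_cast; field_simp
        _ ≤ 4 := by linarith [Real.exp_one_lt_d9]
    rw [inv_pow] at h2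
    rw [one_div]
    exact inv_le_of_inv_le₀ (by positivity) h2
  have h3 : (1/4:ℝ)^16 ≤ a^(u+1) := by
    calc (1/4:ℝ)^16 ≤ (b^(p+1))^16 := by gcongr
      _ = b^((p+1)*16) := by rw [pow_mul]
      _ ≤ b^(u+1) := pow_le_pow_of_le_one hb0.le hb1 hu
      _ ≤ a^(u+1) := by gcongr
  have : (1/2:ℝ)^33 < (1/4)^16 := by norm_num
  linarith

open Filter Topology in
theorem theta_unique_simple_zero (n : ℕ) (hn : 3 ≤ n) (q : ℂ)
    (hq1 : 1 - 1 / ((n : ℝ) - 1) ≤ ‖q‖) (hq2 : ‖q‖ ≤ 1 - 1 / (n : ℝ))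
    (s : ℕ) (hs : 1 ≤ s)
    (hsub : Metric.closedBall (-q ^ (-(s : ℤ)) : ℂ) (1 / (2 * (n : ℝ)))
      ⊆ {x : ℂ | (8 : ℝ) ^ 11 < ‖x‖}) :
    ∃ z ∈ Metric.ball (-q ^ (-(s : ℤ)) : ℂ) (1 / (2 * (n : ℝ))),
      (∑' j : ℕ, q ^ (j * (j + 1) / 2) * z ^ j = 0) ∧
      deriv (fun x : ℂ => ∑' j : ℕ, q ^ (j * (j + 1) / 2) * x ^ j) z ≠ 0 ∧
      ∀ w ∈ Metric.ball (-q ^ (-(s : ℤ)) : ℂ) (1 / (2 * (n : ℝ))),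
        (∑' j : ℕ, q ^ (j * (j + 1) / 2) * w ^ j = 0) → w = z := by
  obtain ⟨u, rfl⟩ : ∃ u, s = u + 1 := ⟨s - 1, by omega⟩
  have hn' : (3:ℝ) ≤ n := by exact_mod_cast hn
  have hnpos : (0:ℝ) < n := by linarith
  have hμe : (-q ^ (-((u+1 : ℕ) : ℤ)) : ℂ) = -(q^(u+1))⁻¹ := by
    rw [zpow_neg, zpow_natCast]
  have hμ8 := hsub (Metric.mem_closedBall_self (by positivity))
  rw [hμe] at hμ8 ⊢
  rw [Set.mem_ofPred_eq, norm_neg, norm_inv, norm_pow] at hμ8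
  set μ := -(q^(u+1))⁻¹ with hμ
  have hahalf : 1/2 ≤ ‖q‖ := by
    refine le_trans ?_ hq1
    have : 1/((n:ℝ)-1) ≤ 1/2 := one_div_le_one_div_of_le (by norm_num) (by linarith)
    linarith
  set a := ‖q‖ with ha
  have h0 : 0 < a := by linarith
  have hninv : 0 < 1/(n:ℝ) := by positivity
  have h1 : a < 1 := by linarith
  have hq : q ≠ 0 := norm_pos_iff.1 h0
  have hD : a ≤ ((n:ℝ)-1) * (1 - a) := by
    have : (n:ℝ) * a ≤ n * (1 - 1/n) := by gcongr
    have e : (n:ℝ) * (1 - 1/n) = n - 1 := by field_simp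
    nlinarith
  have hapos : 0 < a^(u+1) := by positivity
  have ht : a^(u+1) < (1/2)^33 := by
    have : (a^(u+1)) < ((8:ℝ)^11)⁻¹ := by
      rw [lt_inv_comm₀ hapos (by positivity)]; exact hμ8
    refine this.trans_le ?_
    norm_num
  have hu := s_bound n u hn a hq1 ht
  have hB := size_bound n u hn hu
  have hxbig : ∀ x ∈ Metric.ball μ (2 * (1/(2*(n:ℝ)))), ‖x - μ‖ ≤ 1/n ∧ (a^(u+1))⁻¹/2 ≤ ‖x‖ ∧ 2 ≤ ‖x‖ := by
    intro x hx
    rw [Metric.mem_ball, dist_eq_norm] at hx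
    have e : 2 * (1/(2*(n:ℝ))) = 1/n := by field_simp
    rw [e] at hx
    have hμn : ‖μ‖ = (a^(u+1))⁻¹ := by rw [hμ, norm_neg, norm_inv, norm_pow]
    have h3 := norm_sub_norm_le μ x
    rw [norm_sub_rev, hμn] at h3
    have h4 : 1/(n:ℝ) ≤ 1 := by linarith
    norm_num at hμ8
    refine ⟨hx.le, ?_, ?_⟩ <;> linarith
  have hlim : ∀ x ∈ Metric.ball μ (2 * (1/(2*(n:ℝ)))), Tendsto (fun d =>
      qP q (u+1+d) * ((∏ m ∈ Finset.range (u+1+d), (1 + x * q^(m+1))) *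
        (∏ k ∈ Finset.range (u+1+d), (1 + q^k * x⁻¹)))) atTop (𝓝 (pth q x + x⁻¹ * pth q x⁻¹)) := by
    intro x hx
    have hx2 := (hxbig x hx).2.2
    have hx0 : x ≠ 0 := norm_pos_iff.1 (by linarith)
    have := (triple_tendsto q x ((n:ℝ)-1) h0 h1 hD hx0).comp (tendsto_add_atTop_nat (u+1))
    refine this.congr fun d => ?_
    simp only [Function.comp, add_comm d (u+1)]
  have hdiff := pth_diff q h0 h1
  have hGd : DifferentiableOn ℂ (fun x => x⁻¹ * pth q x⁻¹) (Metric.ball μ (2 * (1/(2*(n:ℝ))))) := by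
    intro x hx
    have hx2 := (hxbig x hx).2.2
    have hx0 : x ≠ 0 := norm_pos_iff.1 (by linarith)
    have hi : DifferentiableAt ℂ (fun x : ℂ => x⁻¹) x := differentiableAt_inv hx0
    exact (hi.mul ((hdiff x⁻¹).comp x hi)).differentiableWithinAt
  refine abstract_zero (pth q) (fun x => x⁻¹ * pth q x⁻¹) μ (1/(2*(n:ℝ))) (32 * n * a^(u+1))
    (by positivity) (by positivity) (hdiff.differentiableOn.add hGd) hGd ?_ ?_ ?_
  · have hμb : μ ∈ Metric.ball μ (2 * (1/(2*(n:ℝ)))) := Metric.mem_ball_self (by positivity)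
    refine tendsto_nhds_unique (hlim μ hμb) ?_
    refine tendsto_const_nhds.congr fun d => ?_
    have : ∏ m ∈ Finset.range (u+1+d), (1 + μ * q^(m+1)) = 0 := by
      refine Finset.prod_eq_zero (i := u) (Finset.mem_range.2 (by omega)) ?_
      have : q^(u+1) ≠ 0 := pow_ne_zero _ hq
      rw [hμ]; field_simp; ring
    rw [this]; ring
  · intro x hx
    obtain ⟨hx1, hx2, hx3⟩ := hxbig x hx
    refine ge_of_tendsto' (hlim x hx).norm fun d => ?_
    have hxμ : x - μ = x + (q^(u+1))⁻¹ := by rw [hμ]; ring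
    rw [hxμ] at hx1 ⊢
    refine le_trans ?_ (prod_low q x ((n:ℝ)-1) u d h0 h1 hD ?_ ?_ ht.le)
    · calc _ = ‖x + (q^(u+1))⁻¹‖ * (‖q‖^(u+1) * (32 * n)) := by rw [← ha]; ring
        _ ≤ _ := by gcongr
    · rw [norm_inv]
      refine le_trans (inv_anti₀ (by norm_num) hx3) ?_
      linarith
    · have : ‖x + (q^(u+1))⁻¹‖ * a^(u+1) ≤ 1/n * (1/2)^33 := by gcongr
      have h5 : 1/(n:ℝ) * (1/2)^33 ≤ 1/(n:ℝ) * (1/2) := by gcongr; norm_num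
      linarith
  · intro x hx
    obtain ⟨hx1, hx2, hx3⟩ := hxbig x hx
    have hxi : ‖x⁻¹‖ ≤ 1/2 := by
      rw [norm_inv, one_div]; exact inv_anti₀ (by norm_num) hx3
    have hb := pth_bound q x⁻¹ h1 hxi
    have hxi2 : ‖x⁻¹‖ ≤ 2 * a^(u+1) := by
      rw [norm_inv]
      refine (inv_anti₀ (by positivity) hx2).trans (le_of_eq ?_)
      field_simp
    rw [norm_mul]
    calc ‖x⁻¹‖ * ‖pth q x⁻¹‖ ≤ (2 * a^(u+1)) * 2 := by gcongr
      _ = _ := by field_simp; norm_num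
end
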